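/- arXiv:1009.4966 — 14 statements merged into one kernel-verified Lean document; each statement's English description precedes it below -/
import Mathlib

section
/- Let K be a finite field with q elements and let G ∈ K[t_1,…,t_s] be a nonzero polynomial of total degree d. Then the number N of zeros of G in K^s satisfies N ≤ d·q^{s−1}. Moreover, if G is homogeneous, then the number of zeros of G in K^s ∖ {0} is at most d·(q^{s−1} − 1). -/
open MvPolynomial

open Classical in
lemma zeros_le {K : Type} [Field K] [Fintype K] {n : ℕ} {p : MvPolynomial (Fin n) K} (hp : p ≠ 0) :
    (Finset.univ.filter fun x : Fin n → K => eval x p = 0).card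
      ≤ p.totalDegree * Fintype.card K ^ (n - 1) := by
  have hq : 0 < Fintype.card K := Fintype.card_pos
  cases n with
  | zero =>
    rw [Finset.filter_false_of_mem]
    · simp
    · intro x _ h
      rw [p.eq_C_of_isEmpty] at hp h
      rw [eval_C] at h
      rw [h] at hp
      simp at hp
  | succ n =>
    have h := schwartz_zippel_totalDegree hp (Finset.univ : Finset K)
    rw [Fintype.piFinset_univ, Finset.card_univ, div_le_div_iff₀ (by positivity) (by positivity)] at h
    have h' : (Finset.univ.filter fun x : Fin (n+1) → K => eval x p = 0).card * Fintype.card K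
        ≤ p.totalDegree * Fintype.card K ^ (n + 1) := by
      convert (by exact_mod_cast h)
    rw [pow_succ, ← mul_assoc] at h'
    exact Nat.le_of_mul_le_mul_right h' hq

open Classical in
lemma slice {K : Type} [Field K] {n d : ℕ} {G : MvPolynomial (Fin (n+1)) K}
    (hG : G ≠ 0) (hh : G.IsHomogeneous d) (c : K) (hc : c ≠ 0) :
    ∃ P : MvPolynomial (Fin n) K, P ≠ 0 ∧ P.totalDegree ≤ d ∧
      ((finSuccEquiv K n G).coeff 0 = 0 → P.totalDegree + 1 ≤ d) ∧
      ∀ y, eval (Fin.cons c y : Fin (n+1) → K) G = eval y P := by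
  set F := finSuccEquiv K n G with hF
  have hF0 : F ≠ 0 := EmbeddingLike.map_ne_zero_iff.2 hG
  have htd : G.totalDegree = d := hh.totalDegree hG
  have hdeg : ∀ k, F.coeff k ≠ 0 → (F.coeff k).totalDegree + k ≤ d := fun k hk => by
    rw [← htd]; exact totalDegree_coeff_finSuccEquiv_add_le G k hk
  have hnd : F.natDegree < d + 1 := by
    have := hdeg F.natDegree (by simpa using hF0)
    omega
  have hterm : ∀ k, (C (c^k) * F.coeff k).totalDegree ≤ (F.coeff k).totalDegree := fun k => by
    refine (totalDegree_mul _ _).trans ?_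
    rw [totalDegree_C, zero_add]
  refine ⟨∑ k ∈ Finset.range (d+1), C (c^k) * F.coeff k, ?_, ?_, ?_, ?_⟩
  · intro h0
    set k := F.natDegree
    have hk : F.coeff k ≠ 0 := by simpa [k] using hF0
    have h1 := congrArg (homogeneousComponent (d - k)) h0
    rw [map_sum, map_zero, Finset.sum_eq_single k] at h1
    · rw [homogeneousComponent_C_mul, homogeneousComponent_eq_self
        (hh.finSuccEquiv_coeff_isHomogeneous k (d-k) (by omega))] at h1
      rcases mul_eq_zero.1 h1 with h | h
      · rw [C_eq_zero] at h
        exact pow_ne_zero _ hc h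
      · exact hk h
    · intro j hj hjk
      rw [Finset.mem_range] at hj
      rw [homogeneousComponent_C_mul, homogeneousComponent_of_mem
        (hh.finSuccEquiv_coeff_isHomogeneous j (d-j) (by omega)), if_neg (by omega), mul_zero]
    · intro h; exact absurd (Finset.mem_range.2 hnd) h
  · refine totalDegree_finsetSum_le fun k _ => (hterm k).trans ?_
    by_cases hk : F.coeff k = 0
    · simp [hk]
    · have := hdeg k hk; omega
  · intro h0
    have hd : 1 ≤ d := by
      by_contra hd
      have hk : F.coeff F.natDegree ≠ 0 := by simpa using hF0
      rw [show F.natDegree = 0 by omega] at hk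
      exact hk h0
    have : (∑ k ∈ Finset.range (d+1), C (c^k) * F.coeff k).totalDegree ≤ d - 1 := by
      refine totalDegree_finsetSum_le fun k _ => (hterm k).trans ?_
      by_cases hk : F.coeff k = 0
      · simp [hk]
      · have := hdeg k hk
        have : k ≠ 0 := by rintro rfl; exact hk h0
        omega
    omega
  · intro y
    rw [eval_eq_eval_mv_eval', Polynomial.eval_eq_sum_range'
      (lt_of_le_of_lt Polynomial.natDegree_map_le hnd)]
    simp [mul_comm, hF]

lemma arith1 (q n d : ℕ) (hq : 1 ≤ q) :
    d * (q ^ n - 1) + (q - 1) * (d * q ^ n) = d * (q ^ (n+1) - 1) := by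
  obtain ⟨r, rfl⟩ : ∃ r, q = r + 1 := ⟨q - 1, by omega⟩
  have h1 : 1 ≤ (r+1)^n := Nat.one_le_pow _ _ (by omega)
  have h2 : 1 ≤ (r+1)^(n+1) := Nat.one_le_pow _ _ (by omega)
  zify [h1, h2]
  simp
  ring

lemma arith2 (q n e : ℕ) (hq : 1 ≤ q) :
    (q ^ (n+1) - 1) + (q - 1) * (e * q ^ n) ≤ (e+1) * (q ^ (n+1) - 1) := by
  have := arith1 q n e hq
  have h3 : e * (q^n - 1) ≥ 0 := by positivity
  rw [add_mul, one_mul]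
  omega

open Classical in
lemma hom_le {K : Type} [Field K] [Fintype K] : ∀ (n : ℕ) {d : ℕ} {G : MvPolynomial (Fin n) K}
    (_ : G ≠ 0) (_ : G.IsHomogeneous d),
    (Finset.univ.filter fun x : Fin n → K => x ≠ 0 ∧ eval x G = 0).card
      ≤ d * (Fintype.card K ^ (n - 1) - 1)
  | 0, d, G, _, _ => by
    rw [Finset.filter_false_of_mem]
    · simp
    · intro x _ h
      exact h.1 (Subsingleton.elim _ _)
  | n+1, d, G, hG, hh => by
    have hq : 1 ≤ Fintype.card K := Fintype.card_pos
    have hsplit : (Finset.univ.filter fun x : Fin (n+1) → K => x ≠ 0 ∧ eval x G = 0).card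
        = ∑ c : K, (Finset.univ.filter fun y : Fin n → K =>
          (Fin.cons c y : Fin (n+1) → K) ≠ 0 ∧ eval (Fin.cons c y : Fin (n+1) → K) G = 0).card := by
      simp_rw [Finset.card_filter]
      rw [← Fintype.sum_prod_type', ← (Fin.consEquiv fun _ : Fin (n+1) => K).sum_comp]
      rfl
    have hcons : ∀ y : Fin n → K, (Fin.cons 0 y : Fin (n+1) → K) ≠ 0 ↔ y ≠ 0 := by
      intro y
      rw [not_iff_not]
      constructor
      · intro h; ext i; simpa using congrFun h i.succ
      · rintro rfl; ext i; refine Fin.cases ?_ (fun j => ?_) i <;> simp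
    have h0 : ∀ y : Fin n → K, eval (Fin.cons 0 y : Fin (n+1) → K) G
        = eval y ((finSuccEquiv K n G).coeff 0) := by
      intro y
      rw [eval_eq_eval_mv_eval', ← Polynomial.coeff_zero_eq_eval_zero, Polynomial.coeff_map]
    have hrest : ∀ B : ℕ, (∀ c : K, c ≠ 0 → (Finset.univ.filter fun y : Fin n → K =>
          (Fin.cons c y : Fin (n+1) → K) ≠ 0 ∧ eval (Fin.cons c y : Fin (n+1) → K) G = 0).card ≤ B) →
        (Finset.univ.filter fun x : Fin (n+1) → K => x ≠ 0 ∧ eval x G = 0).card ≤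
        (Finset.univ.filter fun y : Fin n → K =>
          y ≠ 0 ∧ eval y ((finSuccEquiv K n G).coeff 0) = 0).card + (Fintype.card K - 1) * B := by
      intro B hB
      rw [hsplit, ← Finset.add_sum_erase _ _ (Finset.mem_univ (0:K))]
      simp_rw [hcons, h0]
      gcongr
      refine (Finset.sum_le_card_nsmul _ _ B fun c hc => hB c (Finset.ne_of_mem_erase hc)).trans ?_
      rw [Finset.card_erase_of_mem (Finset.mem_univ _), Finset.card_univ, smul_eq_mul]
    have hsl : ∀ c : K, c ≠ 0 → ∃ P : MvPolynomial (Fin n) K, P.totalDegree ≤ d ∧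
      ((finSuccEquiv K n G).coeff 0 = 0 → P.totalDegree + 1 ≤ d) ∧ 
      (Finset.univ.filter fun y : Fin n → K =>
          (Fin.cons c y : Fin (n+1) → K) ≠ 0 ∧ eval (Fin.cons c y : Fin (n+1) → K) G = 0).card ≤ 
        P.totalDegree * Fintype.card K ^ (n-1) := by
      intro c hc
      obtain ⟨P, hP, h1, h2, h3⟩ := slice hG hh c hc
      refine ⟨P, h1, h2, le_trans (Finset.card_le_card ?_) (zeros_le hP)⟩
      intro y
      simp only [Finset.mem_filter, Finset.mem_univ, true_and, h3]
      exact fun h => h.2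
    cases n with
    | zero =>
      refine (hrest 0 ?_).trans ?_
      · intro c hc
        obtain ⟨P, -, -, h3⟩ := hsl c hc
        rw [P.eq_C_of_isEmpty, totalDegree_C, zero_mul] at h3
        exact h3
      · rw [Finset.filter_false_of_mem]
        · simp
        · intro x _ h
          exact h.1 (Subsingleton.elim _ _)
    | succ m =>
      simp only [Nat.add_sub_cancel] at hsl ⊢
      by_cases hc0 : (finSuccEquiv K (m+1) G).coeff 0 = 0
      · obtain ⟨P, -, h2, -⟩ := hsl 1 one_ne_zero
        have := h2 hc0
        obtain ⟨e, rfl⟩ : ∃ e, d = e + 1 := ⟨d - 1, by omega⟩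
        refine (hrest (e * Fintype.card K ^ m) ?_).trans (le_trans ?_ (arith2 _ m e hq))
        · intro c hc
          obtain ⟨P, -, h2, h3⟩ := hsl c hc
          have := h2 hc0
          exact h3.trans (Nat.mul_le_mul_right _ (by omega))
        · gcongr
          have : (Finset.univ.filter fun y : Fin (m+1) → K =>
            y ≠ 0 ∧ eval y ((finSuccEquiv K (m+1) G).coeff 0) = 0) = Finset.univ.erase 0 := by
            ext y; simp [hc0]
          rw [this, Finset.card_erase_of_mem (Finset.mem_univ _), Finset.card_univ]
          simp
      · refine (hrest (d * Fintype.card K ^ m) ?_).trans (le_trans ?_ (arith1 _ m d hq).le)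
        · intro c hc
          obtain ⟨P, h1, h2, h3⟩ := hsl c hc
          exact h3.trans (Nat.mul_le_mul_right _ h1)
        · gcongr
          exact hom_le (m+1) hc0 (hh.finSuccEquiv_coeff_isHomogeneous 0 d (by omega))

/-- Let `K` be a finite field with `q` elements and let `G ∈ K[t_1,…,t_s]` be a nonzero
polynomial of total degree `d`. Then the number of zeros of `G` in `K^s` is at most
`d * q^(s-1)`; moreover, if `G` is homogeneous, then the number of zeros of `G` in
`K^s \ {0}` is at most `d * (q^(s-1) - 1)`. -/
theorem stmt_0 (K : Type) [Field K] [Fintype K] (q s d : ℕ)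
    (hK : Fintype.card K = q)
    (G : MvPolynomial (Fin s) K) (hG : G ≠ 0) (hd : G.totalDegree = d) :
    Set.ncard {x : Fin s → K | eval x G = 0} ≤ d * q ^ (s - 1) ∧
    (G.IsHomogeneous d →
      Set.ncard {x : Fin s → K | x ≠ 0 ∧ eval x G = 0} ≤ d * (q ^ (s - 1) - 1)) := by
  classical
  subst hK hd
  refine ⟨?_, fun h => ?_⟩
  · have := zeros_le hG
    rw [← Set.ncard_coe_finset] at this
    simpa using this
  · have := hom_le s hG h
    rw [← Set.ncard_coe_finset] at this
    simpa using this
end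

section
/- Let q ≥ 3 be an integer and let d, d', s be positive integers such that d = k(q−2) + ℓ and d' = k'(q−2) + ℓ' for some integers k, k', ℓ, ℓ' satisfying k ≥ 0, k' ≥ 0, 1 ≤ ℓ ≤ q−2 and 1 ≤ ℓ' ≤ q−2. If d' ≤ d and k ≤ s−1, then k' ≤ k and −(q−1)^{s−k'} + ℓ'·(q−1)^{s−k'−1} ≤ −(q−1)^{s−k} + ℓ·(q−1)^{s−k−1}. -/
/-- Let `q ≥ 3` and let `d, d', s` be positive integers with `d = k(q-2) + ℓ` and
`d' = k'(q-2) + ℓ'`, where `k, k' ≥ 0` and `1 ≤ ℓ, ℓ' ≤ q-2`. If `d' ≤ d` and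
`k ≤ s-1`, then `k' ≤ k` and
`-(q-1)^(s-k') + ℓ'(q-1)^(s-k'-1) ≤ -(q-1)^(s-k) + ℓ(q-1)^(s-k-1)`. -/
theorem stmt_2 (q d d' s k k' ℓ ℓ' : ℕ) (hq : 3 ≤ q)
    (hd : 1 ≤ d) (hd' : 1 ≤ d') (hs : 1 ≤ s)
    (hdk : d = k * (q - 2) + ℓ) (hdk' : d' = k' * (q - 2) + ℓ')
    (hl1 : 1 ≤ ℓ) (hl2 : ℓ ≤ q - 2) (hl1' : 1 ≤ ℓ') (hl2' : ℓ' ≤ q - 2)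
    (hdd : d' ≤ d) (hks : k ≤ s - 1) :
    k' ≤ k ∧
    -((q - 1 : ℤ)) ^ (s - k') + (ℓ' : ℤ) * (q - 1 : ℤ) ^ (s - k' - 1) ≤
      -((q - 1 : ℤ)) ^ (s - k) + (ℓ : ℤ) * (q - 1 : ℤ) ^ (s - k - 1) := by
  obtain ⟨m, rfl⟩ : ∃ m, q = m + 2 := ⟨q - 2, by omega⟩
  have e : m + 2 - 2 = m := by omega
  rw [e] at hdk hdk' hl2 hl2'
  have hk : k' ≤ k := by
    by_contra h
    have h1 : (k + 1) * m ≤ k' * m := Nat.mul_le_mul_right m (by omega)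
    have h2 : (k + 1) * m = k * m + m := by ring
    omega
  refine ⟨hk, ?_⟩
  have hQ : (((m + 2 : ℕ) : ℤ) - 1) = (m : ℤ) + 1 := by push_cast; ring
  rw [hQ]
  obtain ⟨a, ha⟩ : ∃ a, s - k = a + 1 := ⟨s - k - 1, by omega⟩
  obtain ⟨j, rfl⟩ := Nat.exists_eq_add_of_le hk
  have ha' : s - k' = a + j + 1 := by omega
  rw [ha, ha', Nat.add_sub_cancel, Nat.add_sub_cancel]
  have hp : (0 : ℤ) < ((m : ℤ) + 1) ^ a := by positivity
  rcases Nat.eq_zero_or_pos j with rfl | hj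
  · have hl : ℓ' ≤ ℓ := by simp at hdk; omega
    have hl' : (ℓ' : ℤ) ≤ ℓ := by exact_mod_cast hl
    have := mul_le_mul_of_nonneg_right hl' hp.le
    simp only [Nat.add_zero]
    linarith
  · have h1 : ((m : ℤ) + 1) ^ (a + 1) ≤ ((m : ℤ) + 1) ^ (a + j) :=
      pow_le_pow_right₀ (by omega) (by omega)
    have h2 : (0 : ℤ) ≤ (ℓ : ℤ) * ((m : ℤ) + 1) ^ a := by positivity
    have h3 : (ℓ' : ℤ) ≤ m := by exact_mod_cast hl2'
    have h4 := mul_le_mul_of_nonneg_right h3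
      (show (0 : ℤ) ≤ ((m : ℤ) + 1) ^ (a + j) by positivity)
    rw [pow_succ _ (a + j)]
    linarith
end

section
/- Let K be a finite field with q elements and let G ∈ K[t_1,…,t_s] be a nonzero polynomial of total degree d ≥ 1 such that the degree of G in each variable t_i is at most q−2 for i = 1,…,s. If d = k(q−2) + ℓ with 1 ≤ ℓ ≤ q−2 and 0 ≤ k ≤ s−1, then the number of zeros of G in the affine torus (K*)^s satisfies |Z_G| ≤ (q−1)^{s−k−1}·((q−1)^{k+1} − (q−1) + ℓ). -/
open MvPolynomial

theorem aux_arith (m : ℕ) (n : ℕ) : ∀ (k l : ℕ) (a : Fin n → ℕ), (∀ i, a i + 1 ≤ m) → l + 1 ≤ m →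
    ∑ i, a i ≤ k * (m - 1) + l → m ^ n * (m - l) ≤ m ^ (k + 1) * ∏ i, (m - a i) := by
  induction n with
  | zero =>
    intro k l a _ hl _
    have h1 : 1 ≤ m := by omega
    have : m ^ 1 ≤ m ^ (k + 1) := Nat.pow_le_pow_right h1 (by omega)
    simp at this ⊢
    omega
  | succ n ih =>
    intro k l a ha hl hs
    rw [Fin.sum_univ_succ] at hs
    rw [Fin.prod_univ_succ]
    have h0 := ha 0
    set b := a 0 with hb
    set P := ∏ i : Fin n, (m - a i.succ) with hP
    rcases Nat.lt_or_ge l b with hlb | hlb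
    · cases k with
      | zero => omega
      | succ k =>
        have h := ih k (l + (m - 1) - b) (fun i => a i.succ) (fun i => ha _) (by omega)
          (by rw [Nat.succ_mul] at hs; omega)
        rw [← hP] at h
        have key : m - l ≤ (m - b) * (m - (l + (m - 1) - b)) := by
          obtain ⟨u, hu⟩ : ∃ u, m = b + 1 + u := ⟨m - b - 1, by omega⟩
          obtain ⟨v, hv⟩ : ∃ v, b = l + 1 + v := ⟨b - l - 1, by omega⟩
          have e1 : m - b = u + 1 := by omega
          have e2 : m - (l + (m - 1) - b) = v + 2 := by omega
          have e3 : m - l = u + v + 2 := by omega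
          rw [e1, e2, e3]; nlinarith [Nat.zero_le (u * v)]
        calc m ^ (n + 1) * (m - l) ≤ m ^ (n + 1) * ((m - b) * (m - (l + (m - 1) - b))) :=
              Nat.mul_le_mul_left _ key
          _ = m * (m - b) * (m ^ n * (m - (l + (m - 1) - b))) := by ring
          _ ≤ m * (m - b) * (m ^ (k + 1) * P) := Nat.mul_le_mul_left _ h
          _ = _ := by ring
    · have h := ih k (l - b) (fun i => a i.succ) (fun i => ha _) (by omega) (by omega)
      rw [← hP] at h
      have key : m * (m - l) ≤ (m - b) * (m - (l - b)) := by
        obtain ⟨u, hu⟩ : ∃ u, m = l + u := ⟨m - l, by omega⟩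
        obtain ⟨v, hv⟩ : ∃ v, l = b + v := ⟨l - b, by omega⟩
        have e1 : m - b = u + v := by omega
        have e2 : m - (l - b) = u + b := by omega
        have e3 : m - l = u := by omega
        rw [e1, e2, e3, hu, hv]; nlinarith [Nat.zero_le (b * v)]
      calc m ^ (n + 1) * (m - l) = m ^ n * (m * (m - l)) := by ring
        _ ≤ m ^ n * ((m - b) * (m - (l - b))) := Nat.mul_le_mul_left _ key
        _ = (m - b) * (m ^ n * (m - (l - b))) := by ring
        _ ≤ (m - b) * (m ^ (k + 1) * P) := Nat.mul_le_mul_left _ h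
        _ = _ := by ring

open Classical in
theorem aux_count (K : Type) [Field K] [Fintype K] (n : ℕ) :
    ∀ G : MvPolynomial (Fin n) K, G ≠ 0 → ∃ a ∈ G.support,
      ∏ i, (Fintype.card K - 1 - a i) ≤
        (Finset.univ.filter (fun x : Fin n → K => (∀ i, x i ≠ 0) ∧ eval x G ≠ 0)).card := by
  induction n with
  | zero =>
    intro G hG
    obtain ⟨a, ha⟩ := MvPolynomial.support_nonempty.2 hG
    refine ⟨a, ha, ?_⟩
    simp only [Finset.univ_eq_empty, Finset.prod_empty]
    apply Finset.card_pos.2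
    refine ⟨Fin.elim0, ?_⟩
    simp only [Finset.mem_filter, Finset.mem_univ, true_and]
    refine ⟨fun i => i.elim0, ?_⟩
    rw [eq_C_of_isEmpty G] at hG ⊢
    rw [eval_C]
    intro h
    rw [h] at hG
    simp at hG
  | succ n ih =>
    intro G hG
    set p := finSuccEquiv K n G with hp
    have hp0 : p ≠ 0 := by simpa [hp] using hG
    have hg : p.coeff p.natDegree ≠ 0 := by simpa using hp0
    obtain ⟨a, ha, hcard⟩ := ih _ hg
    refine ⟨a.cons p.natDegree, (mem_support_coeff_finSuccEquiv).1 ha, ?_⟩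
    rw [Fin.prod_univ_succ]
    simp only [Finsupp.cons_zero, Finsupp.cons_succ]
    set S := Finset.univ.filter (fun y : Fin n → K => (∀ i, y i ≠ 0) ∧
      eval y (p.coeff p.natDegree) ≠ 0) with hS
    let T : (Fin n → K) → Finset K := fun y =>
      Finset.univ.filter (fun x : K => x ≠ 0 ∧ (p.map (eval y)).eval x ≠ 0)
    have hT : ∀ y ∈ S, Fintype.card K - 1 - p.natDegree ≤ (T y).card := by
      intro y hy
      have hy2 := (Finset.mem_filter.1 hy).2.2
      have hne : p.map (eval y) ≠ 0 := by
        intro h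
        apply hy2
        rw [← Polynomial.coeff_map, h, Polynomial.coeff_zero]
      have hsub : (Finset.univ.erase (0 : K)) \ (p.map (eval y)).roots.toFinset ⊆ T y := by
        intro x hx
        simp only [Finset.mem_sdiff, Finset.mem_erase, Finset.mem_univ, Multiset.mem_toFinset,
          Polynomial.mem_roots hne, Polynomial.IsRoot.def] at hx
        simp only [T, Finset.mem_filter, Finset.mem_univ, true_and]
        exact ⟨hx.1.1, hx.2⟩
      have h1 := Finset.card_le_card hsub
      have h2 := Finset.le_card_sdiff (p.map (eval y)).roots.toFinset (Finset.univ.erase (0 : K))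
      rw [Finset.card_erase_of_mem (Finset.mem_univ _), Finset.card_univ] at h2
      have h3 := Multiset.toFinset_card_le (p.map (eval y)).roots
      have h4 := Polynomial.card_roots' (p.map (eval y))
      have h5 : (p.map (eval y)).natDegree ≤ p.natDegree := Polynomial.natDegree_map_le
      omega
    calc _ ≤ (Fintype.card K - 1 - p.natDegree) * S.card := Nat.mul_le_mul_left _ hcard
      _ = ∑ y ∈ S, (Fintype.card K - 1 - p.natDegree) := by
          rw [Finset.sum_const, smul_eq_mul, mul_comm]
      _ ≤ ∑ y ∈ S, (T y).card := Finset.sum_le_sum hT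
      _ = (S.sigma T).card := (Finset.card_sigma _ _).symm
      _ ≤ _ := by
        apply Finset.card_le_card_of_injOn (fun z => (Fin.cons z.2 z.1 : Fin (n + 1) → K))
        · rintro ⟨y, x⟩ hz
          have hz := Finset.mem_sigma.1 (Finset.mem_coe.1 hz)
          have h1 := (Finset.mem_filter.1 hz.1).2
          have h2 := (Finset.mem_filter.1 hz.2).2
          apply Finset.mem_coe.2
          refine Finset.mem_filter.2 ⟨Finset.mem_univ _, ?_, ?_⟩
          · intro i
            refine Fin.cases ?_ (fun j => ?_) i
            · simpa using h2.1
            · simpa using h1.1 j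
          · rw [eval_eq_eval_mv_eval']
            exact h2.2
        · rintro ⟨y, x⟩ _ ⟨y', x'⟩ _ h
          have h := Fin.cons_inj.1 h
          obtain ⟨rfl, rfl⟩ := h
          rfl

/-- Let `K` be a finite field with `q` elements and let `G ∈ K[t_1,…,t_s]` be a nonzero
polynomial of total degree `d ≥ 1` whose degree in each variable is at most `q-2`.
If `d = k(q-2) + ℓ` with `1 ≤ ℓ ≤ q-2` and `0 ≤ k ≤ s-1`, then the number of zeros of
`G` in the affine torus `(K*)^s` is at most `(q-1)^(s-k-1) * ((q-1)^(k+1) - (q-1) + ℓ)`. -/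
theorem stmt_3 (K : Type) [Field K] [Fintype K] (q s d k ℓ : ℕ)
    (hK : Fintype.card K = q)
    (G : MvPolynomial (Fin s) K) (hG : G ≠ 0) (hdeg : G.totalDegree = d)
    (hd1 : 1 ≤ d) (hvar : ∀ i : Fin s, G.degreeOf i ≤ q - 2)
    (hdk : d = k * (q - 2) + ℓ) (hl1 : 1 ≤ ℓ) (hl2 : ℓ ≤ q - 2) (hks : k ≤ s - 1) :
    Set.ncard {x : Fin s → K | (∀ i, x i ≠ 0) ∧ eval x G = 0} ≤
      (q - 1) ^ (s - k - 1) * ((q - 1) ^ (k + 1) - (q - 1) + ℓ) := by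
  classical
  obtain ⟨a, ha, hcard⟩ := aux_count K s G hG
  rw [hK] at hcard
  have hai : ∀ i, a i ≤ q - 2 := fun i => (monomial_le_degreeOf i ha).trans (hvar i)
  have hsum : ∑ i, a i ≤ k * (q - 2) + ℓ := by
    rw [← hdk, ← hdeg]
    have := le_totalDegree ha
    rwa [Finsupp.sum_fintype _ _ (fun _ => rfl)] at this
  have hs : 1 ≤ s := by
    rcases Nat.eq_zero_or_pos s with h | h
    · subst h
      rw [eq_C_of_isEmpty G, totalDegree_C] at hdeg
      omega
    · exact h
  have har := aux_arith (q - 1) s k ℓ a (fun i => by have := hai i; omega) (by omega)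
    (by rw [show q - 1 - 1 = q - 2 by omega]; exact hsum)
  obtain ⟨r, hr⟩ : ∃ r, s = k + 1 + r := ⟨s - k - 1, by omega⟩
  have hr' : s - k - 1 = r := by omega
  obtain ⟨m, hm⟩ : ∃ m, m = q - 1 := ⟨_, rfl⟩
  have hm2 : 1 ≤ m := by omega
  have hq : Fintype.card K - 1 = m := by omega
  rw [hr', ← hm]
  rw [← hm] at har hcard
  have har2 : m ^ r * (m - ℓ) ≤ ∏ i, (m - a i) := by
    apply Nat.le_of_mul_le_mul_left _ (Nat.pow_pos hm2 : 0 < m ^ (k + 1))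
    calc _ = m ^ s * (m - ℓ) := by rw [hr]; ring
      _ ≤ _ := har
  have htot : (Finset.univ.filter (fun x : Fin s → K => ∀ i, x i ≠ 0)).card = m ^ s := by
    have : Finset.univ.filter (fun x : Fin s → K => ∀ i, x i ≠ 0) =
        Fintype.piFinset (fun _ => Finset.univ.erase (0 : K)) := by
      ext x; simp
    rw [this, Fintype.card_piFinset]
    simp [hq]
  have hsplit := Finset.card_filter_add_card_filter_not
    (s := Finset.univ.filter (fun x : Fin s → K => ∀ i, x i ≠ 0)) (fun x => eval x G = 0)
  rw [Finset.filter_filter, Finset.filter_filter, htot] at hsplit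
  have hset : {x : Fin s → K | (∀ i, x i ≠ 0) ∧ eval x G = 0} =
      ↑(Finset.univ.filter (fun x : Fin s → K => (∀ i, x i ≠ 0) ∧ eval x G = 0)) := by
    ext x; simp
  rw [hset, Set.ncard_coe_finset]
  have hle : m ≤ m ^ (k + 1) := Nat.le_self_pow (by omega) m
  have hfin : m ^ r * (m ^ (k + 1) - m + ℓ) + m ^ r * (m - ℓ) = m ^ s := by
    rw [← mul_add, show m ^ (k + 1) - m + ℓ + (m - ℓ) = m ^ (k + 1) by omega, hr]; ring
  have hc := har2.trans hcard
  simp only [ne_eq] at hsplit hc ⊢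
  omega
end

section
/- Let K be a finite field with q elements, q ≥ 3, let s ≥ 2, and let T be the projective torus in ℙ^{s−1} over K. Let d ≥ 1 and write d = k(q−2) + ℓ with the unique integers k, ℓ satisfying k ≥ 0 and 1 ≤ ℓ ≤ q−2. Then the minimum distance of the parameterized code C_T(d) is δ_d = (q−1)^{s−(k+2)}·(q−1−ℓ) if d ≤ (q−2)(s−1) − 1, and δ_d = 1 if d ≥ (q−2)(s−1). -/
open MvPolynomial

/-- The projective torus in `ℙ^(s-1)` over `K`: the classes of points all of whose
coordinates are nonzero (a condition invariant under scaling, tested on the chosen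
representative). -/
noncomputable def projTorus (K : Type) [Field K] (s : ℕ) :
    Set (Projectivization K (Fin s → K)) :=
  {p | ∀ i, p.rep i ≠ 0}

/-- The minimum distance of the parameterized (evaluation) code of order `d` on a set
`Y` of points of projective space: the least number of points of `Y` at which a
homogeneous polynomial of degree `d` not vanishing identically on `Y` is nonzero. -/
noncomputable def minDist (K : Type) [Field K] {ι : Type}
    (Y : Set (Projectivization K (ι → K))) (d : ℕ) : ℕ :=
  sInf {n | ∃ F : MvPolynomial ι K, F.IsHomogeneous d ∧
    (∃ p ∈ Y, eval p.rep F ≠ 0) ∧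
    n = Set.ncard {p ∈ Y | eval p.rep F ≠ 0}}


section PT
set_option linter.unusedSectionVars false
variable {K : Type} [Field K] [Fintype K]

/-- Dehomogenized point. -/
def cpt {n : ℕ} (x : Fin n → Kˣ) : Fin (n+1) → K := Fin.cons 1 (fun i => (x i : K))

/-- Functions of degree at most `d` on the affine torus. -/
def Pd (K : Type) [Field K] (n d : ℕ) : Submodule K ((Fin n → Kˣ) → K) :=
  Submodule.span K {f | ∃ e : Fin n → ℕ, ∑ i, e i ≤ d ∧ f = fun x => ∏ i, (x i : K) ^ e i}

lemma eval_mem_Pd {n d : ℕ} (F : MvPolynomial (Fin (n+1)) K) (hF : F.IsHomogeneous d) :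
    (fun x => eval (cpt x) F) ∈ Pd K n d := by
  have : (fun x : Fin n → Kˣ => eval (cpt x) F) =
      ∑ e ∈ F.support, coeff e F • (fun x : Fin n → Kˣ => ∏ i, (x i : K) ^ e i.succ) := by
    funext x
    rw [eval_eq', Finset.sum_apply]
    refine Finset.sum_congr rfl fun e _ => ?_
    simp [cpt, Fin.prod_univ_succ]
  rw [this]
  refine Submodule.sum_mem _ fun e he => Submodule.smul_mem _ _ (Submodule.subset_span ⟨_, ?_, rfl⟩)
  have h := hF (mem_support_iff.1 he)
  rw [Finsupp.weight_apply, Finsupp.sum_fintype _ _ (by simp)] at h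
  simp [Fin.sum_univ_succ] at h
  omega

lemma Pd_succ {n d : ℕ} (f) (hf : f ∈ Pd K (n+1) d) :
    ∃ g : ℕ → (Fin n → Kˣ) → K, (∀ j, j ≤ d → g j ∈ Pd K n (d - j)) ∧ (∀ j, d < j → g j = 0) ∧
      ∀ (y : Kˣ) (x : Fin n → Kˣ), f (Fin.cons y x) =
        ∑ j ∈ Finset.range (Fintype.card K - 1), g j x * (y : K) ^ j := by
  classical
  induction hf using Submodule.span_induction with
  | mem f hf =>
    obtain ⟨e, he, rfl⟩ := hf
    rw [Fin.sum_univ_succ] at he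
    have hmod : e 0 % (Fintype.card K - 1) ≤ e 0 := Nat.mod_le _ _
    have hpos : 0 < Fintype.card K - 1 := by have := Fintype.one_lt_card (α := K); omega
    refine ⟨fun j => if j = e 0 % (Fintype.card K - 1) then
      (fun x => ∏ i, (x i : K) ^ e i.succ) else 0, ?_, ?_, ?_⟩
    · intro j hj
      dsimp only
      split_ifs with h
      · exact Submodule.subset_span ⟨_, by omega, rfl⟩
      · exact Submodule.zero_mem _
    · intro j hj
      dsimp only
      rw [if_neg]; omega
    · intro y x
      rw [Finset.sum_eq_single (e 0 % (Fintype.card K - 1))]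
      · have hy : (y : K) ^ (e 0 % (Fintype.card K - 1)) = (y : K) ^ e 0 := by
          have h1 : (y : K) ^ (Fintype.card K - 1) = 1 :=
            FiniteField.pow_card_sub_one_eq_one _ y.ne_zero
          conv_rhs => rw [← Nat.div_add_mod (e 0) (Fintype.card K - 1), pow_add, pow_mul, h1,
            one_pow, one_mul]
        simp [Fin.prod_univ_succ, hy, mul_comm]
      · intro j _ hj; simp [hj]
      · intro h; exact absurd (Finset.mem_range.2 (Nat.mod_lt _ hpos)) h
  | zero => exact ⟨0, fun j _ => Submodule.zero_mem _, fun _ _ => rfl, by simp⟩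
  | add f f' _ _ h h' =>
    obtain ⟨g, h1, h2, h3⟩ := h
    obtain ⟨g', h1', h2', h3'⟩ := h'
    refine ⟨g + g', fun j hj => Submodule.add_mem _ (h1 j hj) (h1' j hj), fun j hj => ?_, ?_⟩
    · simp [h2 j hj, h2' j hj]
    · intro y x
      simp [h3, h3', add_mul, Finset.sum_add_distrib]
  | smul c f _ h =>
    obtain ⟨g, h1, h2, h3⟩ := h
    refine ⟨c • g, fun j hj => Submodule.smul_mem _ c (h1 j hj), fun j hj => ?_, ?_⟩
    · simp [h2 j hj]
    · intro y x
      simp [h3, Finset.mul_sum, mul_assoc]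

lemma nonroots [DecidableEq K] (m t : ℕ) (c : ℕ → K) (hm : m = Fintype.card K - 1) (htm : t < m)
    (ht : c t ≠ 0) (hz : ∀ j, t < j → j < m → c j = 0) :
    m - t ≤ (Finset.univ.filter fun y : Kˣ => ∑ j ∈ Finset.range m, c j * (y : K) ^ j ≠ 0).card := by
  classical
  set p : Polynomial K := ∑ j ∈ Finset.range m, Polynomial.C (c j) * Polynomial.X ^ j with hp
  have hev : ∀ y : K, p.eval y = ∑ j ∈ Finset.range m, c j * y ^ j := by
    intro y; simp [hp, Polynomial.eval_finsetSum]
  have hdeg : p.natDegree ≤ t := by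
    rw [hp]
    refine Polynomial.natDegree_sum_le_of_forall_le _ _ fun j hj => ?_
    by_cases h : j ≤ t
    · exact (Polynomial.natDegree_C_mul_X_pow_le _ _).trans h
    · rw [hz j (by omega) (Finset.mem_range.1 hj)]; simp
  have hp0 : p ≠ 0 := by
    intro h0
    have : p.coeff t = c t := by
      simp [hp, Polynomial.coeff_C_mul, Polynomial.coeff_X_pow, htm]
    rw [h0] at this; exact ht (by simpa using this.symm)
  have hz : (Finset.univ.filter fun y : Kˣ => ∑ j ∈ Finset.range m, c j * (y : K) ^ j = 0).card
      ≤ t := by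
    refine le_trans ?_ hdeg
    refine le_trans ?_ (Polynomial.card_roots' p)
    refine le_trans ?_ (Multiset.toFinset_card_le _)
    refine Finset.card_le_card_of_injOn (fun y : Kˣ => (y : K)) ?_ (fun a _ b _ h => Units.ext h)
    intro y hy
    simp at hy
    simp [hp0, Polynomial.IsRoot, hev, hy]
  have := Finset.card_filter_add_card_filter_not (s := (Finset.univ : Finset Kˣ))
    (fun y : Kˣ => ∑ j ∈ Finset.range m, c j * (y : K) ^ j = 0)
  rw [Finset.card_univ, Fintype.card_units, ← hm] at this
  simp only [ne_eq]
  omega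

lemma lower [DecidableEq K] (m : ℕ) (hm : m = Fintype.card K - 1) (n : ℕ) :
    ∀ (d k l : ℕ) (f : (Fin n → Kˣ) → K), f ∈ Pd K n d → (∃ x, f x ≠ 0) →
      d = k * (m - 1) + l → l ≤ m - 1 → k + 1 ≤ n →
      m ^ (n - 1 - k) * (m - l) ≤ (Finset.univ.filter fun x => f x ≠ 0).card := by
  classical
  have hm0 : 0 < m := by have := Fintype.one_lt_card (α := K); omega
  induction n with
  | zero => intros; omega
  | succ n ih =>
    intro d k l f hf hne hd hl hk
    obtain ⟨g, h1, h2, h3⟩ := Pd_succ f hf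
    rw [← hm] at h3
    -- the largest index with nonzero coefficient function
    have hex : ∃ t, t < m ∧ g t ≠ 0 ∧ ∀ j, t < j → j < m → g j = 0 := by
      have hS : ((Finset.range m).filter fun j => g j ≠ 0).Nonempty := by
        by_contra h
        rw [Finset.not_nonempty_iff_eq_empty, Finset.filter_eq_empty_iff] at h
        obtain ⟨x, hx⟩ := hne
        apply hx
        rw [← Fin.cons_self_tail x, h3]
        refine Finset.sum_eq_zero fun j hj => ?_
        have := not_not.1 (h hj)
        simp [this]
      obtain ⟨t, ht, hmax⟩ := Finset.exists_max_image _ id hS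
      simp only [Finset.mem_filter, Finset.mem_range] at ht hmax
      refine ⟨t, ht.1, ht.2, fun j hj hjm => ?_⟩
      by_contra h0
      have := hmax j ⟨hjm, h0⟩
      simp at this; omega
    obtain ⟨t, htm, ht0, htz⟩ := hex
    have htd : t ≤ d := by
      by_contra h; exact ht0 (h2 t (by omega))
    have hcount : (Finset.univ.filter fun x => g t x ≠ 0).card * (m - t) ≤
        (Finset.univ.filter fun x => f x ≠ 0).card := by
      have e1 : (Finset.univ.filter fun x => f x ≠ 0).card =
          ∑ x : Fin n → Kˣ, (Finset.univ.filter fun y : Kˣ => f (Fin.cons y x) ≠ 0).card := by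
        simp only [Finset.card_filter]
        rw [← Equiv.sum_comp (Fin.consEquiv (fun _ => Kˣ)), Fintype.sum_prod_type,
          Finset.sum_comm]
        rfl
      rw [e1, ← smul_eq_mul]
      refine le_trans (Finset.card_nsmul_le_sum _
        (fun x => (Finset.univ.filter fun y : Kˣ => f (Fin.cons y x) ≠ 0).card) _ ?_)
        (Finset.sum_le_sum_of_subset (Finset.subset_univ _))
      intro x hx
      simp only [h3]
      refine nonroots m t (fun j => g j x) hm htm (by simpa using hx) ?_
      intro j hj hjm
      simp [htz j hj hjm]
    refine le_trans ?_ hcount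
    have hgne : ∃ x, g t x ≠ 0 := Function.ne_iff.1 ht0
    have hone : 1 ≤ (Finset.univ.filter fun x => g t x ≠ 0).card := by
      obtain ⟨x, hx⟩ := hgne
      exact Finset.card_pos.2 ⟨x, by simpa using hx⟩
    by_cases htl : t ≤ l
    · by_cases hkn : k + 1 ≤ n
      · have := ih (d - t) k (l - t) (g t) (h1 t htd) hgne (by omega) (by omega) hkn
        refine le_trans ?_ (Nat.mul_le_mul_right _ this)
        have e : n + 1 - 1 - k = (n - 1 - k) + 1 := by omega
        rw [e, pow_succ, mul_assoc, mul_assoc]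
        refine Nat.mul_le_mul_left _ ?_
        obtain ⟨a, rfl⟩ := Nat.exists_eq_add_of_le htl
        obtain ⟨b, rfl⟩ := Nat.exists_eq_add_of_le (show t + a ≤ m by omega)
        have e1 : t + a + b - (t + a) = b := by omega
        have e2 : t + a + b - (t + a - t) = t + b := by omega
        have e3 : t + a + b - t = a + b := by omega
        rw [e1, e2, e3]; nlinarith [Nat.zero_le (t * a)]
      · have : n + 1 - 1 - k = 0 := by omega
        rw [this, pow_zero]
        exact Nat.mul_le_mul hone (by omega)
    · obtain ⟨k, rfl⟩ : ∃ k', k = k' + 1 := by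
        refine ⟨k - 1, ?_⟩
        rcases Nat.eq_zero_or_pos k with h | h
        · subst h; omega
        · omega
      have := ih (d - t) k (m - 1 + l - t) (g t) (h1 t htd) hgne
        (by rw [Nat.add_mul] at hd; omega) (by omega) (by omega)
      refine le_trans ?_ (Nat.mul_le_mul_right _ this)
      have e : n + 1 - 1 - (k + 1) = n - 1 - k := by omega
      rw [e, mul_assoc]
      refine Nat.mul_le_mul_left _ ?_
      obtain ⟨a, rfl⟩ := Nat.exists_eq_add_of_le (show l + 1 ≤ t by omega)
      obtain ⟨b, rfl⟩ := Nat.exists_eq_add_of_le (show l + 1 + a + 1 ≤ m by omega)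
      have e1 : l + 1 + a + 1 + b - l = a + b + 2 := by omega
      have e2 : l + 1 + a + 1 + b - (l + 1 + a + 1 + b - 1 + l - (l + 1 + a)) = a + 2 := by omega
      have e3 : l + 1 + a + 1 + b - (l + 1 + a) = b + 1 := by omega
      rw [e1, e2, e3]; nlinarith [Nat.zero_le (a * b)]

lemma eval_smul_hom {n d : ℕ} (F : MvPolynomial (Fin n) K) (hF : F.IsHomogeneous d)
    (c : K) (v : Fin n → K) : eval (c • v) F = c ^ d * eval v F := by
  rw [eval_eq', eval_eq', Finset.mul_sum]
  refine Finset.sum_congr rfl fun e he => ?_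
  have h := hF (mem_support_iff.1 he)
  rw [Finsupp.weight_apply, Finsupp.sum_fintype _ _ (by simp)] at h
  simp only [Pi.one_apply, smul_eq_mul, mul_one] at h
  simp only [Pi.smul_apply, smul_eq_mul, mul_pow, Finset.prod_mul_distrib]
  rw [Finset.prod_pow_eq_pow_sum, h]
  ring

lemma cpt_ne {n : ℕ} (x : Fin n → Kˣ) : cpt x ≠ 0 := fun h => by
  have := congrFun h 0
  simp [cpt] at this

lemma cpt_coord {n : ℕ} (x : Fin n → Kˣ) (i) : cpt x i ≠ 0 := by
  refine Fin.cases ?_ (fun i => ?_) i <;> simp [cpt]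

lemma mem_iff {n d : ℕ} (F : MvPolynomial (Fin (n+1)) K) (hF : F.IsHomogeneous d)
    (x : Fin n → Kˣ) :
    Projectivization.mk K (cpt x) (cpt_ne x) ∈ projTorus K (n+1) ∧
    (eval (Projectivization.mk K (cpt x) (cpt_ne x)).rep F ≠ 0 ↔ eval (cpt x) F ≠ 0) := by
  obtain ⟨a, ha⟩ := Projectivization.exists_smul_eq_mk_rep K (cpt x) (cpt_ne x)
  have ha' : (a : K) • cpt x = (Projectivization.mk K (cpt x) (cpt_ne x)).rep := ha
  constructor
  · intro i
    rw [← ha']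
    simp [cpt_coord]
  · rw [← ha', eval_smul_hom F hF]
    simp

lemma exists_cpt {n : ℕ} (p) (hp : p ∈ projTorus K (n+1)) :
    ∃ x : Fin n → Kˣ, Projectivization.mk K (cpt x) (cpt_ne x) = p := by
  refine ⟨fun i => Units.mk0 (p.rep i.succ / p.rep 0) (div_ne_zero (hp _) (hp _)), ?_⟩
  conv_rhs => rw [← p.mk_rep]
  rw [Projectivization.mk_eq_mk_iff']
  refine ⟨(p.rep 0)⁻¹, ?_⟩
  funext i
  have h0 := hp 0
  refine Fin.cases ?_ (fun i => ?_) i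
  · simp [cpt, h0]
  · simp [cpt, div_eq_inv_mul]

lemma cpt_mk_inj {n : ℕ} : Function.Injective
    (fun x : Fin n → Kˣ => Projectivization.mk K (cpt x) (cpt_ne x)) := by
  intro x y h
  dsimp only at h
  rw [Projectivization.mk_eq_mk_iff'] at h
  obtain ⟨a, ha⟩ := h
  have h0 : a = 1 := by simpa [cpt] using congrFun ha 0
  subst h0
  funext i
  apply Units.ext
  simpa [cpt] using (congrFun ha i.succ).symm

lemma ncard_eq [DecidableEq K] {n d : ℕ} (F : MvPolynomial (Fin (n+1)) K)
    (hF : F.IsHomogeneous d) :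
    Set.ncard {p ∈ projTorus K (n+1) | eval p.rep F ≠ 0} =
      (Finset.univ.filter fun x : Fin n → Kˣ => eval (cpt x) F ≠ 0).card := by
  rw [← Set.ncard_coe_finset, ← Set.ncard_image_of_injective _ (cpt_mk_inj (K := K) (n := n))]
  congr 1
  ext p
  simp only [Set.mem_setOf_eq, Set.mem_image, Finset.coe_filter, Finset.mem_univ, true_and]
  constructor
  · rintro ⟨hp, h⟩
    obtain ⟨x, rfl⟩ := exists_cpt p hp
    exact ⟨x, ((mem_iff F hF x).2).1 h, rfl⟩
  · rintro ⟨x, hx, rfl⟩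
    exact ⟨(mem_iff F hF x).1, ((mem_iff F hF x).2).2 hx⟩

lemma minDist_eq [DecidableEq K] {n d B : ℕ}
    (hlow : ∀ f ∈ Pd K n d, (∃ x, f x ≠ 0) → B ≤ (Finset.univ.filter fun x => f x ≠ 0).card)
    (c : Fin n → ℕ) (hc : ∀ i, c i ≤ Fintype.card K - 2) (hcd : ∑ i, c i ≤ d)
    (hB : ∏ i, (Fintype.card K - 1 - c i) = B) :
    minDist K (projTorus K (n+1)) d = B := by
  have hcard : Fintype.card Kˣ = Fintype.card K - 1 := Fintype.card_units K
  have h1K := Fintype.one_lt_card (α := K)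
  have hS : ∀ i, ∃ S : Finset Kˣ, S.card = c i := fun i => by
    obtain ⟨S, _, hS⟩ := Finset.exists_subset_card_eq (s := (Finset.univ : Finset Kˣ)) (n := c i)
      (by rw [Finset.card_univ, hcard]; have := hc i; omega)
    exact ⟨S, hS⟩
  choose S hS using hS
  let F : MvPolynomial (Fin (n+1)) K := (∏ i, ∏ a ∈ S i, (X (Fin.succ i) - C (a : K) * X 0)) *
    X 0 ^ (d - ∑ i, c i)
  have hF : F.IsHomogeneous d := by
    have h1 : F.IsHomogeneous ((∑ i, ∑ a ∈ S i, 1) + (d - ∑ i, c i)) := by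
      refine IsHomogeneous.mul (IsHomogeneous.prod _ _ _ fun i _ =>
        IsHomogeneous.prod _ _ _ fun a _ => ?_) (isHomogeneous_X_pow _ _)
      exact (isHomogeneous_X _ _).sub (isHomogeneous_C_mul_X _ _)
    convert h1 using 1
    simp [hS]; omega
  have hFev : ∀ x : Fin n → Kˣ, eval (cpt x) F ≠ 0 ↔ ∀ i, x i ∉ S i := by
    intro x
    simp only [F, map_mul, map_prod, map_sub, map_pow, eval_X, eval_C]
    simp only [cpt, Fin.cons_zero, Fin.cons_succ, one_pow, mul_one, Finset.prod_ne_zero_iff,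
      Finset.mem_univ, true_implies, sub_ne_zero]
    refine forall_congr' fun i => ⟨fun h hx => h _ hx rfl, fun h a ha hxa => ?_⟩
    exact h ((Units.ext hxa : x i = a) ▸ ha)
  have hFc : (Finset.univ.filter fun x : Fin n → Kˣ => eval (cpt x) F ≠ 0).card = B := by
    have : (Finset.univ.filter fun x : Fin n → Kˣ => eval (cpt x) F ≠ 0) =
        Fintype.piFinset fun i => (S i)ᶜ := by
      ext x
      simp only [Finset.mem_filter, Finset.mem_univ, true_and, hFev, Fintype.mem_piFinset,
        Finset.mem_compl]
    rw [this, Fintype.card_piFinset, ← hB]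
    refine Finset.prod_congr rfl fun i _ => ?_
    rw [Finset.card_compl, hS, hcard]
  have hBpos : 0 < B := by
    rw [← hB]
    refine Finset.prod_pos fun i _ => ?_
    have := hc i
    omega
  unfold minDist
  refine IsLeast.csInf_eq ⟨⟨F, hF, ?_, ?_⟩, ?_⟩
  · rw [← hFc] at hBpos
    obtain ⟨x, hx⟩ := Finset.card_pos.1 hBpos
    exact ⟨_, (mem_iff F hF x).1, (mem_iff F hF x).2.2 (by simpa using hx)⟩
  · rw [ncard_eq F hF, hFc]
  · rintro N ⟨G, hG, ⟨p, hp, hGp⟩, rfl⟩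
    rw [ncard_eq G hG]
    refine hlow _ (eval_mem_Pd G hG) ?_
    obtain ⟨x, rfl⟩ := exists_cpt p hp
    exact ⟨x, (mem_iff G hG x).2.1 hGp⟩

end PT

/-- Minimum distance of the parameterized code of order `d` on the projective torus
in `ℙ^(s-1)` over a finite field with `q` elements, where `d = k(q-2) + ℓ`,
`1 ≤ ℓ ≤ q-2`. -/
theorem stmt_4 (K : Type) [Field K] [Fintype K] (q s d k ℓ : ℕ)
    (hK : Fintype.card K = q) (hq : 3 ≤ q) (hs : 2 ≤ s) (hd : 1 ≤ d)
    (hdk : d = k * (q - 2) + ℓ) (hl1 : 1 ≤ ℓ) (hl2 : ℓ ≤ q - 2) :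
    (d ≤ (q - 2) * (s - 1) - 1 →
      minDist K (projTorus K s) d = (q - 1) ^ (s - (k + 2)) * (q - 1 - ℓ)) ∧
    ((q - 2) * (s - 1) ≤ d → minDist K (projTorus K s) d = 1) := by
  classical
  obtain ⟨n, rfl⟩ : ∃ n, s = n + 1 := ⟨s - 1, by omega⟩
  have e0 : n + 1 - 1 = n := rfl
  rw [e0]
  constructor
  · intro h
    have hkn : k + 1 ≤ n := by
      by_contra hk
      have : (q - 2) * n ≤ k * (q - 2) := by
        rw [mul_comm]; exact Nat.mul_le_mul_right _ (by omega)
      omega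
    have e1 : n + 1 - (k + 2) = n - 1 - k := by omega
    rw [e1]
    obtain ⟨r, rfl⟩ := Nat.exists_eq_add_of_le hkn
    have hs1 : ∀ f : ℕ → ℕ, (∀ j < k, f j = q - 2) → f k = ℓ → (∀ j, f (k + 1 + j) = 0) →
        ∑ i : Fin (k + 1 + r), f i = d := by
      intro f h1 h2 h3
      rw [Fin.sum_univ_eq_sum_range f, Finset.sum_range_add, Finset.sum_range_succ,
        Finset.sum_congr rfl (fun j hj => h1 j (Finset.mem_range.1 hj)), h2,
        Finset.sum_congr rfl (fun j _ => h3 j)]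
      simp [hdk]
    have hs2 : ∀ f : ℕ → ℕ, (∀ j < k, f j = 1) → f k = q - 1 - ℓ →
        (∀ j, f (k + 1 + j) = q - 1) →
        ∏ i : Fin (k + 1 + r), f i = (q - 1) ^ r * (q - 1 - ℓ) := by
      intro f h1 h2 h3
      rw [Fin.prod_univ_eq_prod_range f, Finset.prod_range_add, Finset.prod_range_succ,
        Finset.prod_congr rfl (fun j hj => h1 j (Finset.mem_range.1 hj)), h2,
        Finset.prod_congr rfl (fun j _ => h3 j)]
      simp [mul_comm]
    let c : ℕ → ℕ := fun j => if j < k then q - 2 else if j = k then ℓ else 0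
    refine minDist_eq ?_ (fun i : Fin (k + 1 + r) => c i) ?_ ?_ ?_
    · intro f hf hne
      exact lower (q - 1) (by rw [hK]) _ d k ℓ f hf hne (by rw [hdk]; rfl) (by omega) (by omega)
    · intro i
      rw [hK]
      simp only [c]
      split_ifs <;> omega
    · refine le_of_eq (hs1 c ?_ ?_ ?_)
      · intro j hj; simp [c, hj]
      · simp [c]
      · intro j; simp only [c]; rw [if_neg (by omega), if_neg (by omega)]
    · rw [hK]
      have e2 : k + 1 + r - 1 - k = r := by omega
      rw [e2]
      refine hs2 (fun j => q - 1 - c j) ?_ ?_ ?_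
      · intro j hj; simp only [c]; rw [if_pos hj]; omega
      · simp [c]
      · intro j; simp only [c]; rw [if_neg (by omega), if_neg (by omega)]; rfl
  · intro h
    refine minDist_eq ?_ (fun _ => q - 2) ?_ ?_ ?_
    · rintro f - ⟨x, hx⟩
      exact Finset.card_pos.2 ⟨x, by simpa using hx⟩
    · intro _; rw [hK]
    · simpa [mul_comm] using h
    · rw [hK]
      have : q - 1 - (q - 2) = 1 := by omega
      simp [this]
end

section
/- Let K be a finite field with q elements, q ≥ 3, let s ≥ 2, and let T be the projective torus in ℙ^{s−1} over K. Let d be an integer with 1 ≤ d ≤ (q−2)(s−1) − 1 and write d = k(q−2) + ℓ with k ≥ 0 and 1 ≤ ℓ ≤ q−2. Then every homogeneous polynomial F ∈ K[t_1,…,t_s] of degree d that does not vanish at every point of T satisfies #{[x] ∈ T : F(x) = 0} ≤ (q−1)^{s−k−2}·((q−1)^{k+1} − (q−1) + ℓ). -/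
open MvPolynomial

lemma aux_deg {K : Type} [Field K] {σ τ : Type} (g : σ → MvPolynomial τ K)
    (hg : ∀ i, (g i).totalDegree ≤ 1) (f : MvPolynomial σ K) :
    (aeval g f).totalDegree ≤ f.totalDegree := by
  rw [aeval_def, eval₂_eq]
  apply totalDegree_finsetSum_le
  intro m hm
  refine (totalDegree_mul _ _).trans ?_
  rw [algebraMap_eq, totalDegree_C, zero_add]
  refine (totalDegree_finset_prod _ _).trans ?_
  refine le_trans ?_ (le_totalDegree hm)
  rw [Finsupp.sum]
  apply Finset.sum_le_sum
  intro i _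
  refine (totalDegree_pow _ _).trans ?_
  calc m i * (g i).totalDegree ≤ m i * 1 := Nat.mul_le_mul_left _ (hg i)
    _ = m i := mul_one _

noncomputable def auxSl {K : Type} [Field K] {n : ℕ} (a : K) (f : MvPolynomial (Fin (n+1)) K) :
    MvPolynomial (Fin n) K :=
  aeval (Fin.cons (C a) X : Fin (n+1) → MvPolynomial (Fin n) K) f

lemma auxSl_deg {K : Type} [Field K] {n : ℕ} (a : K) (f : MvPolynomial (Fin (n+1)) K) :
    (auxSl a f).totalDegree ≤ f.totalDegree := by
  apply aux_deg
  intro i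
  refine Fin.cases ?_ (fun j => ?_) i
  · simp
  · simp

lemma auxSl_eval {K : Type} [Field K] {n : ℕ} (a : K) (f : MvPolynomial (Fin (n+1)) K)
    (y : Fin n → K) : eval y (auxSl a f) = eval (Fin.cons a y : Fin (n+1) → K) f := by
  unfold auxSl
  induction f using MvPolynomial.induction_on with
  | C c => simp
  | add p q hp hq => rw [map_add, map_add, map_add, hp, hq]
  | mul_X p i hp =>
    rw [map_mul, map_mul, map_mul, hp]
    congr 1
    refine Fin.cases ?_ (fun j => ?_) i <;> simp

lemma aux_div {K : Type} [Field K] {n : ℕ} (a : K) (f : MvPolynomial (Fin (n+1)) K) :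
    ∃ g : MvPolynomial (Fin (n+1)) K, (g = 0 ∨ g.totalDegree + 1 ≤ f.totalDegree) ∧
      ∀ x : Fin (n+1) → K, eval x f =
        eval (Fin.cons a (Fin.tail x) : Fin (n+1) → K) f + (x 0 - a) * eval x g := by
  set r : MvPolynomial (Fin (n+1)) K := rename Fin.succ (auxSl a f) with hr
  have hrdeg : r.totalDegree ≤ f.totalDegree :=
    (totalDegree_rename_le _ _).trans (auxSl_deg a f)
  have hdvd : (X 0 - C a : MvPolynomial (Fin (n+1)) K) ∣ f - r := by
    rw [hr]
    clear hrdeg hr r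
    induction f using MvPolynomial.induction_on with
    | C c => simp [auxSl]
    | add p q hp hq =>
      have := dvd_add hp hq
      simp only [auxSl, map_add] at this ⊢
      convert this using 1
      ring
    | mul_X p i hp =>
      simp only [auxSl, map_mul, aeval_X] at hp ⊢
      have h2 : (X 0 - C a : MvPolynomial (Fin (n+1)) K) ∣
          X i - rename Fin.succ ((Fin.cons (C a) X : Fin (n+1) → MvPolynomial (Fin n) K) i) := by
        refine Fin.cases ?_ (fun j => ?_) i <;> simp
      have := dvd_add (Dvd.dvd.mul_right hp (X i)) (Dvd.dvd.mul_left h2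
        (rename Fin.succ (aeval (Fin.cons (C a) X : Fin (n+1) → MvPolynomial (Fin n) K) p)))
      convert this using 1
      ring
  obtain ⟨g, hg⟩ := hdvd
  refine ⟨g, ?_, ?_⟩
  · by_cases h0 : g = 0
    · exact Or.inl h0
    right
    have hX : (X 0 - C a : MvPolynomial (Fin (n+1)) K).totalDegree = 1 := by
      rw [sub_eq_add_neg, ← C_neg]
      rw [totalDegree_add_eq_left_of_totalDegree_lt]
      · simp
      · simp
    have hX0 : (X 0 - C a : MvPolynomial (Fin (n+1)) K) ≠ 0 := by
      intro h; rw [h] at hX; simp at hX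
    have h1 := totalDegree_mul_of_isDomain hX0 h0
    rw [← hg, hX] at h1
    have h2 := totalDegree_sub f r
    have : max f.totalDegree r.totalDegree ≤ f.totalDegree := max_le le_rfl hrdeg
    omega
  · intro x
    have h := congrArg (eval x) hg
    simp only [map_sub, map_mul, eval_X, eval_C] at h
    rw [hr, eval_rename, auxSl_eval] at h
    rw [← h]
    simp only [Fin.tail_def, Function.comp_def]
    ring

open Classical in
lemma aux_AF {K : Type} [Field K] (n : ℕ) : ∀ (N d : ℕ) (A : Fin n → Finset K)
    (f : MvPolynomial (Fin n) K), (∑ i, (A i).card) = N → f.totalDegree ≤ d →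
    (∃ x ∈ Fintype.piFinset A, eval x f ≠ 0) →
    ∃ y : Fin n → ℕ, (∀ i, 1 ≤ y i ∧ y i ≤ (A i).card) ∧ (∑ i, (A i).card) ≤ (∑ i, y i) + d ∧
      ∏ i, y i ≤ ((Fintype.piFinset A).filter (fun x => eval x f ≠ 0)).card := by
  induction n with
  | zero =>
    rintro N d A f hN hd ⟨x, hx, hxf⟩
    refine ⟨fun _ => 1, fun i => i.elim0, by simp, ?_⟩
    simp only [Finset.univ_eq_empty, Finset.prod_empty]
    exact Finset.card_pos.mpr ⟨x, Finset.mem_filter.mpr ⟨hx, hxf⟩⟩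
  | succ n ih =>
    intro N
    induction N with
    | zero =>
      rintro d A f hN hd ⟨x, hx, hxf⟩
      have := Finset.sum_eq_zero_iff.mp hN 0 (Finset.mem_univ _)
      rw [Finset.card_eq_zero] at this
      have h2 := Fintype.mem_piFinset.mp hx 0
      simp [this] at h2
    | succ N ihN =>
      rintro d A f hN hd ⟨x, hx, hxf⟩
      have hxA := Fintype.mem_piFinset.mp hx
      by_cases hc : ∃ a ∈ A 0, ∀ y ∈ Fintype.piFinset (Fin.tail A),
          eval (Fin.cons a y : Fin (n+1) → K) f = 0
      · obtain ⟨a, ha, hz⟩ := hc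
        obtain ⟨g, hg, hfg⟩ := aux_div a f
        have hfg' : ∀ z ∈ Fintype.piFinset A, eval z f = (z 0 - a) * eval z g := by
          intro z hzA
          rw [hfg z, hz, zero_add]
          rw [Fintype.mem_piFinset] at hzA ⊢
          intro i
          exact hzA i.succ
        have hx2 := hfg' x hx
        rw [hx2] at hxf
        have hgx : eval x g ≠ 0 := right_ne_zero_of_mul hxf
        have hxa : x 0 ≠ a := sub_ne_zero.mp (left_ne_zero_of_mul hxf)
        have hgd : g.totalDegree + 1 ≤ f.totalDegree := by
          rcases hg with h | h
          · rw [h] at hgx; simp at hgx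
          · exact h
        obtain ⟨e, rfl⟩ : ∃ e, d = e + 1 := ⟨d - 1, by omega⟩
        set B : Fin (n+1) → Finset K := Fin.cons ((A 0).erase a) (Fin.tail A) with hB
        have hcard : ((A 0).erase a).card + 1 = (A 0).card := Finset.card_erase_add_one ha
        have hsum : (∑ i, (B i).card) + 1 = ∑ i, (A i).card := by
          rw [Fin.sum_univ_succ, Fin.sum_univ_succ]
          simp only [hB, Fin.cons_zero, Fin.cons_succ, Fin.tail]
          omega
        have hBmem : ∀ z, z ∈ Fintype.piFinset B ↔ z ∈ Fintype.piFinset A ∧ z 0 ≠ a := by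
          intro z
          simp only [Fintype.mem_piFinset, Fin.forall_fin_succ, hB, Fin.cons_zero, Fin.cons_succ,
            Fin.tail, Finset.mem_erase]
          tauto
        obtain ⟨y, hy1, hy2, hy3⟩ := ihN e B g (by omega) (by omega)
          ⟨x, (hBmem x).mpr ⟨hx, hxa⟩, hgx⟩
        refine ⟨y, ?_, by omega, hy3.trans ?_⟩
        · intro i
          refine ⟨(hy1 i).1, (hy1 i).2.trans ?_⟩
          refine Fin.cases ?_ (fun j => ?_) i
          · simp only [hB, Fin.cons_zero]; omega
          · simp only [hB, Fin.cons_succ, Fin.tail]; exact le_rfl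
        · apply Finset.card_le_card
          intro z hz'
          rw [Finset.mem_filter, hBmem] at hz'
          rw [Finset.mem_filter]
          refine ⟨hz'.1.1, ?_⟩
          rw [hfg' z hz'.1.1]
          exact mul_ne_zero (sub_ne_zero.mpr hz'.1.2) hz'.2
      · push Not at hc
        have key : ∀ a ∈ A 0, ∃ y : Fin n → ℕ, (∀ i, 1 ≤ y i ∧ y i ≤ (Fin.tail A i).card) ∧
            (∑ i, (Fin.tail A i).card) ≤ (∑ i, y i) + d ∧ ∏ i, y i ≤
            ((Fintype.piFinset (Fin.tail A)).filter (fun x => eval x (auxSl a f) ≠ 0)).card := by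
          intro a ha
          obtain ⟨y, hy, hyf⟩ := hc a ha
          exact ih _ d (Fin.tail A) (auxSl a f) rfl ((auxSl_deg a f).trans hd)
            ⟨y, hy, by rwa [auxSl_eval]⟩
        obtain ⟨a, ha, hmin⟩ := Finset.exists_min_image (A 0) (fun a =>
          ((Fintype.piFinset (Fin.tail A)).filter (fun x => eval x (auxSl a f) ≠ 0)).card)
          ⟨x 0, hxA 0⟩
        obtain ⟨y, hy1, hy2, hy3⟩ := key a ha
        refine ⟨Fin.cons (A 0).card y, ?_, ?_, ?_⟩
        · intro i
          refine Fin.cases ?_ (fun j => ?_) i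
          · simp only [Fin.cons_zero]
            exact ⟨Finset.card_pos.mpr ⟨_, ha⟩, le_rfl⟩
          · simp only [Fin.cons_succ]; exact hy1 j
        · rw [Fin.sum_univ_succ, Fin.sum_univ_succ]
          simp only [Fin.cons_zero, Fin.cons_succ]
          simp only [Fin.tail] at hy2
          omega
        · rw [Fin.prod_univ_succ]
          simp only [Fin.cons_zero, Fin.cons_succ]
          have hfib : ((Fintype.piFinset A).filter (fun x => eval x f ≠ 0)).card =
              ∑ b ∈ A 0, (((Fintype.piFinset A).filter (fun x => eval x f ≠ 0)).filter
                (fun z => z 0 = b)).card := by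
            apply Finset.card_eq_sum_card_fiberwise
            intro z hz
            simp only [Finset.coe_filter, Set.mem_setOf_eq, Fintype.mem_piFinset] at hz
            exact hz.1 0
          rw [hfib, ← smul_eq_mul]
          apply Finset.card_nsmul_le_sum
          intro b hb
          refine hy3.trans ((hmin b hb).trans ?_)
          apply Finset.card_le_card_of_injOn (fun z => (Fin.cons b z : Fin (n+1) → K))
          · intro z hz
            simp only [Finset.coe_filter, Set.mem_setOf_eq, Fintype.mem_piFinset, auxSl_eval,
              Finset.mem_filter] at hz ⊢
            refine ⟨⟨?_, hz.2⟩, by simp⟩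
            intro i
            refine Fin.cases ?_ (fun j => ?_) i
            · simpa using hb
            · simpa [Fin.tail] using hz.1 j
          · intro z _ w _ h
            exact (Fin.cons_injective2 h).2

lemma aux_prod (m : ℕ) (n : ℕ) : ∀ (k ℓ : ℕ) (y : Fin n → ℕ), k + 1 ≤ n → ℓ + 1 ≤ m →
    (∀ i, 1 ≤ y i ∧ y i ≤ m) → n * m ≤ (∑ i, y i) + (k * (m - 1) + ℓ) →
    m ^ (n - k - 1) * (m - ℓ) ≤ ∏ i, y i := by
  induction n with
  | zero => intro k ℓ y h; omega
  | succ n ih =>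
    intro k ℓ y hk hl hy hsum
    rw [Fin.sum_univ_succ] at hsum
    rw [Fin.prod_univ_succ]
    obtain ⟨h01, h02⟩ := hy 0
    have hyt : ∀ i : Fin n, 1 ≤ y i.succ ∧ y i.succ ≤ m := fun i => hy i.succ
    have hub : ∑ i : Fin n, y i.succ ≤ n * m := by
      calc ∑ i : Fin n, y i.succ ≤ ∑ i : Fin n, m := Finset.sum_le_sum fun i _ => (hyt i).2
        _ = n * m := by simp
    have hpos : 1 ≤ ∏ i : Fin n, y i.succ := Finset.one_le_prod' fun i _ => (hyt i).1
    have hnm : (n + 1) * m = n * m + m := by ring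
    rw [hnm] at hsum
    by_cases hz : m ≤ y 0 + ℓ
    · by_cases hkn : k = n
      · subst hkn
        have : k + 1 - k - 1 = 0 := by omega
        rw [this, pow_zero, one_mul]
        calc m - ℓ ≤ y 0 * 1 := by omega
          _ ≤ _ := Nat.mul_le_mul_left _ hpos
      · have h := ih k (y 0 + ℓ - m) (fun i => y i.succ) (by omega) (by omega) hyt (by omega)
        have e1 : n + 1 - k - 1 = (n - k - 1) + 1 := by omega
        rw [e1, pow_succ]
        obtain ⟨t, ht⟩ : ∃ t, y 0 + ℓ = m + t := ⟨y 0 + ℓ - m, by omega⟩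
        obtain ⟨p, hp⟩ : ∃ p, m = y 0 + p := ⟨m - y 0, by omega⟩
        have e2 : y 0 + ℓ - m = t := by omega
        have hlt : ℓ = p + t := by omega
        rw [e2] at h
        obtain ⟨c, hc⟩ : ∃ c, m = ℓ + c := ⟨m - ℓ, by omega⟩
        have e3 : m - ℓ = c := by omega
        have e4 : m - t = c + p := by omega
        have e5 : y 0 = c + t := by omega
        rw [e4] at h
        rw [e3]
        calc m ^ (n - k - 1) * m * c = m ^ (n - k - 1) * (m * c) := by ring
          _ ≤ m ^ (n - k - 1) * (y 0 * (c + p)) := by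
            apply Nat.mul_le_mul_left
            rw [hc, hlt, e5]
            nlinarith [Nat.zero_le (t * p)]
          _ = y 0 * (m ^ (n - k - 1) * (c + p)) := by ring
          _ ≤ _ := Nat.mul_le_mul_left _ h
    · have hk1 : k ≠ 0 := by
        rintro rfl
        simp only [zero_mul, zero_add] at hsum
        omega
      obtain ⟨j, rfl⟩ : ∃ j, k = j + 1 := ⟨k - 1, by omega⟩
      have hj : (j + 1) * (m - 1) = j * (m - 1) + (m - 1) := by ring
      rw [hj] at hsum
      have h := ih j (y 0 + ℓ - 1) (fun i => y i.succ) (by omega) (by omega) hyt (by omega)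
      have e1 : n + 1 - (j + 1) - 1 = n - j - 1 := by omega
      rw [e1]
      obtain ⟨p, hp⟩ : ∃ p, y 0 = p + 1 := ⟨y 0 - 1, by omega⟩
      obtain ⟨r, hr⟩ : ∃ r, m = y 0 + ℓ + r := ⟨m - y 0 - ℓ, by omega⟩
      have e2 : m - (y 0 + ℓ - 1) = r + 1 := by omega
      have e3 : m - ℓ = p + 1 + r := by omega
      rw [e2] at h
      rw [e3]
      calc m ^ (n - j - 1) * (p + 1 + r) ≤ m ^ (n - j - 1) * ((p + 1) * (r + 1)) := by
            apply Nat.mul_le_mul_left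
            nlinarith [Nat.zero_le (p * r)]
        _ = y 0 * (m ^ (n - j - 1) * (r + 1)) := by rw [hp]; ring
        _ ≤ _ := Nat.mul_le_mul_left _ h

lemma aux_hom {K : Type} [Field K] {s d : ℕ} (F : MvPolynomial (Fin s) K)
    (hF : F.IsHomogeneous d) (c : K) (x : Fin s → K) :
    eval (fun i => c * x i) F = c ^ d * eval x F := by
  rw [eval_eq, eval_eq, Finset.mul_sum]
  apply Finset.sum_congr rfl
  intro m hm
  have h : ∑ i ∈ m.support, m i = d := by
    have := hF (mem_support_iff.mp hm)
    simpa [Finsupp.weight_apply, Finsupp.sum] using this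
  simp only [mul_pow]
  rw [Finset.prod_mul_distrib, Finset.prod_pow_eq_pow_sum, h]
  ring

/-- Upper bound for the number of zeros on the projective torus of a homogeneous
polynomial of degree `d = k(q-2) + ℓ`, `1 ≤ d ≤ (q-2)(s-1) - 1`, that does not vanish
at every point of the torus. -/
theorem stmt_5 (K : Type) [Field K] [Fintype K] (q s d k ℓ : ℕ)
    (hK : Fintype.card K = q) (hq : 3 ≤ q) (hs : 2 ≤ s)
    (hd1 : 1 ≤ d) (hd2 : d ≤ (q - 2) * (s - 1) - 1)
    (hdk : d = k * (q - 2) + ℓ) (hl1 : 1 ≤ ℓ) (hl2 : ℓ ≤ q - 2)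
    (F : MvPolynomial (Fin s) K) (hF : F.IsHomogeneous d)
    (hnv : ∃ p ∈ projTorus K s, eval p.rep F ≠ 0) :
    Set.ncard {p ∈ projTorus K s | eval p.rep F = 0} ≤
      (q - 1) ^ (s - k - 2) * ((q - 1) ^ (k + 1) - (q - 1) + ℓ) := by
  classical
  obtain ⟨n, rfl⟩ : ∃ n, s = n + 1 := ⟨s - 1, by omega⟩
  obtain ⟨m, rfl⟩ : ∃ m, q = m + 1 := ⟨q - 1, by omega⟩
  have hkn : k + 1 ≤ n := by
    by_contra hcon
    have h1 : n * (m + 1 - 2) ≤ k * (m + 1 - 2) := Nat.mul_le_mul_right _ (by omega)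
    rw [Nat.add_sub_cancel, mul_comm] at hd2
    omega
  set A : Fin n → Finset K := fun _ => Finset.univ.erase 0 with hA
  have hAc : ∀ i, (A i).card = m := by
    intro i
    simp [hA, Finset.card_erase_of_mem, hK]
  set f := auxSl 1 F with hf
  let φ : Projectivization K (Fin (n+1) → K) → (Fin n → K) :=
    fun p i => (p.rep 0)⁻¹ * p.rep i.succ
  have hcons : ∀ p ∈ projTorus K (n+1), (Fin.cons 1 (φ p) : Fin (n+1) → K) =
      fun i => (p.rep 0)⁻¹ * p.rep i := by
    intro p hp
    funext i
    refine Fin.cases ?_ (fun j => ?_) i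
    · simp [inv_mul_cancel₀ (hp 0)]
    · simp [φ]
  have hφev : ∀ p ∈ projTorus K (n+1), eval (φ p) f = ((p.rep 0)⁻¹) ^ d * eval p.rep F := by
    intro p hp
    rw [hf, auxSl_eval, hcons p hp, aux_hom F hF]
  have hφmem : ∀ p ∈ projTorus K (n+1), φ p ∈ Fintype.piFinset A := by
    intro p hp
    rw [Fintype.mem_piFinset]
    intro i
    simp only [hA, Finset.mem_erase, Finset.mem_univ, and_true]
    exact mul_ne_zero (inv_ne_zero (hp 0)) (hp _)
  have hinj : Set.InjOn φ (projTorus K (n+1)) := by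
    intro p hp p' hp' h
    have h2 : (fun i => (p.rep 0)⁻¹ * p.rep i) = fun i => (p'.rep 0)⁻¹ * p'.rep i := by
      rw [← hcons p hp, ← hcons p' hp', h]
    rw [← p.mk_rep, ← p'.mk_rep, Projectivization.mk_eq_mk_iff']
    refine ⟨p.rep 0 * (p'.rep 0)⁻¹, ?_⟩
    funext i
    have h3 := congrFun h2 i
    rw [Pi.smul_apply, smul_eq_mul, mul_assoc, ← h3, ← mul_assoc, mul_inv_cancel₀ (hp 0), one_mul]
  obtain ⟨p₀, hp₀, hne⟩ := hnv
  obtain ⟨y, hy1, hy2, hy3⟩ := aux_AF n _ d A f rfl ((auxSl_deg 1 F).trans hF.totalDegree_le)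
    ⟨φ p₀, hφmem p₀ hp₀, by
      rw [hφev p₀ hp₀]
      exact mul_ne_zero (pow_ne_zero _ (inv_ne_zero (hp₀ 0))) hne⟩
  simp only [hAc] at hy1 hy2
  have hprod := aux_prod m n k ℓ y hkn (by omega) hy1 (by
    have : m + 1 - 2 = m - 1 := by omega
    rw [this] at hdk
    rw [← hdk]
    simpa using hy2)
  have hZ : Set.ncard {p ∈ projTorus K (n+1) | eval p.rep F = 0} ≤
      ((Fintype.piFinset A).filter (fun x => ¬ eval x f ≠ 0)).card := by
    rw [← Set.ncard_coe_finset]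
    apply Set.ncard_le_ncard_of_injOn φ
    · rintro p ⟨hp, hp0⟩
      simp only [Finset.coe_filter, Set.mem_setOf_eq, not_not]
      exact ⟨hφmem p hp, by rw [hφev p hp, hp0, mul_zero]⟩
    · exact hinj.mono fun p hp => hp.1
  have htot := Finset.card_filter_add_card_filter_not (s := Fintype.piFinset A)
    (fun x => eval x f ≠ 0)
  have hcardpi : (Fintype.piFinset A).card = m ^ n := by
    rw [Fintype.card_piFinset]; simp [hAc]
  rw [hcardpi] at htot
  have e1 : n + 1 - k - 2 = n - k - 1 := by omega
  have e2 : m + 1 - 1 = m := by omega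
  rw [e1, e2]
  have hmk : m ≤ m ^ (k + 1) := Nat.le_self_pow (by omega) m
  have e3 : m ^ (n - k - 1) * (m ^ (k + 1) - m + ℓ) + m ^ (n - k - 1) * (m - ℓ) = m ^ n := by
    rw [← mul_add]
    have : m ^ (k + 1) - m + ℓ + (m - ℓ) = m ^ (k + 1) := by omega
    rw [this, ← pow_add]
    congr 1
    omega
  omega
end

section
/- Let K be a finite field with q elements, q ≥ 3, let s ≥ 2, and let T be the projective torus in ℙ^{s−1} over K. Let d be an integer with 1 ≤ d ≤ (q−2)(s−1) − 1 and write d = k(q−2) + ℓ with k ≥ 0 and 1 ≤ ℓ ≤ q−2. Then there exists a homogeneous polynomial F ∈ K[t_1,…,t_s] of degree d, not vanishing at every point of T, such that #{[x] ∈ T : F(x) = 0} = (q−1)^{s−k−2}·((q−1)^{k+1} − (q−1) + ℓ). -/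
open MvPolynomial

theorem torus_aux (K : Type) [Field K] [Fintype K] [DecidableEq K] (n : ℕ)
    (A : Fin n → Finset Kˣ) :
    ∃ F : MvPolynomial (Fin (n + 1)) K, F.IsHomogeneous (∑ j, (A j).card) ∧
      ((∀ j, (A j).card < Fintype.card Kˣ) → ∃ p ∈ projTorus K (n + 1), eval p.rep F ≠ 0) ∧
      Set.ncard {p ∈ projTorus K (n + 1) | eval p.rep F = 0} +
        ∏ j, (Fintype.card Kˣ - (A j).card) = (Fintype.card Kˣ) ^ n := by
  classical
  let F : MvPolynomial (Fin (n + 1)) K :=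
    ∏ j, ∏ a ∈ A j, (C (a : K) * X 0 - X j.succ)
  have hev : ∀ x : Fin (n + 1) → K, eval x F = 0 ↔ ∃ j, ∃ a ∈ A j, (a : K) * x 0 = x j.succ := by
    intro x
    simp [F, eval_prod, Finset.prod_eq_zero_iff, sub_eq_zero]
  let v : (Fin n → Kˣ) → (Fin (n + 1) → K) := fun y => Fin.cons 1 (fun j => (y j : K))
  have hv : ∀ y, v y ≠ 0 := fun y h => by
    have := congrFun h 0
    simp [v] at this
  let φ : (Fin n → Kˣ) → Projectivization K (Fin (n + 1) → K) :=
    fun y => Projectivization.mk K (v y) (hv y)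
  have hrep : ∀ y, ∃ c : Kˣ, (φ y).rep 0 = c ∧ ∀ j, (φ y).rep (Fin.succ j) = c * y j := by
    intro y
    obtain ⟨c, hc⟩ := Projectivization.exists_smul_eq_mk_rep K (v y) (hv y)
    refine ⟨c, ?_, fun j => ?_⟩
    · have := congrFun hc 0
      simpa [v, Units.smul_def] using this.symm
    · have := congrFun hc j.succ
      simpa [v, Units.smul_def] using this.symm
  have hT : ∀ y, φ y ∈ projTorus K (n + 1) := by
    intro y i
    obtain ⟨c, h0, h1⟩ := hrep y
    refine Fin.cases ?_ (fun j => ?_) i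
    · rw [h0]; exact c.ne_zero
    · rw [h1]; exact mul_ne_zero c.ne_zero (y j).ne_zero
  have hφ : ∀ y, eval (φ y).rep F = 0 ↔ ∃ j, y j ∈ A j := by
    intro y
    rw [hev]
    obtain ⟨c, h0, h1⟩ := hrep y
    refine exists_congr fun j => ?_
    rw [h0, h1]
    constructor
    · rintro ⟨a, ha, h⟩
      have : a = y j := by
        rw [mul_comm] at h
        exact Units.ext (mul_left_cancel₀ c.ne_zero h)
      exact this ▸ ha
    · intro h
      exact ⟨_, h, mul_comm _ _⟩
  have hinj : Function.Injective φ := by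
    intro y z h
    obtain ⟨c, h0, h1⟩ := hrep y
    obtain ⟨e, g0, g1⟩ := hrep z
    rw [h] at h0 h1
    have hce : (c : K) = e := h0.symm.trans g0
    funext j
    have := (h1 j).symm.trans (g1 j)
    rw [hce] at this
    exact Units.ext (mul_left_cancel₀ e.ne_zero this)
  have hsurj : ∀ p ∈ projTorus K (n + 1), ∃ y, φ y = p := by
    intro p hp
    have hp' : ∀ i, p.rep i ≠ 0 := hp
    refine ⟨fun j => Units.mk0 (p.rep j.succ / p.rep 0) (div_ne_zero (hp' _) (hp' _)), ?_⟩
    conv_rhs => rw [← p.mk_rep]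
    rw [Projectivization.mk_eq_mk_iff']
    refine ⟨(p.rep 0)⁻¹, ?_⟩
    funext i
    refine Fin.cases ?_ (fun j => ?_) i
    · simp [v, hp' 0]
    · simp [v, div_eq_inv_mul]
  refine ⟨F, ?_, ?_, ?_⟩
  · refine IsHomogeneous.prod _ _ _ fun j _ => ?_
    have := IsHomogeneous.prod (A j) (fun a : Kˣ => (C (a : K) * X 0 - X j.succ : MvPolynomial (Fin (n+1)) K)) (fun _ => 1)
      (fun a _ => ((isHomogeneous_C_mul_X _ _).sub (isHomogeneous_X _ _)))
    simpa using this
  · intro hA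
    have : ∀ j, ∃ a, a ∉ A j := fun j => by
      by_contra! h
      have := hA j
      rw [Finset.eq_univ_iff_forall.2 h, Finset.card_univ] at this
      exact lt_irrefl _ this
    choose y hy using this
    refine ⟨φ y, hT y, fun h => ?_⟩
    obtain ⟨j, hj⟩ := (hφ y).1 h
    exact hy j hj
  · have hset : {p ∈ projTorus K (n + 1) | eval p.rep F = 0} =
        φ '' ((Fintype.piFinset fun j => (A j)ᶜ)ᶜ : Finset (Fin n → Kˣ)) := by
      ext p
      constructor
      · rintro ⟨hp, h⟩
        obtain ⟨y, rfl⟩ := hsurj p hp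
        refine ⟨y, ?_, rfl⟩
        simpa using (hφ y).1 h
      · rintro ⟨y, hy, rfl⟩
        exact ⟨hT y, (hφ y).2 (by simpa using hy)⟩
    rw [hset, Set.ncard_image_of_injective _ hinj, Set.ncard_coe_finset]
    have h1 := Finset.card_compl_add_card (Fintype.piFinset fun j => (A j)ᶜ)
    rw [Fintype.card_piFinset] at h1
    simpa [Finset.card_compl] using h1

/-- There exists a homogeneous polynomial of degree `d = k(q-2) + ℓ`,
`1 ≤ d ≤ (q-2)(s-1) - 1`, not vanishing at every point of the projective torus, with
exactly `(q-1)^(s-k-2) * ((q-1)^(k+1) - (q-1) + ℓ)` zeros on the torus. -/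
theorem stmt_6 (K : Type) [Field K] [Fintype K] (q s d k ℓ : ℕ)
    (hK : Fintype.card K = q) (hq : 3 ≤ q) (hs : 2 ≤ s)
    (hd1 : 1 ≤ d) (hd2 : d ≤ (q - 2) * (s - 1) - 1)
    (hdk : d = k * (q - 2) + ℓ) (hl1 : 1 ≤ ℓ) (hl2 : ℓ ≤ q - 2) :
    ∃ F : MvPolynomial (Fin s) K, F.IsHomogeneous d ∧
      (∃ p ∈ projTorus K s, eval p.rep F ≠ 0) ∧
      Set.ncard {p ∈ projTorus K s | eval p.rep F = 0} =
        (q - 1) ^ (s - k - 2) * ((q - 1) ^ (k + 1) - (q - 1) + ℓ) := by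
  classical
  obtain ⟨m, rfl⟩ : ∃ m, s = k + 1 + m + 1 := by
    have h : k < s - 1 := by
      have h0 : 0 < (q - 2) * (s - 1) := Nat.mul_pos (by omega) (by omega)
      have : (q - 2) * k < (q - 2) * (s - 1) := by
        rw [mul_comm (q - 2) k]; omega
      exact lt_of_mul_lt_mul_left this (Nat.zero_le _)
    exact ⟨s - k - 2, by omega⟩
  have hQ : Fintype.card Kˣ = q - 1 := by rw [Fintype.card_units, hK]
  let c : ℕ → ℕ := fun i => if i < k then q - 2 else if i = k then ℓ else 0
  have hc : ∀ i, c i ≤ q - 2 := fun i => by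
    simp only [c]; split_ifs <;> omega
  have hA : ∀ i, ∃ B : Finset Kˣ, B.card = c i := fun i => by
    obtain ⟨B, -, hB⟩ := Finset.exists_subset_card_eq (s := (Finset.univ : Finset Kˣ)) (n := c i)
      (by rw [Finset.card_univ, hQ]; have := hc i; omega)
    exact ⟨B, hB⟩
  choose B hB using hA
  obtain ⟨F, h1, h2, h3⟩ := torus_aux K (k + 1 + m) (fun j => B j)
  simp only [hB, hQ] at h1 h2 h3
  refine ⟨F, ?_, h2 fun j => ?_, ?_⟩
  · convert h1 using 1
    rw [Fin.sum_univ_eq_sum_range c, Finset.sum_range_add, Finset.sum_range_succ,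
      Finset.sum_congr rfl (g := fun _ => q - 2) (fun i hi => by
        simp [c, Finset.mem_range.1 hi]),
      Finset.sum_congr (s₁ := Finset.range m) rfl (g := fun _ => 0) (fun i hi => by
        simp only [c]; split_ifs <;> omega)]
    simp [c, hdk]
  · have := hc j
    omega
  · have hp : ∏ j : Fin (k + 1 + m), (q - 1 - c j) = (q - 1 - ℓ) * (q - 1) ^ m := by
      rw [Fin.prod_univ_eq_prod_range (fun i => q - 1 - c i), Finset.prod_range_add,
        Finset.prod_range_succ,
        Finset.prod_congr rfl (g := fun _ => 1) (fun i hi => by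
          simp [c, Finset.mem_range.1 hi]; omega),
        Finset.prod_congr (s₁ := Finset.range m) rfl (g := fun _ => q - 1) (fun i hi => by
          have : c (k + 1 + i) = 0 := by
            simp only [c]; split_ifs <;> omega
          rw [this]; rfl)]
      simp [c]
    rw [hp] at h3
    have e : k + 1 + m + 1 - k - 2 = m := by omega
    rw [e]
    apply Nat.add_right_cancel (m := (q - 1 - ℓ) * (q - 1) ^ m)
    rw [h3, mul_comm (q - 1 - ℓ), ← mul_add, pow_add, mul_comm]
    congr 1
    have : q - 1 ≤ (q - 1) ^ (k + 1) := Nat.le_self_pow (by omega) _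
    omega
end

section
/- Let K be a finite field with q elements and let s ≥ 2. A homogeneous polynomial f ∈ K[t_1,…,t_s] vanishes at every point of the affine torus (K*)^s if and only if f belongs to the ideal of K[t_1,…,t_s] generated by t_2^{q−1} − t_1^{q−1}, t_3^{q−1} − t_1^{q−1}, …, t_s^{q−1} − t_1^{q−1}. Consequently, the vanishing ideal I(T) of the projective torus T ⊆ ℙ^{s−1} equals (t_2^{q−1} − t_1^{q−1}, …, t_s^{q−1} − t_1^{q−1}). -/
open MvPolynomial

theorem aux_main (K : Type) [Field K] [Fintype K] (s n : ℕ) (hn : Fintype.card K - 1 = n)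
    (z : Fin s) (I : Ideal (MvPolynomial (Fin s) K))
    (hI : ∀ i, i ≠ z → X i ^ n - X z ^ n ∈ I) (e : ℕ)
    (f : MvPolynomial (Fin s) K) (hf : f.IsHomogeneous e)
    (hv : ∀ x : Fin s → K, (∀ i, x i ≠ 0) → eval x f = 0) : f ∈ I := by
  classical
  have hn0 : 0 < n := by
    have := Fintype.one_lt_card (α := K)
    omega
  let ρ : (Fin s →₀ ℕ) → (Fin s →₀ ℕ) := fun m =>
    Finsupp.equivFunOnFinite.symm (fun i => if i = z then 0 else m i % n)
  have hρ : ∀ m i, ρ m i = if i = z then 0 else m i % n := fun m i => rfl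
  have hρle : ∀ m i, ρ m i ≤ m i := by
    intro m i
    rw [hρ]
    split_ifs
    · exact Nat.zero_le _
    · exact Nat.mod_le _ _
  let h : MvPolynomial (Fin s) K := ∑ m ∈ f.support, monomial (ρ m) (f.coeff m)
  have h0 : h = 0 := by
    apply eq_zero_of_eval_zero_at_prod_finset h (fun _ => Finset.univ.erase 0)
    · intro i
      have hc : (Finset.univ.erase (0:K)).card = n := by
        rw [Finset.card_erase_of_mem (Finset.mem_univ _), Finset.card_univ, hn]
      rw [hc]
      refine lt_of_le_of_lt (degreeOf_sum_le i _ _) ?_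
      rw [Finset.sup_lt_iff (by simpa using hn0)]
      intro m hm
      rw [degreeOf_monomial_eq _ _ (mem_support_iff.mp hm), hρ]
      split_ifs
      · exact hn0
      · exact Nat.mod_lt _ hn0
    · intro x hx
      have hx' : ∀ i, x i ≠ 0 := fun i => (Finset.mem_erase.mp (hx i)).1
      have key := hv (Function.update x z 1) (by
        intro i
        by_cases hi : i = z
        · subst hi; simp
        · simp [hi, hx'])
      rw [eval_eq'] at key
      rw [map_sum, ← key]
      refine Finset.sum_congr rfl fun m _ => ?_
      rw [eval_monomial, Finsupp.prod_fintype _ _ (by simp)]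
      congr 1
      refine Finset.prod_congr rfl fun i _ => ?_
      rw [hρ]
      by_cases hi : i = z
      · subst hi; simp
      · have h1 : x i ^ n = 1 := by
          rw [← hn]; exact FiniteField.pow_card_sub_one_eq_one _ (hx' i)
        simp only [hi, if_false, Function.update_of_ne, ne_eq, not_false_eq_true]
        conv_rhs => rw [← Nat.mod_add_div (m i) n, pow_add, pow_mul, h1, one_pow, mul_one]
  let Φ : MvPolynomial (Fin s) K →ₗ[K] MvPolynomial (Fin s) K :=
    (basisMonomials (Fin s) K).constr K
      (fun p => (monomial p 1) * X z ^ (e - ∑ i, p i))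
  have hΦ : ∀ p c, Φ (monomial p c) = C c * ((monomial p 1) * X z ^ (e - ∑ i, p i)) := by
    intro p c
    have : (monomial p c : MvPolynomial (Fin s) K) = c • basisMonomials (Fin s) K p := by
      simp [smul_monomial]
    rw [this, map_smul, Module.Basis.constr_basis, smul_eq_C_mul]
  have hg : ∑ m ∈ f.support, C (f.coeff m) * ((monomial (ρ m) (1:K)) * X z ^ (e - ∑ i, ρ m i)) = 0 := by
    have : Φ h = 0 := by rw [h0, map_zero]
    rw [map_sum] at this
    simpa only [hΦ] using this
  rw [← Ideal.Quotient.eq_zero_iff_mem]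
  have hg' := congrArg (Ideal.Quotient.mk I) hg
  rw [map_zero, map_sum] at hg'
  rw [f.as_sum, map_sum, ← hg']
  refine Finset.sum_congr rfl fun m hm => ?_
  have hmon : ∀ p : Fin s →₀ ℕ, (monomial p (1:K)) = ∏ i, X i ^ p i := by
    intro p
    rw [monomial_eq, Finsupp.prod_fintype _ _ (by simp)]; simp
  have hy : ∀ i, (Ideal.Quotient.mk I (X i)) ^ n = (Ideal.Quotient.mk I (X z)) ^ n := by
    intro i
    by_cases hi : i = z
    · rw [hi]
    · rw [← map_pow, ← map_pow]
      exact Ideal.Quotient.eq.mpr (hI i hi)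
  have hdeg : ∑ i, m i = e := by
    have := hf (mem_support_iff.mp hm)
    rw [← this, Finsupp.weight_apply, Finsupp.sum_fintype _ _ (by simp)]
    simp
  have hexp : e - ∑ i, ρ m i = ∑ i, (m i - ρ m i) := by
    rw [← hdeg, Finset.sum_tsub_distrib _ (fun i _ => hρle m i)]
  have : monomial m (f.coeff m) = C (f.coeff m) * monomial m (1:K) := by
    rw [C_mul_monomial, mul_one]
  rw [this, hexp, ← Finset.prod_pow_eq_pow_sum, hmon, hmon, ← Finset.prod_mul_distrib]
  simp only [map_mul, map_prod, map_pow]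
  congr 1
  refine Finset.prod_congr rfl fun i _ => ?_
  rw [hρ]
  by_cases hi : i = z
  · subst hi; simp
  · simp only [hi, if_false]
    have h2 : m i - m i % n = n * (m i / n) := by
      have := Nat.mod_add_div (m i) n
      omega
    rw [h2, pow_mul, ← hy i, ← pow_mul, ← pow_add, Nat.mod_add_div]

/-- A homogeneous polynomial `f ∈ K[t_1,…,t_s]` vanishes at every point of the affine
torus `(K*)^s` if and only if it belongs to the ideal generated by
`t_i^(q-1) - t_1^(q-1)` for `i = 2,…,s`; consequently the vanishing ideal of the
projective torus (the ideal generated by the homogeneous polynomials vanishing on the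
torus) equals that ideal. -/
theorem stmt_7 (K : Type) [Field K] [Fintype K] (q s : ℕ)
    (hK : Fintype.card K = q) (hs : 2 ≤ s) :
    (∀ (e : ℕ) (f : MvPolynomial (Fin s) K), f.IsHomogeneous e →
      ((∀ x : Fin s → K, (∀ i, x i ≠ 0) → eval x f = 0) ↔
        f ∈ Ideal.span {g : MvPolynomial (Fin s) K |
          ∃ i : Fin s, i ≠ (⟨0, by omega⟩ : Fin s) ∧
            g = X i ^ (q - 1) - X (⟨0, by omega⟩ : Fin s) ^ (q - 1)})) ∧
    Ideal.span {f : MvPolynomial (Fin s) K |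
        (∃ e, f.IsHomogeneous e) ∧
        ∀ x : Fin s → K, (∀ i, x i ≠ 0) → eval x f = 0} =
      Ideal.span {g : MvPolynomial (Fin s) K |
        ∃ i : Fin s, i ≠ (⟨0, by omega⟩ : Fin s) ∧
          g = X i ^ (q - 1) - X (⟨0, by omega⟩ : Fin s) ^ (q - 1)} := by
  have hvan : ∀ f ∈ Ideal.span {g : MvPolynomial (Fin s) K |
          ∃ i : Fin s, i ≠ (⟨0, by omega⟩ : Fin s) ∧
            g = X i ^ (q - 1) - X (⟨0, by omega⟩ : Fin s) ^ (q - 1)},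
      ∀ x : Fin s → K, (∀ i, x i ≠ 0) → eval x f = 0 := by
    intro f hf x hx
    have hle : Ideal.span {g : MvPolynomial (Fin s) K |
          ∃ i : Fin s, i ≠ (⟨0, by omega⟩ : Fin s) ∧
            g = X i ^ (q - 1) - X (⟨0, by omega⟩ : Fin s) ^ (q - 1)} ≤
        RingHom.ker (eval x) := by
      rw [Ideal.span_le]
      rintro g ⟨i, hi, rfl⟩
      rw [SetLike.mem_coe, RingHom.mem_ker, map_sub, map_pow, map_pow, eval_X, eval_X, ← hK,
        FiniteField.pow_card_sub_one_eq_one _ (hx _),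
        FiniteField.pow_card_sub_one_eq_one _ (hx _), sub_self]
    exact hle hf
  have hmain := fun e f hf hv => aux_main K s (q - 1) (by rw [hK]) ⟨0, by omega⟩
    (Ideal.span {g : MvPolynomial (Fin s) K |
          ∃ i : Fin s, i ≠ (⟨0, by omega⟩ : Fin s) ∧
            g = X i ^ (q - 1) - X (⟨0, by omega⟩ : Fin s) ^ (q - 1)})
    (fun i hi => Ideal.subset_span ⟨i, hi, rfl⟩) e f hf hv
  refine ⟨fun e f hf => ⟨hmain e f hf, hvan f⟩, le_antisymm ?_ ?_⟩
  · rw [Ideal.span_le]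
    rintro f ⟨⟨e, he⟩, hv⟩
    exact hmain e f he hv
  · rw [Ideal.span_le]
    rintro g hg
    refine Ideal.subset_span ⟨?_, hvan g (Ideal.subset_span hg)⟩
    obtain ⟨i, hi, rfl⟩ := hg
    exact ⟨q - 1, (isHomogeneous_X_pow i _).sub (isHomogeneous_X_pow _ _)⟩
end

section
/- Let K be a finite field with q elements, let s ≥ 2, and let T be the projective torus in ℙ^{s−1} over K. Then |T| = (q−1)^{s−1}; moreover H_T(d) = (q−1)^{s−1} for every d ≥ (s−1)(q−2), and if q ≥ 3 then H_T((s−1)(q−2) − 1) < (q−1)^{s−1}; that is, the index of regularity of S/I(T) equals (s−1)(q−2) and its degree equals (q−1)^{s−1}. -/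
open MvPolynomial

/-- The Hilbert function of a set `Y` of points of projective space (equivalently the
dimension of the parameterized code of order `d` on `Y`): the `K`-dimension of the
space of functions on `Y` of the form `[P] ↦ F(P)/P_{i0}^d` with `F` homogeneous of
degree `d`. -/
noncomputable def hilbFn (K : Type) [Field K] {ι : Type}
    (Y : Set (Projectivization K (ι → K))) (i0 : ι) (d : ℕ) : ℕ :=
  Module.finrank K ↥(Submodule.span K
    {f : ↥Y → K | ∃ F : MvPolynomial ι K, F.IsHomogeneous d ∧
      ∀ p : ↥Y, f p = eval p.1.rep F / (p.1.rep i0) ^ d})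

theorem hom_eval_div {K : Type} [Field K] {n d : ℕ} {F : MvPolynomial (Fin n) K}
    (hF : F.IsHomogeneous d) (x : Fin n → K) (c : K) :
    eval x F / c ^ d = eval (fun i => x i / c) F := by
  rw [eval_eq', eval_eq', Finset.sum_div]
  refine Finset.sum_congr rfl fun m hm => ?_
  have h1 : ∑ i, m i = d := by
    have := hF (mem_support_iff.mp hm)
    rw [← this, Finsupp.weight_apply, Finsupp.sum_fintype _ _ (by simp)]
    simp
  simp only [div_pow, Finset.prod_div_distrib]
  rw [Finset.prod_pow_eq_pow_sum, h1, mul_div_assoc]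

noncomputable def tvec {K : Type} [Field K] {n : ℕ} (u : Fin n → Kˣ) : Fin (n + 1) → K :=
  Fin.cons 1 (fun i => (u i : K))

theorem tvec_ne {K : Type} [Field K] {n : ℕ} (u : Fin n → Kˣ) (i : Fin (n + 1)) :
    tvec u i ≠ 0 := by
  refine Fin.cases ?_ (fun j => ?_) i <;> simp [tvec]

theorem tvec_ne_zero {K : Type} [Field K] {n : ℕ} (u : Fin n → Kˣ) : tvec u ≠ 0 :=
  fun h => tvec_ne u 0 (by rw [h]; rfl)

theorem rep_mk_tvec {K : Type} [Field K] {n : ℕ} (u : Fin n → Kˣ) :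
    ∃ a : Kˣ, ∀ i, (Projectivization.mk K (tvec u) (tvec_ne_zero u)).rep i = a * tvec u i := by
  obtain ⟨a, ha⟩ := Projectivization.exists_smul_eq_mk_rep K (tvec u) (tvec_ne_zero u)
  refine ⟨a, fun i => ?_⟩
  rw [← ha]; rfl

noncomputable def torusEquiv (K : Type) [Field K] (n : ℕ) :
    ↥(projTorus K (n + 1)) ≃ (Fin n → Kˣ) where
  toFun p := fun i => Units.mk0 (p.1.rep i.succ / p.1.rep 0) (div_ne_zero (p.2 _) (p.2 _))
  invFun u := ⟨Projectivization.mk K (tvec u) (tvec_ne_zero u), by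
    obtain ⟨a, ha⟩ := rep_mk_tvec u
    intro i
    rw [ha]
    exact mul_ne_zero a.ne_zero (tvec_ne u i)⟩
  left_inv p := by
    apply Subtype.ext
    have h0 := p.2 0
    conv_rhs => rw [← Projectivization.mk_rep p.1]
    rw [Projectivization.mk_eq_mk_iff']
    refine ⟨(p.1.rep 0)⁻¹, ?_⟩
    funext i
    refine Fin.cases ?_ (fun j => ?_) i
    · simp [tvec, h0]
    · simp [tvec, div_eq_inv_mul]
  right_inv u := by
    obtain ⟨a, ha⟩ := rep_mk_tvec u
    funext i
    apply Units.ext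
    simp only [Units.val_mk0, ha]
    simp [tvec]

theorem rep_div {K : Type} [Field K] {n : ℕ} (p : ↥(projTorus K (n + 1))) :
    (fun i => p.1.rep i / p.1.rep 0) = tvec (torusEquiv K n p) := by
  funext i
  have h0 := p.2 0
  refine Fin.cases ?_ (fun j => ?_) i
  · simp [tvec, h0]
  · simp [tvec, torusEquiv]

theorem fun_eq {K : Type} [Field K] {n d : ℕ} {F : MvPolynomial (Fin (n + 1)) K}
    (hF : F.IsHomogeneous d) (p : ↥(projTorus K (n + 1))) :
    eval p.1.rep F / (p.1.rep 0) ^ d = eval (tvec (torusEquiv K n p)) F := by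
  rw [hom_eval_div hF, rep_div]

noncomputable def dpoly {K : Type} [Field K] [Fintype K] [DecidableEq K] {n : ℕ}
    (a : Fin n → Kˣ) (e : ℕ) : MvPolynomial (Fin (n + 1)) K :=
  X 0 ^ e * ∏ i : Fin n, ∏ b ∈ Finset.univ.erase (a i), (X i.succ - C (b : K) * X 0)

theorem dpoly_hom {K : Type} [Field K] [Fintype K] [DecidableEq K] {n : ℕ}
    (a : Fin n → Kˣ) (e : ℕ) :
    (dpoly a e).IsHomogeneous (e + n * (Fintype.card K - 2)) := by
  unfold dpoly
  refine IsHomogeneous.mul (isHomogeneous_X_pow _ _) ?_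
  have : n * (Fintype.card K - 2) = ∑ i : Fin n, ∑ b ∈ Finset.univ.erase (a i), 1 := by
    simp [Finset.card_erase_of_mem, Fintype.card_units, Nat.sub_sub]
  rw [this]
  refine IsHomogeneous.prod _ _ _ fun i _ => IsHomogeneous.prod _ _ _ fun b _ => ?_
  refine IsHomogeneous.sub (isHomogeneous_X _ _) ?_
  exact isHomogeneous_C_mul_X _ _

theorem dpoly_eval {K : Type} [Field K] [Fintype K] [DecidableEq K] {n : ℕ}
    (a u : Fin n → Kˣ) (e : ℕ) :
    eval (tvec u) (dpoly a e) ≠ 0 ↔ u = a := by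
  have : eval (tvec u) (dpoly a e) =
      ∏ i : Fin n, ∏ b ∈ Finset.univ.erase (a i), ((u i : K) - b) := by
    simp [dpoly, tvec, eval_prod]
  rw [this]
  simp only [ne_eq, Finset.prod_eq_zero_iff, Finset.mem_univ, true_and, not_exists, sub_eq_zero,
    Finset.mem_erase, and_true, not_and, Units.val_inj]
  constructor
  · intro h
    funext i
    by_contra hne
    exact h i (u i) hne rfl
  · rintro rfl i b hb h
    exact hb h.symm

theorem span_top {K : Type} [Field K] [Fintype K] (n d : ℕ)
    (hd : n * (Fintype.card K - 2) ≤ d) :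
    Submodule.span K
    {f : ↥(projTorus K (n + 1)) → K | ∃ F : MvPolynomial (Fin (n + 1)) K, F.IsHomogeneous d ∧
      ∀ p : ↥(projTorus K (n + 1)), f p = eval p.1.rep F / (p.1.rep 0) ^ d} = ⊤ := by
  classical
  have : Fintype ↥(projTorus K (n + 1)) := Fintype.ofEquiv _ (torusEquiv K n).symm
  rw [eq_top_iff, ← (Pi.basisFun K ↥(projTorus K (n + 1))).span_eq, Submodule.span_le]
  rintro _ ⟨p, rfl⟩
  rw [Pi.basisFun_apply]
  set a := torusEquiv K n p with ha
  set e := d - n * (Fintype.card K - 2)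
  have hh : (dpoly a e).IsHomogeneous d := by
    have := dpoly_hom a e
    rwa [show e + n * (Fintype.card K - 2) = d by omega] at this
  have hne : eval (tvec a) (dpoly a e) ≠ 0 := (dpoly_eval a a e).2 rfl
  apply Submodule.subset_span
  refine ⟨C (eval (tvec a) (dpoly a e))⁻¹ * dpoly a e, ?_, fun r => ?_⟩
  · simpa using (isHomogeneous_C _ _).mul hh
  · rw [eval_mul, mul_div_assoc, fun_eq hh, eval_C]
    by_cases hr : r = p
    · subst hr
      rw [Pi.single_eq_same, ← ha, inv_mul_cancel₀ hne]
    · rw [Pi.single_eq_of_ne hr]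
      have : ¬ (torusEquiv K n r = a) := fun h => hr ((torusEquiv K n).injective h)
      rw [← dpoly_eval a _ e, not_not] at this
      rw [this, mul_zero]

theorem sum_zero {K : Type} [Field K] [Fintype K] [DecidableEq K] {n d : ℕ}
    (hd : d < n * (Fintype.card K - 2)) {F : MvPolynomial (Fin (n + 1)) K}
    (hF : F.IsHomogeneous d) :
    ∑ u : Fin n → Kˣ, eval (tvec u) F * ∏ i, (u i : K) = 0 := by
  simp only [eval_eq', Finset.sum_mul]
  rw [Finset.sum_comm]
  refine Finset.sum_eq_zero fun m hm => ?_
  have h1 : ∑ i, m i = d := by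
    have := hF (mem_support_iff.mp hm)
    rw [← this, Finsupp.weight_apply, Finsupp.sum_fintype _ _ (by simp)]
    simp
  have h2 : ∀ u : Fin n → Kˣ, coeff m F * (∏ i, tvec u i ^ m i) * ∏ i, (u i : K) =
      coeff m F * ∏ i : Fin n, (u i : K) ^ (m i.succ + 1) := by
    intro u
    rw [Fin.prod_univ_succ]
    simp [tvec, pow_succ, Finset.prod_mul_distrib, mul_assoc]
  simp only [h2]
  rw [← Finset.mul_sum, ← Fintype.prod_sum (fun (i : Fin n) (x : Kˣ) => (x : K) ^ (m i.succ + 1))]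
  have h3 : ∃ i : Fin n, m i.succ < Fintype.card K - 2 := by
    by_contra! hc
    have : ∑ i : Fin n, (Fintype.card K - 2) ≤ ∑ i : Fin n, m i.succ :=
      Finset.sum_le_sum fun i _ => hc i
    rw [Fin.sum_univ_succ] at h1
    simp at this
    omega
  obtain ⟨i, hi⟩ := h3
  rw [Finset.prod_eq_zero (Finset.mem_univ i), mul_zero]
  rw [FiniteField.sum_pow_units, if_neg]
  intro h
  have := Nat.le_of_dvd (by omega) h
  omega

theorem span_ne_top {K : Type} [Field K] [Fintype K] (n d : ℕ)
    (hd : d < n * (Fintype.card K - 2)) :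
    Submodule.span K
    {f : ↥(projTorus K (n + 1)) → K | ∃ F : MvPolynomial (Fin (n + 1)) K, F.IsHomogeneous d ∧
      ∀ p : ↥(projTorus K (n + 1)), f p = eval p.1.rep F / (p.1.rep 0) ^ d} ≠ ⊤ := by
  classical
  intro htop
  let L : (↥(projTorus K (n + 1)) → K) →ₗ[K] K :=
    ∑ u : Fin n → Kˣ, (∏ i, (u i : K)) • LinearMap.proj ((torusEquiv K n).symm u)
  have hL : ∀ f, L f = ∑ u : Fin n → Kˣ, f ((torusEquiv K n).symm u) * ∏ i, (u i : K) := by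
    intro f
    simp [L, mul_comm]
  have h0 : (⊤ : Submodule K (↥(projTorus K (n + 1)) → K)) ≤ LinearMap.ker L := by
    rw [← htop, Submodule.span_le]
    rintro f ⟨F, hF, hf⟩
    rw [SetLike.mem_coe, LinearMap.mem_ker, hL]
    simp only [hf, fun_eq hF, Equiv.apply_symm_apply]
    exact sum_zero hd hF
  have h1 : L (Pi.single ((torusEquiv K n).symm 1) 1) = 0 := h0 trivial
  rw [hL, Finset.sum_eq_single 1] at h1
  · simp at h1
  · intro b _ hb
    rw [Pi.single_eq_of_ne, zero_mul]
    exact fun h => hb ((torusEquiv K n).symm.injective h)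
  · simp

/-- The projective torus `T ⊆ ℙ^(s-1)` over a finite field with `q` elements has
`(q-1)^(s-1)` points; the Hilbert function `H_T(d)` equals `(q-1)^(s-1)` for all
`d ≥ (s-1)(q-2)` and, when `q ≥ 3`, is strictly smaller at `d = (s-1)(q-2) - 1`:
the index of regularity is `(s-1)(q-2)` and the degree is `(q-1)^(s-1)`. -/
theorem stmt_8 (K : Type) [Field K] [Fintype K] (q s : ℕ)
    (hK : Fintype.card K = q) (hs : 2 ≤ s) :
    Set.ncard (projTorus K s) = (q - 1) ^ (s - 1) ∧
    (∀ d : ℕ, (s - 1) * (q - 2) ≤ d →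
      hilbFn K (projTorus K s) (⟨0, by omega⟩ : Fin s) d = (q - 1) ^ (s - 1)) ∧
    (3 ≤ q →
      hilbFn K (projTorus K s) (⟨0, by omega⟩ : Fin s) ((s - 1) * (q - 2) - 1) <
        (q - 1) ^ (s - 1)) := by
  obtain ⟨n, rfl⟩ : ∃ n, s = n + 1 := ⟨s - 1, by omega⟩
  subst hK
  classical
  have : Fintype ↥(projTorus K (n + 1)) := Fintype.ofEquiv _ (torusEquiv K n).symm
  have hc : Fintype.card ↥(projTorus K (n + 1)) = (Fintype.card K - 1) ^ n := by
    rw [Fintype.card_congr (torusEquiv K n)]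
    simp [Fintype.card_units]
  have hf : Module.finrank K (↥(projTorus K (n + 1)) → K) = (Fintype.card K - 1) ^ n := by
    rw [Module.finrank_fintype_fun_eq_card, hc]
  simp only [Nat.add_sub_cancel]
  refine ⟨?_, fun d hd => ?_, fun h3 => ?_⟩
  · rw [← Nat.card_coe_set_eq, Nat.card_eq_fintype_card, hc]
  · have := span_top n d hd
    unfold hilbFn
    rw [← hf, ← finrank_top K (↥(projTorus K (n + 1)) → K), ← this]
    rfl
  · have hpos : 0 < n * (Fintype.card K - 2) := Nat.mul_pos (by omega) (by omega)
    have := Submodule.finrank_lt (span_ne_top (K := K) n (n * (Fintype.card K - 2) - 1) (by omega))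
    rw [hf] at this
    exact this
end

section
/- Let K be a finite field with q elements, let s ≥ 2, and let T be the projective torus in ℙ^{s−1} over K. Then for every d ≥ 1 the length of the parameterized code C_T(d) is (q−1)^{s−1} and its dimension is dim_K C_T(d) = Σ_{j=0}^{⌊d/(q−1)⌋} (−1)^j · C(s−1, j) · C(s−1+d−j(q−1), s−1), where C(·,·) denotes a binomial coefficient. -/
open MvPolynomial

def cnt (m n d : ℕ) : ℕ := Fintype.card {b : Fin n → Fin m // ∑ i, (b i : ℕ) ≤ d}

lemma cnt_zero (m d : ℕ) : cnt m 0 d = 1 := by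
  simp [cnt]

lemma cnt_succ (m n d : ℕ) :
    cnt m (n+1) d = ∑ i ∈ Finset.range m, if i ≤ d then cnt m n (d - i) else 0 := by
  rw [Finset.sum_range (n := m)]
  have h : ∀ i : Fin m, (if (i:ℕ) ≤ d then cnt m n (d - i) else 0) =
      Fintype.card {b : Fin n → Fin m // (i:ℕ) + ∑ j, (b j : ℕ) ≤ d} := by
    intro i
    split_ifs with hi
    · unfold cnt
      apply Fintype.card_congr
      apply Equiv.subtypeEquivRight
      intro b
      omega
    · symm
      rw [Fintype.card_eq_zero_iff]
      exact ⟨fun b => by have := b.2; omega⟩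
  simp_rw [h]
  rw [← Fintype.card_sigma]
  unfold cnt
  apply Fintype.card_congr
  refine ⟨fun b => ⟨b.1 0, ⟨fun j => b.1 j.succ, ?_⟩⟩,
    fun b => ⟨Fin.cons b.1 b.2.1, ?_⟩, ?_, ?_⟩
  · have := b.2
    rwa [Fin.sum_univ_succ] at this
  · have := b.2.2
    rw [Fin.sum_univ_succ]
    simpa using this
  · rintro ⟨b, hb⟩
    ext i
    refine Fin.cases ?_ ?_ i <;> simp
  · rintro ⟨i, b, hb⟩
    rfl

lemma gen_eq (m n : ℕ) :
    (PowerSeries.mk fun d => (cnt m n d : ℤ)) * (1 - PowerSeries.X) ^ (n+1)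
      = (1 - PowerSeries.X ^ m) ^ n := by
  induction n with
  | zero =>
    simp only [cnt_zero]
    have := PowerSeries.mk_one_mul_one_sub_eq_one ℤ
    rw [pow_zero, zero_add, pow_one]
    simpa [Pi.one_def] using this
  | succ n ih =>
    have h : (PowerSeries.mk fun d => (cnt m (n+1) d : ℤ)) =
        (∑ i ∈ Finset.range m, PowerSeries.X ^ i) * (PowerSeries.mk fun d => (cnt m n d : ℤ)) := by
      ext d
      rw [Finset.sum_mul, map_sum]
      simp only [PowerSeries.coeff_mk, PowerSeries.coeff_X_pow_mul', cnt_succ]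
      push_cast
      rfl
    rw [h, pow_succ _ n, ← ih, ← geom_sum_mul_neg]
    ring

lemma cnt_formula (m n d : ℕ) (hm : 0 < m) :
    (cnt m n d : ℤ) = ∑ j ∈ Finset.range (d / m + 1),
        (-1 : ℤ) ^ j * (n.choose j : ℤ) * ((n + d - j * m).choose n : ℤ) := by
  have h1 : (PowerSeries.mk fun d => (cnt m n d : ℤ)) =
      (1 - PowerSeries.X ^ m) ^ n * PowerSeries.mk fun d => ((n + d).choose n : ℤ) := by
    have h2 := PowerSeries.mk_add_choose_mul_one_sub_pow_eq_one ℤ n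
    rw [← gen_eq, mul_assoc, mul_comm (_ ^ _)]
    rw [h2, mul_one]
  have h3 := congrArg (PowerSeries.coeff d) h1
  rw [PowerSeries.coeff_mk] at h3
  rw [h3]
  have h4 : ((1 : PowerSeries ℤ) - PowerSeries.X ^ m) ^ n =
      ∑ j ∈ Finset.range (n+1), PowerSeries.C ((-1) ^ j * (n.choose j : ℤ)) * PowerSeries.X ^ (j * m) := by
    rw [sub_eq_neg_add, add_pow]
    apply Finset.sum_congr rfl
    intro j _
    simp only [one_pow, mul_one, map_mul, map_pow, map_neg, map_one, map_natCast]
    rw [neg_pow, ← pow_mul, mul_comm m j]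
    ring
  rw [h4, Finset.sum_mul, map_sum]
  simp only [mul_assoc, PowerSeries.coeff_C_mul, PowerSeries.coeff_X_pow_mul', PowerSeries.coeff_mk]
  have h5 : ∀ j, (if j * m ≤ d then ((n + (d - j * m)).choose n : ℤ) else 0) =
      if j * m ≤ d then ((n + d - j * m).choose n : ℤ) else 0 := by
    intro j
    split_ifs with h
    · rw [Nat.add_sub_assoc h]
    · rfl
  simp only [h5]
  trans ∑ j ∈ Finset.range (n + 1 + (d / m + 1)), (-1 : ℤ) ^ j * ((n.choose j : ℤ) * if j * m ≤ d then ((n + d - j * m).choose n : ℤ) else 0)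
  · apply Finset.sum_subset
    · exact Finset.range_mono (by generalize d / m = t; omega)
    · intro j _ hj
      rw [Nat.choose_eq_zero_of_lt (by simpa using hj)]
      simp
  · rw [← Finset.sum_subset (s₁ := Finset.range (d / m + 1))]
    · apply Finset.sum_congr rfl
      intro j hj
      rw [if_pos]
      rw [← Nat.le_div_iff_mul_le hm]
      simp at hj; omega
    · exact Finset.range_mono (by generalize d / m = t; omega)
    · intro j _ hj
      rw [if_neg]
      · simp
      rw [← Nat.le_div_iff_mul_le hm]
      simpa using hj

noncomputable def tv {K : Type} [Field K] {n : ℕ} (x : Fin n → Kˣ) : Fin (n+1) → K :=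
  Fin.cons 1 (fun i => (x i : K))

lemma tv_ne {K : Type} [Field K] {n : ℕ} (x : Fin n → Kˣ) : tv x ≠ 0 := by
  intro h
  have := congrFun h 0
  simp [tv] at this

lemma tv_ne' {K : Type} [Field K] {n : ℕ} (x : Fin n → Kˣ) (i) : tv x i ≠ 0 := by
  refine Fin.cases ?_ ?_ i <;> simp [tv]

noncomputable def torMap (K : Type) [Field K] (n : ℕ) (x : Fin n → Kˣ) : projTorus K (n+1) :=
  ⟨Projectivization.mk K (tv x) (tv_ne x), by
    intro i
    obtain ⟨a, ha⟩ := Projectivization.exists_smul_eq_mk_rep K (tv x) (tv_ne x)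
    rw [← ha]
    simp [Units.smul_def, tv_ne']⟩

lemma torMap_bij (K : Type) [Field K] (n : ℕ) : Function.Bijective (torMap K n) := by
  constructor
  · intro x y h
    have h1 := congrArg Subtype.val h
    simp only [torMap] at h1
    rw [Projectivization.mk_eq_mk_iff'] at h1
    obtain ⟨a, ha⟩ := h1
    have h0 := congrFun ha 0
    simp [tv] at h0
    subst h0
    ext i
    have h2 := congrFun ha i.succ
    simp [tv] at h2
    exact h2.symm
  · rintro ⟨p, hp⟩
    have hp' : ∀ i, p.rep i ≠ 0 := hp
    refine ⟨fun i => Units.mk0 (p.rep i.succ / p.rep 0) (div_ne_zero (hp' _) (hp' _)), ?_⟩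
    apply Subtype.ext
    simp only [torMap]
    conv_rhs => rw [← Projectivization.mk_rep p]
    rw [Projectivization.mk_eq_mk_iff']
    refine ⟨(p.rep 0)⁻¹, ?_⟩
    ext i
    refine Fin.cases ?_ ?_ i
    · simp [tv, hp' 0]
    · intro i
      simp [tv, div_eq_inv_mul]

noncomputable def chi (K : Type) [Field K] {n : ℕ} (b : Fin n → ℕ) : (Fin n → Kˣ) →* K where
  toFun x := ∏ i, (x i : K) ^ b i
  map_one' := by simp
  map_mul' x y := by simp [mul_pow, Finset.prod_mul_distrib]

lemma chi_mod (K : Type) [Field K] [Fintype K] {n m : ℕ} (hm : Fintype.card K = m + 1)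
    (b : Fin n → ℕ) (x : Fin n → Kˣ) : chi K (fun i => b i % m) x = chi K b x := by
  simp only [chi, MonoidHom.coe_mk, OneHom.coe_mk]
  apply Finset.prod_congr rfl
  intro i _
  conv_rhs => rw [← Nat.mod_add_div (b i) m, pow_add, pow_mul]
  have := FiniteField.pow_card_sub_one_eq_one (x i : K) (Units.ne_zero _)
  rw [hm, Nat.add_sub_cancel] at this
  rw [this]; simp

lemma chi_inj (K : Type) [Field K] [Fintype K] {n m : ℕ} (hm : Fintype.card K = m + 1)
    : Function.Injective (fun b : Fin n → Fin m => chi K (fun i => (b i : ℕ))) := by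
  classical
  intro b c h
  obtain ⟨g, hg⟩ := IsCyclic.exists_generator (α := Kˣ)
  have hord : orderOf g = m := by
    rw [orderOf_eq_card_of_forall_mem_zpowers hg, Nat.card_eq_fintype_card, Fintype.card_units, hm]
    simp
  ext i
  have h1 := DFunLike.congr_fun h (Pi.mulSingle i g)
  simp only [chi, MonoidHom.coe_mk, OneHom.coe_mk] at h1
  rw [Finset.prod_eq_single i, Finset.prod_eq_single i] at h1
  · simp only [Pi.mulSingle_eq_same] at h1
    have h2 : g ^ (b i : ℕ) = g ^ (c i : ℕ) := by
      ext; push_cast; exact h1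
    apply pow_injOn_Iio_orderOf _ _ h2
    · simp [hord]
    · simp [hord]
  · intro j _ hj; simp [Pi.mulSingle_eq_of_ne hj]
  · simp
  · intro j _ hj; simp [Pi.mulSingle_eq_of_ne hj]
  · simp

lemma prod_rep (K : Type) [Field K] {n d : ℕ} (c : Fin (n+1) →₀ ℕ) (hc : ∑ i, c i = d)
    (x : Fin n → Kˣ) :
    (∏ i, (torMap K n x).1.rep i ^ c i) / ((torMap K n x).1.rep 0) ^ d
      = chi K (fun i => c i.succ) x := by
  obtain ⟨a, ha⟩ := Projectivization.exists_smul_eq_mk_rep K (tv x) (tv_ne x)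
  simp only [torMap]
  rw [← ha]
  simp only [Units.smul_def, Pi.smul_apply, smul_eq_mul, mul_pow, Finset.prod_mul_distrib,
    Finset.prod_pow_eq_pow_sum, hc]
  rw [Fin.prod_univ_succ]
  simp [tv, chi]

lemma dim_eq (K : Type) [Field K] [Fintype K] {n m d : ℕ} (hm : Fintype.card K = m + 1)
    (hm0 : 0 < m) : hilbFn K (projTorus K (n+1)) 0 d = cnt m n d := by
  classical
  unfold hilbFn
  let e := Equiv.ofBijective _ (torMap_bij K n)
  let L := LinearEquiv.funCongrLeft K K e
  rw [← LinearEquiv.finrank_map_eq L]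
  let v : {b : Fin n → Fin m // ∑ i, (b i : ℕ) ≤ d} → ((Fin n → Kˣ) → K) :=
    fun b => chi K (fun i => (b.1 i : ℕ))
  have hv : LinearIndependent K v := by
    have := (linearIndependent_monoidHom (Fin n → Kˣ) K).comp
      (fun b : {b : Fin n → Fin m // ∑ i, (b i : ℕ) ≤ d} => chi K (fun i => (b.1 i : ℕ)))
      (fun b c h => Subtype.ext (chi_inj K hm h))
    exact this
  have hspan : Submodule.map (L : _ →ₗ[K] _) (Submodule.span K
    {f : ↥(projTorus K (n+1)) → K | ∃ F : MvPolynomial (Fin (n+1)) K, F.IsHomogeneous d ∧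
      ∀ p : ↥(projTorus K (n+1)), f p = eval p.1.rep F / (p.1.rep 0) ^ d}) =
      Submodule.span K (Set.range v) := by
    rw [Submodule.map_span]
    apply le_antisymm
    · rw [Submodule.span_le]
      rintro _ ⟨f, ⟨F, hF, hf⟩, rfl⟩
      have key : (L : _ →ₗ[K] _) f = ∑ c ∈ F.support, F.coeff c •
          (chi K (fun i : Fin n => c i.succ) : (Fin n → Kˣ) → K) := by
        funext x
        change f (torMap K n x) = _
        rw [hf, eval_eq', Finset.sum_div, Finset.sum_apply]
        apply Finset.sum_congr rfl
        intro c hc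
        rw [mul_div_assoc, prod_rep K c]
        · rfl
        · have := hF (mem_support_iff.mp hc)
          rw [← this, Finsupp.weight_apply, Finsupp.sum_fintype] <;> simp
      rw [SetLike.mem_coe, key]
      apply Submodule.sum_mem
      intro c hc
      apply Submodule.smul_mem
      apply Submodule.subset_span
      have hcd : ∑ i, c i = d := by
        have := hF (mem_support_iff.mp hc)
        rw [← this, Finsupp.weight_apply, Finsupp.sum_fintype] <;> simp
      refine ⟨⟨fun i => ⟨c i.succ % m, Nat.mod_lt _ hm0⟩, ?_⟩, ?_⟩
      · rw [← hcd, Fin.sum_univ_succ]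
        refine le_trans ?_ (Nat.le_add_left _ _)
        exact Finset.sum_le_sum fun i _ => Nat.mod_le _ _
      · funext x
        exact chi_mod K hm (fun i => c i.succ) x
    · rw [Submodule.span_le]
      rintro _ ⟨b, rfl⟩
      apply Submodule.subset_span
      let c : Fin (n+1) →₀ ℕ :=
        Finsupp.equivFunOnFinite.symm (Fin.cons (d - ∑ i, (b.1 i : ℕ)) (fun i => (b.1 i : ℕ)))
      have hc : ∑ i, c i = d := by
        have := b.2
        rw [Fin.sum_univ_succ]
        simp [c]
        omega
      refine ⟨fun p => eval p.1.rep (monomial c (1:K)) / (p.1.rep 0) ^ d,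
        ⟨monomial c 1, ?_, fun p => rfl⟩, ?_⟩
      · apply isHomogeneous_monomial
        rw [← hc, Finsupp.degree_eq_sum]
      · funext x
        change eval (torMap K n x).1.rep (monomial c (1:K)) / ((torMap K n x).1.rep 0) ^ d = _
        rw [eval_monomial, one_mul, Finsupp.prod_fintype _ _ (by simp), prod_rep K c hc]
        rfl
  rw [hspan, finrank_span_eq_card hv]
  rfl

/-- The parameterized code of order `d` on the projective torus in `ℙ^(s-1)` has
length `(q-1)^(s-1)` and dimension
`Σ_{j=0}^{⌊d/(q-1)⌋} (-1)^j C(s-1,j) C(s-1+d-j(q-1), s-1)`. -/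
theorem stmt_9 (K : Type) [Field K] [Fintype K] (q s d : ℕ)
    (hK : Fintype.card K = q) (hs : 2 ≤ s) (hd : 1 ≤ d) :
    Set.ncard (projTorus K s) = (q - 1) ^ (s - 1) ∧
    (hilbFn K (projTorus K s) (⟨0, by omega⟩ : Fin s) d : ℤ) =
      ∑ j ∈ Finset.range (d / (q - 1) + 1),
        (-1 : ℤ) ^ j * ((s - 1).choose j : ℤ) *
          (((s - 1) + d - j * (q - 1)).choose (s - 1) : ℤ) := by
  classical
  obtain ⟨n, rfl⟩ : ∃ n, s = n + 1 := ⟨s - 1, by omega⟩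
  have hq : 1 < q := hK ▸ Fintype.one_lt_card
  obtain ⟨m, rfl⟩ : ∃ m, q = m + 1 := ⟨q - 1, by omega⟩
  simp only [Nat.add_sub_cancel]
  constructor
  · rw [← Nat.card_coe_set_eq, ← Nat.card_congr (Equiv.ofBijective _ (torMap_bij K n)),
      Nat.card_eq_fintype_card]
    simp [Fintype.card_units, hK]
  · rw [← cnt_formula m n d (by omega), ← dim_eq K hK (by omega)]
    rfl
end

section
/- Let K be a finite field with q elements, q ≥ 3, and let T be the projective torus in ℙ^1 over K. Then for d ≥ 1 the minimum distance of C_T(d) is δ_d = q−1−d if 1 ≤ d ≤ q−3 and δ_d = 1 if d ≥ q−2; moreover C_T(d) is a maximum distance separable code, i.e., δ_d = |T| − dim_K C_T(d) + 1. -/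
open MvPolynomial

noncomputable def slopeT {K : Type} [Field K] (p : Projectivization K (Fin 2 → K)) : K :=
  p.rep 1 / p.rep 0

lemma slopeT_injOn (K : Type) [Field K] : Set.InjOn (slopeT (K := K)) (projTorus K 2) := by
  intro p hp r hr h
  rw [← p.mk_rep, ← r.mk_rep, Projectivization.mk_eq_mk_iff']
  have hp0 := hp 0
  have hr0 := hr 0
  refine ⟨p.rep 0 / r.rep 0, ?_⟩
  unfold slopeT at h
  rw [div_eq_div_iff hp0 hr0] at h
  ext i
  fin_cases i
  · simp [hr0]
  · simp
    field_simp
    linear_combination -h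

lemma slopeT_image (K : Type) [Field K] : slopeT '' (projTorus K 2) = {x : K | x ≠ 0} := by
  ext x
  constructor
  · rintro ⟨p, hp, rfl⟩
    exact div_ne_zero (hp 1) (hp 0)
  · intro hx
    have hv : (![1, x] : Fin 2 → K) ≠ 0 := fun h => by simpa using congrFun h 0
    obtain ⟨a, ha⟩ := Projectivization.exists_smul_eq_mk_rep K _ hv
    refine ⟨Projectivization.mk K _ hv, ?_, ?_⟩
    · intro i
      rw [← ha]
      have hx' : x ≠ 0 := hx
      fin_cases i
      · simp [Units.smul_def]
      · simp [Units.smul_def, hx']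
    · unfold slopeT
      rw [← ha]
      simp [Units.smul_def]

lemma homog_to_poly {K : Type} [Field K] {d : ℕ} {F : MvPolynomial (Fin 2) K}
    (hF : F.IsHomogeneous d) : ∃ f : Polynomial K, f.natDegree ≤ d ∧
      ∀ x : Fin 2 → K, x 0 ≠ 0 → eval x F = (x 0) ^ d * f.eval (x 1 / x 0) := by
  refine ⟨aeval ![1, Polynomial.X] F, ?_, ?_⟩
  · have := aeval_natDegree_le (n := 1) F hF.totalDegree_le ![1, Polynomial.X] (by
      intro i; fin_cases i <;> simp)
    simpa using this
  · intro x hx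
    have h1 : ((aeval ![1, Polynomial.X] F : Polynomial K)).eval (x 1 / x 0)
        = eval ![1, x 1 / x 0] F := by
      rw [← Polynomial.coe_evalRingHom, aeval_def, hom_eval₂]
      unfold MvPolynomial.eval
      rw [coe_eval₂Hom]
      congr 1
      · ext; simp
      · ext i; fin_cases i <;> simp
    rw [h1, eval_eq, eval_eq, Finset.mul_sum]
    refine Finset.sum_congr rfl fun m hm => ?_
    have hdeg : m 0 + m 1 = d := by
      have := hF (mem_support_iff.mp hm)
      rw [Finsupp.weight_apply, Finsupp.sum_fintype _ _ (by simp)] at this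
      simpa using this
    have e1 : ∀ y : Fin 2 → K, ∏ i ∈ m.support, y i ^ m i = y 0 ^ m 0 * y 1 ^ m 1 := by
      intro y
      rw [← Fin.prod_univ_two (fun i => y i ^ m i)]
      refine Finset.prod_subset (Finset.subset_univ _) fun i _ hi => ?_
      rw [Finsupp.notMem_support_iff.mp hi, pow_zero]
    rw [e1, e1, ← hdeg]
    simp only [Matrix.cons_val_zero, Matrix.cons_val_one, one_pow, one_mul, div_pow, pow_add]
    field_simp

lemma poly_to_homog {K : Type} [Field K] {d : ℕ} {f : Polynomial K} (hf : f.natDegree ≤ d) :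
    ∃ F : MvPolynomial (Fin 2) K, F.IsHomogeneous d ∧
      ∀ x : Fin 2 → K, x 0 ≠ 0 → eval x F = (x 0) ^ d * f.eval (x 1 / x 0) := by
  refine ⟨∑ i ∈ Finset.range (d + 1), C (f.coeff i) * (X 0 ^ (d - i) * X 1 ^ i), ?_, ?_⟩
  · refine IsHomogeneous.sum _ _ _ fun i hi => ?_
    have hi' : i ≤ d := by simpa [Nat.lt_succ_iff] using hi
    have := (isHomogeneous_C (Fin 2) (f.coeff i)).mul
      (((isHomogeneous_X K (0 : Fin 2)).pow (d - i)).mul ((isHomogeneous_X K (1 : Fin 2)).pow i))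
    convert this using 1
    omega
  · intro x hx
    rw [Polynomial.eval_eq_sum_range' (Nat.lt_succ_of_le hf), map_sum, Finset.mul_sum]
    refine Finset.sum_congr rfl fun i hi => ?_
    have hi' : i ≤ d := by simpa [Nat.lt_succ_iff] using hi
    obtain ⟨k, rfl⟩ := Nat.exists_eq_add_of_le hi'
    simp only [map_mul, map_pow, eval_C, eval_X, Nat.add_sub_cancel_left, pow_add, div_pow]
    field_simp

lemma ncard_torus (K : Type) [Field K] [Fintype K] :
    (projTorus K 2).ncard = Fintype.card K - 1 := by
  classical
  rw [← (slopeT_injOn K).ncard_image, slopeT_image]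
  have : {x : K | x ≠ 0} = ((Finset.univ.erase 0 : Finset K) : Set K) := by ext; simp
  rw [this, Set.ncard_coe_finset]
  simp

lemma ncard_nonzero {K : Type} [Field K] [Fintype K] [DecidableEq K] {d : ℕ}
    {F : MvPolynomial (Fin 2) K} {f : Polynomial K}
    (h : ∀ x : Fin 2 → K, x 0 ≠ 0 → eval x F = (x 0) ^ d * f.eval (x 1 / x 0)) :
    Set.ncard {p ∈ projTorus K 2 | eval p.rep F ≠ 0} =
      ((Finset.univ.erase (0 : K)).filter (fun x => f.eval x ≠ 0)).card := by
  rw [← ((slopeT_injOn K).mono (Set.sep_subset _ _)).ncard_image, ← Set.ncard_coe_finset]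
  congr 1
  ext x
  have himg := Set.ext_iff.mp (slopeT_image K) x
  have key : ∀ p ∈ projTorus K 2, (eval p.rep F ≠ 0 ↔ f.eval (slopeT p) ≠ 0) := by
    intro p hp
    rw [h _ (hp 0)]
    have := hp 0
    simp [slopeT, this]
  simp only [Set.mem_image, Set.mem_setOf_eq, Finset.coe_filter, Finset.mem_erase,
    Finset.mem_univ, and_true] at himg ⊢
  constructor
  · rintro ⟨p, ⟨hp, hne⟩, rfl⟩
    exact ⟨himg.mp ⟨p, hp, rfl⟩, (key p hp).mp hne⟩
  · rintro ⟨hx, hne⟩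
    obtain ⟨p, hp, rfl⟩ := himg.mpr hx
    exact ⟨p, ⟨hp, (key p hp).mpr hne⟩, rfl⟩

lemma minDist_eq_s10 (K : Type) [Field K] [Fintype K] (d : ℕ) (hq : 3 ≤ Fintype.card K) :
    minDist K (projTorus K 2) d = Fintype.card K - 1 - min d (Fintype.card K - 2) := by
  classical
  have hE : (Finset.univ.erase (0 : K)).card = Fintype.card K - 1 := by simp
  apply IsLeast.csInf_eq
  constructor
  · obtain ⟨S, hS, hSc⟩ := Finset.exists_subset_card_eq
      (s := Finset.univ.erase (0 : K)) (n := min d (Fintype.card K - 2)) (by omega)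
    have hdeg : (∏ a ∈ S, (Polynomial.X - Polynomial.C a)).natDegree ≤ d := by
      rw [Polynomial.natDegree_prod_of_monic _ _ (fun a _ => Polynomial.monic_X_sub_C a)]
      simp; omega
    obtain ⟨F, hF, hFe⟩ := poly_to_homog hdeg
    have hn := ncard_nonzero hFe
    have hfil : (Finset.univ.erase (0 : K)).filter
        (fun x => (∏ a ∈ S, (Polynomial.X - Polynomial.C a)).eval x ≠ 0)
        = Finset.univ.erase (0 : K) \ S := by
      ext x
      simp only [Finset.mem_filter, Finset.mem_sdiff, Polynomial.eval_prod,
        Finset.prod_ne_zero_iff, Polynomial.eval_sub, Polynomial.eval_X, Polynomial.eval_C,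
        sub_ne_zero]
      refine and_congr_right fun _ => ⟨fun h hx => h x hx rfl, fun h a ha e => h (e ▸ ha)⟩
    rw [hfil, Finset.card_sdiff_of_subset hS, hE, hSc] at hn
    refine ⟨F, hF, ?_, hn.symm⟩
    have : {p ∈ projTorus K 2 | eval p.rep F ≠ 0}.Nonempty :=
      Set.nonempty_of_ncard_ne_zero (by omega)
    obtain ⟨p, hp, hpe⟩ := this
    exact ⟨p, hp, hpe⟩
  · rintro n ⟨F, hF, ⟨p, hp, hpe⟩, rfl⟩
    obtain ⟨f, hfd, hfe⟩ := homog_to_poly hF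
    rw [ncard_nonzero hfe]
    have hx : slopeT p ∈ (Finset.univ.erase (0 : K)).filter (fun x => f.eval x ≠ 0) := by
      rw [hfe _ (hp 0)] at hpe
      simp only [Finset.mem_filter, Finset.mem_erase, Finset.mem_univ, and_true]
      exact ⟨div_ne_zero (hp 1) (hp 0), right_ne_zero_of_mul hpe⟩
    have h1 := Finset.card_pos.mpr ⟨_, hx⟩
    have hf0 : f ≠ 0 := by
      rintro rfl
      simp at hx
    have h2 := Finset.card_filter_add_card_filter_not (s := Finset.univ.erase (0 : K))
      (fun x => f.eval x ≠ 0)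
    have h3 : ((Finset.univ.erase (0 : K)).filter (fun x => ¬ f.eval x ≠ 0)).card ≤ d := by
      have : (Finset.univ.erase (0 : K)).filter (fun x => ¬ f.eval x ≠ 0) ⊆ f.roots.toFinset := by
        intro x hx
        simp only [Finset.mem_filter, not_not] at hx
        simp [hf0, hx.2]
      exact ((Finset.card_le_card this).trans (Multiset.toFinset_card_le _)).trans
        ((Polynomial.card_roots' f).trans hfd)
    omega

noncomputable def evT (K : Type) [Field K] : Polynomial K →ₗ[K] (↥(projTorus K 2) → K) :=
  LinearMap.pi fun p => Polynomial.leval (slopeT p.1)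

lemma hilb_eq (K : Type) [Field K] [Fintype K] (d : ℕ) (hq : 3 ≤ Fintype.card K) :
    hilbFn K (projTorus K 2) (0 : Fin 2) d = min (d + 1) (Fintype.card K - 1) := by
  classical
  have hfin : Finite ↥(projTorus K 2) :=
    Set.finite_of_ncard_ne_zero (by rw [ncard_torus]; omega)
  have := Fintype.ofFinite ↥(projTorus K 2)
  have hcard : Fintype.card ↥(projTorus K 2) = Fintype.card K - 1 := by
    rw [← ncard_torus, ← Nat.card_coe_set_eq, Nat.card_eq_fintype_card]
  have hinj : Function.Injective (fun p : ↥(projTorus K 2) => slopeT p.1) :=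
    fun a b h => Subtype.ext (slopeT_injOn K a.2 b.2 h)
  have hset : {f : ↥(projTorus K 2) → K | ∃ F : MvPolynomial (Fin 2) K, F.IsHomogeneous d ∧
      ∀ p : ↥(projTorus K 2), f p = eval p.1.rep F / (p.1.rep 0) ^ d}
      = ((Polynomial.degreeLT K (d + 1)).map (evT K) : Set _) := by
    ext g
    simp only [Set.mem_setOf_eq, SetLike.mem_coe, Submodule.mem_map]
    constructor
    · rintro ⟨F, hF, hg⟩
      obtain ⟨f, hfd, hfe⟩ := homog_to_poly hF
      refine ⟨f, ?_, ?_⟩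
      · rw [Polynomial.mem_degreeLT]
        exact Polynomial.degree_le_natDegree.trans_lt (by exact_mod_cast Nat.lt_succ_of_le hfd)
      · ext p
        have h0 := p.2 0
        rw [hg, hfe _ h0, mul_div_cancel_left₀ _ (pow_ne_zero _ h0)]
        rfl
    · rintro ⟨f, hf, rfl⟩
      have hfd : f.natDegree ≤ d := by
        rw [Polynomial.degreeLT_succ_eq_degreeLE, Polynomial.mem_degreeLE] at hf
        exact Polynomial.natDegree_le_of_degree_le hf
      obtain ⟨F, hF, hFe⟩ := poly_to_homog hfd
      refine ⟨F, hF, fun p => ?_⟩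
      have h0 := p.2 0
      rw [hFe _ h0, mul_div_cancel_left₀ _ (pow_ne_zero _ h0)]
      rfl
  unfold hilbFn
  rw [hset, Submodule.span_eq]
  rcases le_total (d + 1) (Fintype.card K - 1) with hle | hle
  · rw [min_eq_left hle]
    have hi : Function.Injective ((evT K).domRestrict (Polynomial.degreeLT K (d + 1))) := by
      rw [injective_iff_map_eq_zero]
      rintro ⟨f, hf⟩ h
      rw [Polynomial.mem_degreeLT] at hf
      refine Subtype.ext (Polynomial.eq_zero_of_degree_lt_of_eval_index_eq_zero
        (s := Finset.univ) (v := fun p : ↥(projTorus K 2) => slopeT p.1) hinj.injOn ?_ ?_)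
      · rw [Finset.card_univ, hcard]
        exact hf.trans_le (by exact_mod_cast hle)
      · intro p _
        exact congrFun h p
    rw [← LinearMap.range_domRestrict, LinearMap.finrank_range_of_inj hi,
      (Polynomial.degreeLTEquiv K (d + 1)).finrank_eq]
    simp
  · rw [min_eq_right hle]
    have : (Polynomial.degreeLT K (d + 1)).map (evT K) = ⊤ := by
      rw [eq_top_iff]
      intro g _
      refine ⟨Lagrange.interpolate Finset.univ (fun p : ↥(projTorus K 2) => slopeT p.1) g, ?_, ?_⟩
      · rw [SetLike.mem_coe, Polynomial.mem_degreeLT]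
        refine (Lagrange.degree_interpolate_lt _ hinj.injOn).trans_le ?_
        rw [Finset.card_univ, hcard]
        exact_mod_cast hle
      · ext p
        exact Lagrange.eval_interpolate_at_node (v := fun p : ↥(projTorus K 2) => slopeT p.1)
          g hinj.injOn (Finset.mem_univ p)
    rw [this, finrank_top, Module.finrank_fintype_fun_eq_card, hcard]

/-- For the projective torus `T ⊆ ℙ^1` over a finite field with `q ≥ 3` elements, the
minimum distance of `C_T(d)` is `q-1-d` for `1 ≤ d ≤ q-3` and `1` for `d ≥ q-2`;
moreover `C_T(d)` is MDS: `δ_d = |T| - dim C_T(d) + 1`. -/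
theorem stmt_10 (K : Type) [Field K] [Fintype K] (q d : ℕ)
    (hK : Fintype.card K = q) (hq : 3 ≤ q) (hd : 1 ≤ d) :
    (d ≤ q - 3 → minDist K (projTorus K 2) d = q - 1 - d) ∧
    (q - 2 ≤ d → minDist K (projTorus K 2) d = 1) ∧
    minDist K (projTorus K 2) d =
      Set.ncard (projTorus K 2) - hilbFn K (projTorus K 2) (0 : Fin 2) d + 1 := by
  subst hK
  rw [minDist_eq_s10 K d hq, hilb_eq K d hq, ncard_torus]
  omega
end

section
/- Let K be a finite field with q elements, q ≥ 3, and let T be the projective torus in ℙ^2 over K. Then for d ≥ 1 the minimum distance of C_T(d) is: δ_d = (q−1)^2 − d(q−1) if 1 ≤ d ≤ q−2; δ_d = 2q − d − 3 if q−1 ≤ d ≤ 2q−5; and δ_d = 1 if d ≥ 2q−4. -/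
open MvPolynomial

namespace TorusAux

lemma eval_scale {K : Type} [Field K] {F : MvPolynomial (Fin 3) K} {d : ℕ}
    (hF : F.IsHomogeneous d) (a : K) (x : Fin 3 → K) :
    eval (a • x) F = a ^ d * eval x F := by
  rw [eval_eq', eval_eq', Finset.mul_sum]
  refine Finset.sum_congr rfl fun s hs => ?_
  have h := hF.degree_eq_sum_deg_support hs
  have h2 : d = ∑ i, s i := by
    rw [h]
    exact Finset.sum_subset (Finset.subset_univ _) (by simp)
  rw [h2, ← Finset.prod_pow_eq_pow_sum]
  simp only [Pi.smul_apply, smul_eq_mul, mul_pow, Finset.prod_mul_distrib]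
  ring

/-- the affine chart point -/
def pt {K : Type} [Field K] (w : Kˣ × Kˣ) : Fin 3 → K := ![(w.1 : K), (w.2 : K), 1]

lemma pt_ne {K : Type} [Field K] (w : Kˣ × Kˣ) : pt w ≠ 0 := by
  intro h
  have := congrFun h 2
  simp [pt] at this

/-- the chart -/
def chart {K : Type} [Field K] (w : Kˣ × Kˣ) : Projectivization K (Fin 3 → K) :=
  Projectivization.mk K (pt w) (pt_ne w)

lemma chart_inj {K : Type} [Field K] : Function.Injective (chart (K := K)) := by
  intro w w' h
  obtain ⟨a, ha⟩ := (Projectivization.mk_eq_mk_iff' K _ _ _ _).1 h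
  have h0 := congrFun ha 0
  have h1 := congrFun ha 1
  have h2 := congrFun ha 2
  simp [pt] at h0 h1 h2
  subst h2
  ext <;> simp_all

lemma chart_rep {K : Type} [Field K] (w : Kˣ × Kˣ) :
    ∃ a : Kˣ, (chart w).rep = (a : K) • pt w := by
  obtain ⟨a, ha⟩ := Projectivization.exists_smul_eq_mk_rep K (pt w) (pt_ne w)
  exact ⟨a, ha.symm⟩

lemma chart_mem {K : Type} [Field K] (w : Kˣ × Kˣ) : chart w ∈ projTorus K 3 := by
  obtain ⟨a, ha⟩ := chart_rep w
  intro i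
  rw [ha]
  fin_cases i <;> simp [pt]

lemma chart_surj {K : Type} [Field K] {p : Projectivization K (Fin 3 → K)}
    (hp : p ∈ projTorus K 3) : ∃ w, chart w = p := by
  have hp' : ∀ i, p.rep i ≠ 0 := hp
  refine ⟨(Units.mk0 (p.rep 0 / p.rep 2) (div_ne_zero (hp' 0) (hp' 2)),
    Units.mk0 (p.rep 1 / p.rep 2) (div_ne_zero (hp' 1) (hp' 2))), ?_⟩
  conv_rhs => rw [← Projectivization.mk_rep p]
  refine (Projectivization.mk_eq_mk_iff' K _ _ _ _).2 ⟨(p.rep 2)⁻¹, ?_⟩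
  have := hp' 2
  ext i
  fin_cases i <;> simp [pt] <;> field_simp

lemma eval_chart {K : Type} [Field K] {F : MvPolynomial (Fin 3) K} {d : ℕ}
    (hF : F.IsHomogeneous d) (w : Kˣ × Kˣ) :
    eval (chart w).rep F ≠ 0 ↔ eval (pt w) F ≠ 0 := by
  obtain ⟨a, ha⟩ := chart_rep w
  rw [ha, eval_scale hF]
  simp

open Classical in
/-- the nonzeros in the chart -/
noncomputable def nz {K : Type} [Field K] [Fintype K] (F : MvPolynomial (Fin 3) K) :
    Finset (Kˣ × Kˣ) := Finset.univ.filter fun w => eval (pt w) F ≠ 0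

lemma mem_nz {K : Type} [Field K] [Fintype K] {F : MvPolynomial (Fin 3) K} {w : Kˣ × Kˣ} :
    w ∈ nz F ↔ eval (pt w) F ≠ 0 := by
  simp [nz]

lemma ncard_eq {K : Type} [Field K] [Fintype K] {F : MvPolynomial (Fin 3) K} {d : ℕ}
    (hF : F.IsHomogeneous d) :
    Set.ncard {p ∈ projTorus K 3 | eval p.rep F ≠ 0} = (nz F).card := by
  have : {p ∈ projTorus K 3 | eval p.rep F ≠ 0} = chart '' (nz F : Set (Kˣ × Kˣ)) := by
    ext p
    constructor
    · rintro ⟨hp, h⟩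
      obtain ⟨w, rfl⟩ := chart_surj hp
      exact ⟨w, by simpa [mem_nz] using (eval_chart hF w).1 h, rfl⟩
    · rintro ⟨w, hw, rfl⟩
      exact ⟨chart_mem w, (eval_chart hF w).2 (mem_nz.1 (by exact_mod_cast hw))⟩
  rw [this, Set.ncard_image_of_injective _ chart_inj, Set.ncard_coe_finset]

lemma minDist_eq {K : Type} [Field K] [Fintype K] {d m : ℕ}
    (h1 : ∃ F : MvPolynomial (Fin 3) K, F.IsHomogeneous d ∧ (nz F).card = m) (hm : 0 < m)
    (h2 : ∀ F : MvPolynomial (Fin 3) K, F.IsHomogeneous d → (nz F).Nonempty → m ≤ (nz F).card) :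
    minDist K (projTorus K 3) d = m := by
  apply le_antisymm
  · obtain ⟨F, hF, h⟩ := h1
    refine Nat.sInf_le ⟨F, hF, ?_, ?_⟩
    · have : (nz F).Nonempty := by rw [← Finset.card_pos]; omega
      obtain ⟨w, hw⟩ := this
      exact ⟨chart w, chart_mem w, (eval_chart hF w).2 (mem_nz.1 hw)⟩
    · rw [ncard_eq hF, h]
  · have key : ∀ n ∈ {n | ∃ F : MvPolynomial (Fin 3) K, F.IsHomogeneous d ∧
        (∃ p ∈ projTorus K 3, eval p.rep F ≠ 0) ∧
        n = Set.ncard {p ∈ projTorus K 3 | eval p.rep F ≠ 0}}, m ≤ n := by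
      rintro n ⟨F, hF, ⟨p, hp, hpF⟩, rfl⟩
      rw [ncard_eq hF]
      apply h2 F hF
      obtain ⟨w, rfl⟩ := chart_surj hp
      exact ⟨w, mem_nz.2 ((eval_chart hF w).1 hpF)⟩
    refine key _ (Nat.sInf_mem ?_)
    obtain ⟨F, hF, h⟩ := h1
    have : (nz F).Nonempty := by rw [← Finset.card_pos]; omega
    obtain ⟨w, hw⟩ := this
    exact ⟨_, F, hF, ⟨chart w, chart_mem w, (eval_chart hF w).2 (mem_nz.1 hw)⟩, rfl⟩

lemma lin_hom {K : Type} [Field K] (i : Fin 3) (a : K) :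
    (X i - C a * X 2 : MvPolynomial (Fin 3) K).IsHomogeneous 1 :=
  (isHomogeneous_X K i).sub (isHomogeneous_C_mul_X a 2)

lemma exists_poly {K : Type} [Field K] [Fintype K] [DecidableEq K] (a b k : ℕ)
    (ha : a ≤ Fintype.card Kˣ) (hb : b ≤ Fintype.card Kˣ) :
    ∃ F : MvPolynomial (Fin 3) K, F.IsHomogeneous (a + b + k) ∧
      (nz F).card = (Fintype.card Kˣ - a) * (Fintype.card Kˣ - b) := by
  classical
  obtain ⟨A, -, hA⟩ := Finset.exists_subset_card_eq (s := (Finset.univ : Finset Kˣ)) ha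
  obtain ⟨B, -, hB⟩ := Finset.exists_subset_card_eq (s := (Finset.univ : Finset Kˣ)) hb
  refine ⟨(∏ u ∈ A, (X 0 - C (u : K) * X 2)) * (∏ u ∈ B, (X 1 - C (u : K) * X 2)) * X 2 ^ k,
    ?_, ?_⟩
  · refine IsHomogeneous.mul (IsHomogeneous.mul ?_ ?_) (isHomogeneous_X_pow 2 k)
    · have := IsHomogeneous.prod A (fun u : Kˣ => (X 0 - C (u : K) * X 2 : MvPolynomial (Fin 3) K))
        (fun _ => 1) (fun u _ => lin_hom 0 _)
      simpa [hA] using this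
    · have := IsHomogeneous.prod B (fun u : Kˣ => (X 1 - C (u : K) * X 2 : MvPolynomial (Fin 3) K))
        (fun _ => 1) (fun u _ => lin_hom 1 _)
      simpa [hB] using this
  · rw [← hA, ← hB, ← Finset.card_compl, ← Finset.card_compl, ← Finset.card_product]
    congr 1
    ext w
    rw [mem_nz]
    simp [pt, eval_prod, Finset.prod_eq_zero_iff, sub_eq_zero, Units.ext_iff]
    constructor
    · rintro ⟨h1, h2⟩
      exact ⟨fun h => h1 _ h rfl, fun h => h2 _ h rfl⟩
    · rintro ⟨h1, h2⟩
      exact ⟨fun x hx h => h1 (by rwa [Units.ext h]), fun x hx h => h2 (by rwa [Units.ext h])⟩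

lemma bound_one {K : Type} [Field K] [Fintype K] [DecidableEq K] {d : ℕ} {F : MvPolynomial (Fin 3) K}
    (hF : F.IsHomogeneous d) {w : Kˣ × Kˣ} (h : nz F = {w}) :
    2 * Fintype.card Kˣ ≤ d + 2 := by
  classical
  by_contra hlt
  push Not at hlt
  have hs : ∑ v : Kˣ × Kˣ, eval (pt v) F * (v.1 * v.2 : K) = eval (pt w) F * (w.1 * w.2 : K) := by
    apply Finset.sum_eq_single w
    · intro v _ hv
      have : v ∉ nz F := by rw [h]; simpa using hv
      rw [mem_nz, not_not] at this
      rw [this, zero_mul]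
    · simp
  have h0 : ∑ v : Kˣ × Kˣ, eval (pt v) F * (v.1 * v.2 : K) = 0 := by
    simp only [eval_eq', Finset.sum_mul]
    rw [Finset.sum_comm]
    refine Finset.sum_eq_zero fun s hs => ?_
    have hdeg : d = s 0 + s 1 + s 2 := by
      rw [hF.degree_eq_sum_deg_support hs, ← Fin.sum_univ_three]
      exact Finset.sum_subset (Finset.subset_univ _) (by simp)
    have e : ∀ v : Kˣ × Kˣ, (coeff s F * ∏ i, pt v i ^ s i) * (v.1 * v.2 : K)
        = coeff s F * ((v.1 : K) ^ (s 0 + 1) * (v.2 : K) ^ (s 1 + 1)) := by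
      intro v
      simp [Fin.prod_univ_three, pt]
      ring
    simp only [e]
    rw [← Finset.mul_sum, Fintype.sum_prod_type]
    dsimp only
    rw [← Finset.sum_mul_sum,
      FiniteField.sum_pow_units, FiniteField.sum_pow_units, ← Fintype.card_units]
    by_cases c0 : Fintype.card Kˣ ∣ s 0 + 1
    · by_cases c1 : Fintype.card Kˣ ∣ s 1 + 1
      · have := Nat.le_of_dvd (by omega) c0
        have := Nat.le_of_dvd (by omega) c1
        omega
      · simp [c1]
    · simp [c0]
  rw [h0] at hs
  have : eval (pt w) F ≠ 0 := mem_nz.1 (by rw [h]; simp)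
  have := mul_ne_zero this (mul_ne_zero w.1.ne_zero w.2.ne_zero)
  exact this hs.symm

lemma exists_sep {K : Type} [Field K] (w v : Kˣ × Kˣ) (h : v ≠ w) :
    ∃ L : MvPolynomial (Fin 3) K, L.IsHomogeneous 1 ∧ eval (pt v) L = 0 ∧ eval (pt w) L ≠ 0 := by
  by_cases h1 : v.1 = w.1
  · have h2 : v.2 ≠ w.2 := fun h2 => h (Prod.ext h1 h2)
    refine ⟨X 1 - C (v.2 : K) * X 2, lin_hom _ _, by simp [pt], ?_⟩
    simp [pt, sub_eq_zero]
    exact fun h => h2 (Units.ext h.symm)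
  · refine ⟨X 0 - C (v.1 : K) * X 2, lin_hom _ _, by simp [pt], ?_⟩
    simp [pt, sub_eq_zero]
    exact fun h => h1 (Units.ext h.symm)

lemma bound_two {K : Type} [Field K] [Fintype K] [DecidableEq K] {d : ℕ} {F : MvPolynomial (Fin 3) K}
    (hF : F.IsHomogeneous d) (h : (nz F).Nonempty) :
    2 * Fintype.card Kˣ ≤ d + (nz F).card + 1 := by
  classical
  obtain ⟨w, hw⟩ := h
  have hsep : ∀ v : Kˣ × Kˣ, ∃ L : MvPolynomial (Fin 3) K, v ≠ w →
      L.IsHomogeneous 1 ∧ eval (pt v) L = 0 ∧ eval (pt w) L ≠ 0 := by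
    intro v
    by_cases hv : v = w
    · exact ⟨0, fun h => absurd hv h⟩
    · obtain ⟨L, hL⟩ := exists_sep w v hv
      exact ⟨L, fun _ => hL⟩
  choose L hL using hsep
  have hG : (F * ∏ v ∈ (nz F).erase w, L v).IsHomogeneous (d + ((nz F).card - 1)) := by
    refine hF.mul ?_
    have := IsHomogeneous.prod ((nz F).erase w) L (fun _ => 1)
      (fun v hv => (hL v (Finset.ne_of_mem_erase hv)).1)
    simpa [Finset.card_erase_of_mem hw] using this
  have := bound_one hG (w := w) (by
    ext v
    rw [mem_nz, Finset.mem_singleton, map_mul, eval_prod]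
    constructor
    · intro hv
      by_contra hne
      have h1 : v ∈ nz F := mem_nz.2 (left_ne_zero_of_mul hv)
      apply right_ne_zero_of_mul hv
      exact Finset.prod_eq_zero (Finset.mem_erase.2 ⟨hne, h1⟩) (hL v hne).2.1
    · rintro rfl
      refine mul_ne_zero (mem_nz.1 hw) (Finset.prod_ne_zero_iff.2 fun u hu => ?_)
      exact (hL u (Finset.ne_of_mem_erase hu)).2.2)
  have hpos : 0 < (nz F).card := Finset.card_pos.2 ⟨w, hw⟩
  omega

lemma bound_sz {K : Type} [Field K] [Fintype K] [DecidableEq K] {d : ℕ} {F : MvPolynomial (Fin 3) K}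
    (hF : F.IsHomogeneous d) (h : (nz F).Nonempty) :
    Fintype.card Kˣ ^ 2 ≤ (nz F).card + d * Fintype.card Kˣ := by
  classical
  obtain ⟨w, hw⟩ := h
  have hF0 : F ≠ 0 := by
    rintro rfl
    simp [mem_nz] at hw
  set n := Fintype.card Kˣ with hn
  have hnpos : 0 < n := Fintype.card_pos
  set S : Finset K := Finset.univ.image (fun u : Kˣ => (u : K)) with hS
  have hSc : S.card = n := by
    rw [hS, Finset.card_image_of_injective _ Units.val_injective, Finset.card_univ]
  have sz := schwartz_zippel_totalDegree hF0 S
  rw [hSc, hF.totalDegree hF0, div_le_div_iff₀ (by positivity) (by positivity)] at sz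
  have hz : n * (n ^ 2 - (nz F).card) ≤
      (Finset.filter (fun f => eval f F = 0) (Fintype.piFinset fun _ : Fin 3 => S)).card := by
    have : n * (n ^ 2 - (nz F).card) = (Finset.univ ×ˢ (nz F)ᶜ : Finset (Kˣ × (Kˣ × Kˣ))).card := by
      rw [Finset.card_product, Finset.card_compl, Fintype.card_prod, Finset.card_univ, ← hn, sq]
    rw [this]
    apply Finset.card_le_card_of_injOn (fun x => (x.1 : K) • pt x.2)
    · rintro ⟨a, v⟩ hv
      simp [mem_nz] at hv
      simp only [Finset.coe_filter, Set.mem_ofPred_eq, Fintype.mem_piFinset]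
      refine ⟨fun i => ?_, ?_⟩
      · rw [hS, Finset.mem_image]
        fin_cases i
        · exact ⟨a * v.1, by simp, by simp [pt]⟩
        · exact ⟨a * v.2, by simp, by simp [pt]⟩
        · exact ⟨a, by simp, by simp [pt]⟩
      · rw [eval_scale hF, hv, mul_zero]
    · rintro ⟨a, v⟩ - ⟨b, u⟩ - he
      have h0 := congrFun he 0
      have h1 := congrFun he 1
      have h2 := congrFun he 2
      simp [pt] at h0 h1 h2
      obtain rfl := Units.ext h2
      simp at h0 h1
      ext <;> simp [h0, h1]
  have sz' : (Finset.filter (fun f => eval f F = 0) (Fintype.piFinset fun _ : Fin 3 => S)).card * n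
      ≤ d * n ^ 3 := by exact_mod_cast sz
  have h3 : (n * n) * (n ^ 2 - (nz F).card) ≤ (n * n) * (d * n) := by nlinarith
  have := Nat.le_of_mul_le_mul_left h3 (by positivity)
  omega

end TorusAux

/-- For the projective torus `T ⊆ ℙ^2` over a finite field with `q ≥ 3` elements, the
minimum distance of `C_T(d)` is `(q-1)^2 - d(q-1)` for `1 ≤ d ≤ q-2`, `2q-d-3` for
`q-1 ≤ d ≤ 2q-5`, and `1` for `d ≥ 2q-4`. -/
theorem stmt_11 (K : Type) [Field K] [Fintype K] (q d : ℕ)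
    (hK : Fintype.card K = q) (hq : 3 ≤ q) (hd : 1 ≤ d) :
    (d ≤ q - 2 → minDist K (projTorus K 3) d = (q - 1) ^ 2 - d * (q - 1)) ∧
    (q - 1 ≤ d → d ≤ 2 * q - 5 → minDist K (projTorus K 3) d = 2 * q - d - 3) ∧
    (2 * q - 4 ≤ d → minDist K (projTorus K 3) d = 1) := by
  classical
  have hn : Fintype.card Kˣ = q - 1 := by rw [Fintype.card_units, hK]
  refine ⟨fun h => ?_, fun h h' => ?_, fun h => ?_⟩
  · have hlt : d * (q - 1) < (q - 1) ^ 2 := by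
      rw [sq]; exact Nat.mul_lt_mul_of_pos_right (by omega) (by omega)
    refine TorusAux.minDist_eq ?_ (by omega) fun F hF hne => ?_
    · obtain ⟨F, hF, hc⟩ := TorusAux.exists_poly (K := K) d 0 0 (by omega) (by omega)
      refine ⟨F, by simpa using hF, ?_⟩
      rw [hc, hn, Nat.sub_zero, Nat.sub_mul, sq]
    · have := TorusAux.bound_sz hF hne
      rw [hn] at this
      omega
  · refine TorusAux.minDist_eq ?_ (by omega) fun F hF hne => ?_
    · obtain ⟨F, hF, hc⟩ := TorusAux.exists_poly (K := K) (q - 2) (d - (q - 2)) 0 (by omega) (by omega)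
      refine ⟨F, ?_, ?_⟩
      · convert hF using 1; omega
      · rw [hc, hn, show q - 1 - (q - 2) = 1 by omega]; omega
    · have := TorusAux.bound_two hF hne
      omega
  · refine TorusAux.minDist_eq ?_ (by omega) fun F hF hne => Finset.card_pos.2 hne
    obtain ⟨F, hF, hc⟩ := TorusAux.exists_poly (K := K) (q - 2) (q - 2) (d - (2 * q - 4))
      (by omega) (by omega)
    refine ⟨F, ?_, ?_⟩
    · convert hF using 1; omega
    · rw [hc, hn, show q - 1 - (q - 2) = 1 by omega]
end

section
/- Let K be a finite field with q elements and let k, ℓ ≥ 2. Let X ⊆ ℙ^{kℓ−1} be the algebraic toric set parameterized by the edges of the complete bipartite graph K_{k,ℓ}, i.e., X = {[(a_i·b_j)_{1≤i≤k, 1≤j≤ℓ}] : a ∈ (K*)^k, b ∈ (K*)^ℓ}, and let T_1 ⊆ ℙ^{ℓ−1} and T_2 ⊆ ℙ^{k−1} be projective tori. Then for every d ≥ 1: the length of C_X(d) equals (q−1)^{k+ℓ−2}; the dimension of C_X(d) equals H_{T_1}(d)·H_{T_2}(d); and the minimum distance of C_X(d) equals δ_1·δ_2, where δ_i is the minimum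 distance of C_{T_i}(d). -/
open MvPolynomial

namespace St12

variable {K : Type} [Field K]

lemma mono_form {ι : Type} {d : ℕ} (m : ι →₀ ℕ) (hm : m.degree = d) :
    ∃ c : Fin d → ι, ∀ x : ι → K, (∏ i ∈ m.support, x i ^ m i) = ∏ n, x (c n) := by
  classical
  subst hm
  have hlen : (Finsupp.toMultiset m).toList.length = m.degree := by
    rw [Multiset.length_toList, Finsupp.card_toMultiset]
    rfl
  refine ⟨fun n => (Finsupp.toMultiset m).toList.get (n.cast hlen.symm), fun x => ?_⟩
  have h1 : (∏ i ∈ m.support, x i ^ m i) = ((Finsupp.toMultiset m).map x).prod := by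
    rw [Finsupp.toMultiset_map, Finsupp.prod_toMultiset,
      Finsupp.prod_mapDomain_index (by simp) (by intros; exact pow_add _ _ _)]
    rfl
  rw [h1]
  conv_lhs => rw [← Multiset.coe_toList (Finsupp.toMultiset m)]
  rw [Multiset.map_coe, Multiset.prod_coe]
  rw [← Fin.prod_univ_fun_getElem]
  exact (Fintype.prod_equiv (finCongr hlen) _ _ (fun n => by simp))

/-- monomial functions -/
def mon {ι A : Type} (φ : A → ι → K) (d : ℕ) (c : Fin d → ι) : A → K :=
  fun a => ∏ n, φ a (c n)

/-- code -/
def code {ι A : Type} (φ : A → ι → K) (d : ℕ) : Submodule K (A → K) :=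
  Submodule.span K (Set.range (mon φ d))

lemma mem_code {ι A : Type} (φ : A → ι → K) (d : ℕ) (f : A → K) :
    f ∈ code φ d ↔ ∃ F : MvPolynomial ι K, F.IsHomogeneous d ∧ ∀ a, f a = eval (φ a) F := by
  constructor
  · intro hf
    induction hf using Submodule.span_induction with
    | mem f hf =>
      obtain ⟨c, rfl⟩ := hf
      refine ⟨∏ n, X (c n), ?_, fun a => by simp [mon, map_prod]⟩
      have := MvPolynomial.IsHomogeneous.prod (R := K) Finset.univ (fun n => (X (c n) : MvPolynomial ι K)) (fun _ => 1)
        (fun i _ => isHomogeneous_X _ _)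
      simpa using this
    | zero => exact ⟨0, isHomogeneous_zero _ _ _, by simp⟩
    | add f g _ _ hf hg =>
      obtain ⟨F, hF, hF'⟩ := hf
      obtain ⟨G, hG, hG'⟩ := hg
      exact ⟨F + G, hF.add hG, fun a => by simp [hF', hG']⟩
    | smul r f _ hf =>
      obtain ⟨F, hF, hF'⟩ := hf
      exact ⟨C r * F, by simpa using (isHomogeneous_C ι r).mul hF, fun a => by simp [hF']⟩
  · rintro ⟨F, hF, hf⟩
    have : f = ∑ m ∈ F.support, F.coeff m • (fun a => ∏ i ∈ m.support, φ a i ^ m i) := by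
      funext a
      rw [hf, eval_eq]
      simp
    rw [this]
    refine Submodule.sum_mem _ fun m hm => Submodule.smul_mem _ _ ?_
    have hdeg : m.degree = d := by
      have := hF (mem_support_iff.mp hm)
      rw [Finsupp.degree_eq_weight_one]; exact this
    obtain ⟨c, hc⟩ := mono_form (K := K) m hdeg
    refine Submodule.subset_span ⟨c, ?_⟩
    funext a
    simp [mon, hc]

lemma eval_smul_hom {ι : Type} {d : ℕ} {F : MvPolynomial ι K} (hF : F.IsHomogeneous d)
    (r : K) (x : ι → K) : eval (r • x) F = r ^ d * eval x F := by
  rw [eval_eq, eval_eq, Finset.mul_sum]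
  refine Finset.sum_congr rfl fun m hm => ?_
  have hdeg : m.degree = d := by
    have := hF (mem_support_iff.mp hm)
    rw [Finsupp.degree_eq_weight_one]; exact this
  obtain ⟨c, hc⟩ := mono_form (K := K) m hdeg
  rw [hc, hc]
  simp [Finset.prod_mul_distrib]
  ring

lemma exists_equiv {ι A : Type} (Y : Set (Projectivization K (ι → K))) (i0 : ι)
    (φ : A → ι → K) (h0 : ∀ a, φ a i0 = 1) (hinj : Function.Injective φ)
    (hY : ∀ p, p ∈ Y ↔ ∃ a, ∃ c : K, c ≠ 0 ∧ p.rep = c • φ a) :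
    ∃ e : Y ≃ A, ∀ y : Y, y.1.rep i0 ≠ 0 ∧ y.1.rep = y.1.rep i0 • φ (e y) := by
  have h1 : ∀ y : Y, ∃ a, y.1.rep i0 ≠ 0 ∧ y.1.rep = y.1.rep i0 • φ a := by
    intro y
    obtain ⟨a, c, hc, h⟩ := (hY y.1).1 y.2
    have : y.1.rep i0 = c := by rw [h]; simp [h0]
    exact ⟨a, by rwa [this], by rw [this]; exact h⟩
  choose r hr using h1
  have hb : Function.Bijective r := by
    constructor
    · intro y y' h
      apply Subtype.ext
      rw [← Projectivization.mk_rep y.1, ← Projectivization.mk_rep y'.1,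
        Projectivization.mk_eq_mk_iff']
      refine ⟨y.1.rep i0 / y'.1.rep i0, ?_⟩
      have h2 := (hr y').2
      rw [← h] at h2
      have h3 := (hr y).2
      have h4 := (hr y').1
      conv_rhs => rw [h3]
      conv_lhs => rw [h2]
      rw [smul_smul]
      congr 1
      have : (y'.1.rep i0 • φ (r y)) i0 = y'.1.rep i0 := by simp [h0]
      rw [this]
      field_simp
    · intro a
      have hne : φ a ≠ 0 := fun h => by simpa [h] using h0 a
      obtain ⟨c, hc⟩ := Projectivization.exists_smul_eq_mk_rep K (φ a) hne
      have hmem : Projectivization.mk K (φ a) hne ∈ Y :=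
        (hY _).2 ⟨a, c, c.ne_zero, hc.symm⟩
      refine ⟨⟨_, hmem⟩, hinj ?_⟩
      have h3 := hr ⟨_, hmem⟩
      have h5 : (Projectivization.mk K (φ a) hne).rep i0 = c := by
        rw [← hc]; simp [h0, Units.smul_def]
      have h4 := h3.2
      simp only [h5] at h4
      rw [← hc, Units.smul_def] at h4
      exact (smul_right_injective _ c.ne_zero h4).symm
  exact ⟨Equiv.ofBijective r hb, hr⟩

lemma hilb_eq {ι A : Type} (Y : Set (Projectivization K (ι → K))) (i0 : ι)
    (φ : A → ι → K) (d : ℕ) (e : Y ≃ A)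
    (he : ∀ y : Y, y.1.rep i0 ≠ 0 ∧ y.1.rep = y.1.rep i0 • φ (e y)) :
    hilbFn K Y i0 d = Module.finrank K (code φ d) := by
  rw [← LinearEquiv.finrank_map_eq (LinearEquiv.funCongrLeft K K e) (code φ d)]
  unfold hilbFn
  have : ({f : ↥Y → K | ∃ F : MvPolynomial ι K, F.IsHomogeneous d ∧
      ∀ p : ↥Y, f p = eval p.1.rep F / (p.1.rep i0) ^ d}) =
      ((code φ d).map (LinearEquiv.funCongrLeft K K e : (A → K) →ₗ[K] (Y → K)) : Set (Y → K)) := by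
    ext f
    simp only [Set.mem_setOf_eq, Submodule.map_coe, Set.mem_image, SetLike.mem_coe, mem_code]
    have key : ∀ F : MvPolynomial ι K, F.IsHomogeneous d → ∀ p : Y,
        eval p.1.rep F / (p.1.rep i0) ^ d = eval (φ (e p)) F := by
      intro F hF p
      obtain ⟨h1, h2⟩ := he p
      have : eval p.1.rep F = (p.1.rep i0) ^ d * eval (φ (e p)) F := by
        conv_lhs => rw [h2]
        exact eval_smul_hom hF _ _
      rw [this]
      field_simp
    constructor
    · rintro ⟨F, hF, h⟩
      refine ⟨fun a => eval (φ a) F, ⟨F, hF, fun _ => rfl⟩, ?_⟩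
      funext p
      rw [h, key F hF]
      rfl
    · rintro ⟨g, ⟨F, hF, h⟩, rfl⟩
      refine ⟨F, hF, fun p => ?_⟩
      rw [key F hF, ← h]
      rfl
  rw [this, Submodule.span_eq]

lemma minDist_eq {ι A : Type} (Y : Set (Projectivization K (ι → K))) (i0 : ι)
    (φ : A → ι → K) (d : ℕ) (e : Y ≃ A)
    (he : ∀ y : Y, y.1.rep i0 ≠ 0 ∧ y.1.rep = y.1.rep i0 • φ (e y)) :
    minDist K Y d = sInf {n | ∃ f ∈ code φ d, f ≠ 0 ∧ n = Set.ncard {a | f a ≠ 0}} := by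
  unfold minDist
  have key : ∀ F : MvPolynomial ι K, F.IsHomogeneous d → ∀ p : Y,
      (eval p.1.rep F ≠ 0 ↔ eval (φ (e p)) F ≠ 0) := by
    intro F hF p
    obtain ⟨h1, h2⟩ := he p
    have : eval p.1.rep F = (p.1.rep i0) ^ d * eval (φ (e p)) F := by
      conv_lhs => rw [h2]
      exact eval_smul_hom hF _ _
    rw [this]
    simp [h1]
  have hcard : ∀ F : MvPolynomial ι K, F.IsHomogeneous d →
      Set.ncard {p ∈ Y | eval p.rep F ≠ 0} = Set.ncard {a | eval (φ a) F ≠ 0} := by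
    intro F hF
    have : {p ∈ Y | eval p.rep F ≠ 0} =
        (fun a => ((e.symm a : Y) : Projectivization K (ι → K))) '' {a | eval (φ a) F ≠ 0} := by
      ext p
      constructor
      · rintro ⟨hp, h⟩
        exact ⟨e ⟨p, hp⟩, (key F hF ⟨p, hp⟩).1 h, by simp⟩
      · rintro ⟨a, ha, rfl⟩
        exact ⟨(e.symm a).2, (key F hF _).2 (by simpa using ha)⟩
    rw [this, Set.ncard_image_of_injective]
    exact Subtype.val_injective.comp e.symm.injective
  congr 1
  ext n
  constructor
  · rintro ⟨F, hF, ⟨p, hp, hne⟩, rfl⟩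
    refine ⟨fun a => eval (φ a) F, (mem_code _ _ _).2 ⟨F, hF, fun _ => rfl⟩, ?_, hcard F hF⟩
    exact fun h => (key F hF ⟨p, hp⟩).1 hne (congrFun h _)
  · rintro ⟨f, hf, hne, rfl⟩
    obtain ⟨F, hF, h⟩ := (mem_code _ _ _).1 hf
    obtain ⟨a, ha⟩ := Function.ne_iff.1 hne
    refine ⟨F, hF, ⟨_, (e.symm a).2, (key F hF _).2 ?_⟩, ?_⟩
    · simpa [h] using ha
    · rw [hcard F hF]; simp [h]

/-- product param -/
def pr {ι κ A B : Type} (φ : A → ι → K) (ψ : B → κ → K) : A × B → ι × κ → K :=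
  fun ab ij => φ ab.1 ij.1 * ψ ab.2 ij.2

/-- outer product -/
def outer {A B : Type} (f : A → K) (g : B → K) : A × B → K := fun ab => f ab.1 * g ab.2

lemma mon_pr {ι κ A B : Type} (φ : A → ι → K) (ψ : B → κ → K) (d : ℕ) (c : Fin d → ι × κ) :
    mon (pr φ ψ) d c = outer (mon φ d fun n => (c n).1) (mon ψ d fun n => (c n).2) := by
  funext ab
  simp [mon, pr, outer, Finset.prod_mul_distrib]

lemma outer_mem {ι κ A B : Type} (φ : A → ι → K) (ψ : B → κ → K) (d : ℕ) {f : A → K} {g : B → K}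
    (hf : f ∈ code φ d) (hg : g ∈ code ψ d) : outer f g ∈ code (pr φ ψ) d := by
  induction hf using Submodule.span_induction with
  | mem f hf =>
    obtain ⟨c, rfl⟩ := hf
    induction hg using Submodule.span_induction with
    | mem g hg =>
      obtain ⟨c', rfl⟩ := hg
      exact Submodule.subset_span ⟨fun n => (c n, c' n), mon_pr _ _ _ _⟩
    | zero =>
      convert Submodule.zero_mem _
      funext ab; simp [outer]
    | add f g _ _ hf hg =>
      convert Submodule.add_mem _ hf hg
      funext ab; simp [outer, mul_add]
    | smul r f _ hf =>
      convert Submodule.smul_mem _ r hf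
      funext ab; simp [outer]; ring
  | zero =>
    convert Submodule.zero_mem _
    funext ab; simp [outer]
  | add f g _ _ hf hg =>
    convert Submodule.add_mem _ hf hg
    funext ab; simp [outer, add_mul]
  | smul r f _ hf =>
    convert Submodule.smul_mem _ r hf
    funext ab; simp [outer]; ring

lemma row_mem {ι κ A B : Type} (φ : A → ι → K) (ψ : B → κ → K) (d : ℕ) {f : A × B → K}
    (hf : f ∈ code (pr φ ψ) d) (a : A) : (fun b => f (a, b)) ∈ code ψ d := by
  induction hf using Submodule.span_induction with
  | mem f hf =>
    obtain ⟨c, rfl⟩ := hf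
    rw [mon_pr]
    exact Submodule.smul_mem _ (mon φ d (fun n => (c n).1) a) (Submodule.subset_span ⟨_, rfl⟩)
  | zero => exact Submodule.zero_mem _
  | add f g _ _ hf hg => exact Submodule.add_mem _ hf hg
  | smul r f _ hf => exact Submodule.smul_mem _ r hf

lemma col_mem {ι κ A B : Type} (φ : A → ι → K) (ψ : B → κ → K) (d : ℕ) {f : A × B → K}
    (hf : f ∈ code (pr φ ψ) d) (b : B) : (fun a => f (a, b)) ∈ code φ d := by
  induction hf using Submodule.span_induction with
  | mem f hf =>
    obtain ⟨c, rfl⟩ := hf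
    rw [mon_pr]
    have := Submodule.smul_mem (code φ d) (mon ψ d (fun n => (c n).2) b)
      (Submodule.subset_span ⟨fun n => (c n).1, rfl⟩)
    convert this using 1
    funext a
    simp [outer, mul_comm]
  | zero => exact Submodule.zero_mem _
  | add f g _ _ hf hg => exact Submodule.add_mem _ hf hg
  | smul r f _ hf => exact Submodule.smul_mem _ r hf

lemma finrank_pr {ι κ A B : Type} [Finite A] [Finite B] (φ : A → ι → K) (ψ : B → κ → K) (d : ℕ) :
    Module.finrank K (code (pr φ ψ) d) =
      Module.finrank K (code φ d) * Module.finrank K (code ψ d) := by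
  classical
  let u := Module.finBasis K (code φ d)
  let v := Module.finBasis K (code ψ d)
  let w : Fin _ × Fin _ → (A × B → K) := fun ij => outer (u ij.1 : A → K) (v ij.2 : B → K)
  have hli : LinearIndependent K w := by
    rw [Fintype.linearIndependent_iff]
    intro g hg
    have hu : LinearIndependent K (fun i => (u i : A → K)) :=
      u.linearIndependent.map' (code φ d).subtype (Submodule.ker_subtype _)
    have hv : LinearIndependent K (fun i => (v i : B → K)) :=
      v.linearIndependent.map' (code ψ d).subtype (Submodule.ker_subtype _)
    rw [Fintype.linearIndependent_iff] at hu hv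
    have h1 : ∀ a j, ∑ i, g (i, j) * (u i : A → K) a = 0 := by
      intro a
      apply hv
      funext b
      have := congrFun hg (a, b)
      simp only [Finset.sum_apply, Pi.smul_apply, Pi.zero_apply, smul_eq_mul, w, outer,
        Fintype.sum_prod_type] at this ⊢
      rw [Finset.sum_comm] at this
      rw [← this]
      refine Finset.sum_congr rfl fun j _ => ?_
      rw [Finset.sum_mul]
      exact Finset.sum_congr rfl fun i _ => by ring
    rintro ⟨i, j⟩
    refine hu (fun i => g (i, j)) ?_ i
    funext a
    simpa using h1 a j
  have hspan : code (pr φ ψ) d = Submodule.span K (Set.range w) := by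
    apply le_antisymm
    · refine Submodule.span_le.2 ?_
      rintro _ ⟨c, rfl⟩
      rw [mon_pr]
      set f := mon φ d fun n => (c n).1 with hf
      set g := mon ψ d fun n => (c n).2 with hg
      have hf' : f ∈ code φ d := Submodule.subset_span ⟨_, rfl⟩
      have hg' : g ∈ code ψ d := Submodule.subset_span ⟨_, rfl⟩
      have e1 := congrArg (Subtype.val) (u.sum_repr ⟨f, hf'⟩)
      have e2 := congrArg (Subtype.val) (v.sum_repr ⟨g, hg'⟩)
      simp only [AddSubmonoidClass.coe_finset_sum, Submodule.coe_smul] at e1 e2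
      have : outer f g = ∑ i, ∑ j, (u.repr ⟨f, hf'⟩ i * v.repr ⟨g, hg'⟩ j) • w (i, j) := by
        funext ab
        have e1' := congrFun e1 ab.1
        have e2' := congrFun e2 ab.2
        simp only [Finset.sum_apply, Pi.smul_apply, smul_eq_mul] at e1' e2'
        simp only [outer, Finset.sum_apply, Pi.smul_apply, smul_eq_mul, w]
        rw [← e1', ← e2', Finset.sum_mul_sum]
        exact Finset.sum_congr rfl fun i _ => Finset.sum_congr rfl fun j _ => by ring
      rw [SetLike.mem_coe, this]
      exact Submodule.sum_mem _ fun i _ => Submodule.sum_mem _ fun j _ =>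
        Submodule.smul_mem _ _ (Submodule.subset_span ⟨_, rfl⟩)
    · refine Submodule.span_le.2 ?_
      rintro _ ⟨ij, rfl⟩
      exact outer_mem _ _ _ (u ij.1).2 (v ij.2).2
  rw [hspan, finrank_span_eq_card hli]
  simp

lemma sInf_pr {ι κ A B : Type} [Finite A] [Finite B] [Nonempty A] [Nonempty B]
    (φ : A → ι → K) (ψ : B → κ → K) (d : ℕ)
    (i0 : ι) (j0 : κ) (h0 : ∀ a, φ a i0 = 1) (h0' : ∀ a, ψ a j0 = 1) :
    sInf {n | ∃ f ∈ code (pr φ ψ) d, f ≠ 0 ∧ n = Set.ncard {a | f a ≠ 0}} =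
    sInf {n | ∃ f ∈ code φ d, f ≠ 0 ∧ n = Set.ncard {a | f a ≠ 0}} *
    sInf {n | ∃ f ∈ code ψ d, f ≠ 0 ∧ n = Set.ncard {a | f a ≠ 0}} := by
  classical
  have ne1 : {n | ∃ f ∈ code φ d, f ≠ 0 ∧ n = Set.ncard {a | f a ≠ 0}}.Nonempty := by
    refine ⟨_, mon φ d (fun _ => i0), Submodule.subset_span ⟨_, rfl⟩, ?_, rfl⟩
    intro h
    have := congrFun h (Classical.arbitrary A)
    simp [mon, h0] at this
  have ne2 : {n | ∃ f ∈ code ψ d, f ≠ 0 ∧ n = Set.ncard {a | f a ≠ 0}}.Nonempty := by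
    refine ⟨_, mon ψ d (fun _ => j0), Submodule.subset_span ⟨_, rfl⟩, ?_, rfl⟩
    intro h
    have := congrFun h (Classical.arbitrary B)
    simp [mon, h0'] at this
  obtain ⟨f, hf, hf0, hfn⟩ := Nat.sInf_mem ne1
  obtain ⟨g, hg, hg0, hgn⟩ := Nat.sInf_mem ne2
  have hmem : sInf {n | ∃ f ∈ code φ d, f ≠ 0 ∧ n = Set.ncard {a | f a ≠ 0}} *
    sInf {n | ∃ f ∈ code ψ d, f ≠ 0 ∧ n = Set.ncard {a | f a ≠ 0}} ∈
      {n | ∃ f ∈ code (pr φ ψ) d, f ≠ 0 ∧ n = Set.ncard {a | f a ≠ 0}} := by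
    refine ⟨outer f g, outer_mem _ _ _ hf hg, ?_, ?_⟩
    · obtain ⟨a, ha⟩ := Function.ne_iff.1 hf0
      obtain ⟨b, hb⟩ := Function.ne_iff.1 hg0
      exact Function.ne_iff.2 ⟨(a, b), mul_ne_zero ha hb⟩
    · rw [hfn, hgn, ← Set.ncard_prod]
      congr 1
      ext ab
      simp [outer]
  apply le_antisymm
  · exact Nat.sInf_le hmem
  · refine le_csInf ⟨_, hmem⟩ ?_
    rintro n ⟨F, hF, hF0, rfl⟩
    obtain ⟨⟨a0, b0⟩, hab⟩ := Function.ne_iff.1 hF0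
    have hc : sInf {n | ∃ f ∈ code φ d, f ≠ 0 ∧ n = Set.ncard {a | f a ≠ 0}} ≤
        Set.ncard {a | F (a, b0) ≠ 0} :=
      Nat.sInf_le ⟨_, col_mem φ ψ d hF b0, Function.ne_iff.2 ⟨a0, hab⟩, rfl⟩
    have hr : ∀ a, F (a, b0) ≠ 0 →
        sInf {n | ∃ f ∈ code ψ d, f ≠ 0 ∧ n = Set.ncard {a | f a ≠ 0}} ≤
        Set.ncard {b | F (a, b) ≠ 0} := fun a ha =>
      Nat.sInf_le ⟨_, row_mem φ ψ d hF a, Function.ne_iff.2 ⟨b0, ha⟩, rfl⟩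
    have := Fintype.ofFinite A
    have := Fintype.ofFinite B
    generalize sInf {n | ∃ f ∈ code φ d, f ≠ 0 ∧ n = Set.ncard {a | f a ≠ 0}} = s at *
    generalize sInf {n | ∃ f ∈ code ψ d, f ≠ 0 ∧ n = Set.ncard {a | f a ≠ 0}} = t at *
    have e1 : Set.ncard {a | F (a, b0) ≠ 0} = (Finset.univ.filter fun a => F (a, b0) ≠ 0).card := by
      rw [← Set.ncard_coe_finset]; simp
    have e2 : ∀ a, Set.ncard {b | F (a, b) ≠ 0} = (Finset.univ.filter fun b => F (a, b) ≠ 0).card := by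
      intro a; rw [← Set.ncard_coe_finset]; simp
    have e3 : Set.ncard {a | F a ≠ 0} = (Finset.univ.filter fun a => F a ≠ 0).card := by
      rw [← Set.ncard_coe_finset]; simp
    have e4 : (Finset.univ.filter fun a => F a ≠ 0).card =
        ∑ a : A, (Finset.univ.filter fun b => F (a, b) ≠ 0).card := by
      simp only [Finset.card_filter, Fintype.sum_prod_type]
    rw [e3, e4]
    calc s * t ≤ (Finset.univ.filter fun a => F (a, b0) ≠ 0).card * t :=
          Nat.mul_le_mul_right _ (e1 ▸ hc)
      _ = ∑ a ∈ (Finset.univ.filter fun a => F (a, b0) ≠ 0), t := by simp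
      _ ≤ ∑ a ∈ (Finset.univ.filter fun a => F (a, b0) ≠ 0),
            (Finset.univ.filter fun b => F (a, b) ≠ 0).card :=
          Finset.sum_le_sum fun a ha => by
            rw [← e2]; exact hr a (Finset.mem_filter.1 ha).2
      _ ≤ _ := Finset.sum_le_sum_of_subset (Finset.subset_univ _)

/-- normalised torus points -/
def Tor (K : Type) [Field K] (s : ℕ) (i0 : Fin s) : Type :=
  {u : Fin s → K // (∀ i, u i ≠ 0) ∧ u i0 = 1}

instance [Finite K] (s : ℕ) (i0 : Fin s) : Finite (Tor K s i0) :=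
  inferInstanceAs (Finite {u : Fin s → K // (∀ i, u i ≠ 0) ∧ u i0 = 1})

instance (s : ℕ) (i0 : Fin s) : Nonempty (Tor K s i0) := ⟨⟨fun _ => 1, by simp, rfl⟩⟩

/-- underlying point -/
def tp {s : ℕ} {i0 : Fin s} (u : Tor K s i0) : Fin s → K := u.1

lemma card_tor [Fintype K] (s : ℕ) (i0 : Fin s) :
    Nat.card (Tor K s i0) = (Fintype.card K - 1) ^ (s - 1) := by
  classical
  let e : Tor K s i0 ≃ ({i : Fin s // i ≠ i0} → Kˣ) :=
    { toFun := fun u i => Units.mk0 (u.1 i.1) (u.2.1 i.1)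
      invFun := fun g => ⟨fun i => if h : i = i0 then 1 else (g ⟨i, h⟩ : K), by
        refine ⟨fun i => ?_, by simp⟩
        beta_reduce
        split_ifs <;> simp⟩
      left_inv := fun u => by
        apply Subtype.ext
        funext i
        by_cases h : i = i0
        · subst h; simp [u.2.2]
        · simp [h]
      right_inv := fun g => by
        funext i
        ext
        simp [i.2] }
  rw [Nat.card_congr e, Nat.card_eq_fintype_card, Fintype.card_fun, Fintype.card_units]
  congr 1
  simp [Fintype.card_subtype_compl]

lemma tp_mem (s : ℕ) (i0 : Fin s) (p : Projectivization K (Fin s → K)) :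
    p ∈ projTorus K s ↔ ∃ a : Tor K s i0, ∃ c : K, c ≠ 0 ∧ p.rep = c • tp a := by
  constructor
  · intro h
    have h : ∀ i, p.rep i ≠ 0 := h
    refine ⟨⟨fun i => p.rep i / p.rep i0, fun i => div_ne_zero (h i) (h i0), div_self (h i0)⟩,
      p.rep i0, h i0, ?_⟩
    funext i
    have := h i0
    simp only [tp, Pi.smul_apply, smul_eq_mul]
    field_simp
  · rintro ⟨a, c, hc, h⟩ i
    rw [h]
    exact mul_ne_zero hc (a.2.1 i)

lemma pr_mem (k l : ℕ) (i0 : Fin k) (j0 : Fin l) (p : Projectivization K (Fin k × Fin l → K)) :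
    (∃ (a : Fin k → K) (b : Fin l → K),
        (∀ i, a i ≠ 0) ∧ (∀ j, b j ≠ 0) ∧
        p.rep = fun ij => a ij.1 * b ij.2) ↔
    ∃ a : Tor K k i0 × Tor K l j0, ∃ c : K, c ≠ 0 ∧ p.rep = c • pr tp tp a := by
  constructor
  · rintro ⟨a, b, ha, hb, h⟩
    refine ⟨(⟨fun i => a i / a i0, fun i => div_ne_zero (ha i) (ha i0), div_self (ha i0)⟩,
      ⟨fun i => b i / b j0, fun i => div_ne_zero (hb i) (hb j0), div_self (hb j0)⟩),
      a i0 * b j0, mul_ne_zero (ha _) (hb _), ?_⟩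
    rw [h]
    funext ij
    have := ha i0
    have := hb j0
    simp only [tp, pr, Pi.smul_apply, smul_eq_mul]
    field_simp
  · rintro ⟨⟨a, b⟩, c, hc, h⟩
    refine ⟨fun i => c * a.1 i, b.1, fun i => mul_ne_zero hc (a.2.1 i), b.2.1, ?_⟩
    rw [h]
    funext ij
    simp only [tp, pr, Pi.smul_apply, smul_eq_mul]
    ring

lemma tp_inj (s : ℕ) (i0 : Fin s) : Function.Injective (tp : Tor K s i0 → _) :=
  Subtype.val_injective

lemma pr_inj (k l : ℕ) (i0 : Fin k) (j0 : Fin l) :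
    Function.Injective (pr tp tp : Tor K k i0 × Tor K l j0 → _) := by
  rintro ⟨a, b⟩ ⟨a', b'⟩ h
  have h1 : a = a' := by
    apply tp_inj
    funext i
    have := congrFun h (i, j0)
    simpa [pr, tp, b.2.2, b'.2.2] using this
  have h2 : b = b' := by
    apply tp_inj
    funext i
    have := congrFun h (i0, i)
    simpa [pr, tp, a.2.2, a'.2.2] using this
  rw [h1, h2]

end St12

/-- For the algebraic toric set `X ⊆ ℙ^(kℓ-1)` parameterized by the edges of the
complete bipartite graph `K_{k,ℓ}` (points `[(a_i b_j)_{i,j}]` with `a ∈ (K*)^k`,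
`b ∈ (K*)^ℓ`; a set closed under the scaling action, so described by its chosen
representatives), and projective tori `T₁ ⊆ ℙ^(ℓ-1)`, `T₂ ⊆ ℙ^(k-1)`: the length of
`C_X(d)` is `(q-1)^(k+ℓ-2)`, its dimension is `H_{T₁}(d) · H_{T₂}(d)`, and its minimum
distance is the product of the minimum distances of `C_{T₁}(d)` and `C_{T₂}(d)`. -/
theorem stmt_12 (K : Type) [Field K] [Fintype K] (q k ℓ d : ℕ)
    (hK : Fintype.card K = q) (hk : 2 ≤ k) (hl : 2 ≤ ℓ) (hd : 1 ≤ d) :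
    let X : Set (Projectivization K (Fin k × Fin ℓ → K)) :=
      {p | ∃ (a : Fin k → K) (b : Fin ℓ → K),
        (∀ i, a i ≠ 0) ∧ (∀ j, b j ≠ 0) ∧
        p.rep = fun ij => a ij.1 * b ij.2}
    Set.ncard X = (q - 1) ^ (k + ℓ - 2) ∧
    hilbFn K X ((⟨0, by omega⟩ : Fin k), (⟨0, by omega⟩ : Fin ℓ)) d =
      hilbFn K (projTorus K ℓ) (⟨0, by omega⟩ : Fin ℓ) d *
        hilbFn K (projTorus K k) (⟨0, by omega⟩ : Fin k) d ∧
    minDist K X d = minDist K (projTorus K ℓ) d * minDist K (projTorus K k) d := by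
  intro X
  have : NeZero k := ⟨by omega⟩
  have : NeZero ℓ := ⟨by omega⟩
  set i0 : Fin k := ⟨0, by omega⟩
  set j0 : Fin ℓ := ⟨0, by omega⟩
  have hpr0 : ∀ a : St12.Tor K k i0 × St12.Tor K ℓ j0, St12.pr St12.tp St12.tp a (i0, j0) = 1 := by
    intro a
    simp [St12.pr, St12.tp, a.1.2.2, a.2.2.2]
  obtain ⟨e, he⟩ := St12.exists_equiv X (i0, j0) (St12.pr St12.tp St12.tp) hpr0
    (St12.pr_inj k ℓ i0 j0) (fun p => St12.pr_mem k ℓ i0 j0 p)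
  obtain ⟨e1, he1⟩ := St12.exists_equiv (projTorus K k) i0 St12.tp (fun a => a.2.2)
    (St12.tp_inj k i0) (fun p => St12.tp_mem k i0 p)
  obtain ⟨e2, he2⟩ := St12.exists_equiv (projTorus K ℓ) j0 St12.tp (fun a => a.2.2)
    (St12.tp_inj ℓ j0) (fun p => St12.tp_mem ℓ j0 p)
  refine ⟨?_, ?_, ?_⟩
  · rw [← Nat.card_coe_set_eq, Nat.card_congr e, Nat.card_prod, St12.card_tor, St12.card_tor, hK,
      ← pow_add]
    congr 1
    omega
  · rw [St12.hilb_eq X _ _ d e he, St12.hilb_eq _ _ _ d e1 he1, St12.hilb_eq _ _ _ d e2 he2,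
      St12.finrank_pr, mul_comm]
  · rw [St12.minDist_eq X _ _ d e he, St12.minDist_eq _ _ _ d e1 he1,
      St12.minDist_eq _ _ _ d e2 he2,
      St12.sInf_pr _ _ d i0 j0 (fun a => a.2.2) (fun a => a.2.2), mul_comm]
end

section
/- Let K be a finite field with q elements and let v_1,…,v_s ∈ {0,1}^n be the characteristic vectors of the edges of a clutter, and let X be the algebraic toric set parameterized by y^{v_1},…,y^{v_s}. Let i ∈ {1,…,s}, let b ≥ 1 be an integer and c = (c_1,…,c_s) ∈ ℕ^s with c_i = 0 and b = c_1 + ⋯ + c_s, and suppose that the homogeneous binomial f = t_i^b − t_1^{c_1}⋯t_s^{c_s} vanishes at every point of X, i.e., (x^{v_i})^b = Π_{j=1}^s (x^{v_j})^{c_j} for all x ∈ (K*)^n. Then b ≥ q−1. Moreover, if b = q−1, then c = (q−1)e_j for some j ≠ i, i.e., f = t_i^{q−1} − t_j^{q−1}. -/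
open MvPolynomial

/-- Let `v_1,…,v_s ∈ {0,1}^n` be the characteristic vectors of the edges of a clutter
(distinct 0-1 vectors, none of whose supports is contained in another). If the
homogeneous binomial `t_i^b - t_1^{c_1}⋯t_s^{c_s}` (with `c_i = 0`, `b = Σ c_j ≥ 1`)
vanishes at every point of the algebraic toric set parameterized by
`y^{v_1},…,y^{v_s}`, then `b ≥ q-1`; and if `b = q-1`, then `c = (q-1)eⱼ` for some
`j ≠ i`, i.e. the binomial is `t_i^{q-1} - t_j^{q-1}`. -/
theorem stmt_13 (K : Type) [Field K] [Fintype K] (q n s : ℕ)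
    (hK : Fintype.card K = q)
    (v : Fin s → Fin n → ℕ) (hv01 : ∀ i t, v i t ≤ 1)
    (hinj : Function.Injective v)
    (hclutter : ∀ i j : Fin s, i ≠ j → ¬ ∀ t, v i t ≤ v j t)
    (i : Fin s) (b : ℕ) (hb : 1 ≤ b) (c : Fin s → ℕ)
    (hci : c i = 0) (hbc : b = ∑ j, c j)
    (hvanish : ∀ x : Fin n → K, (∀ t, x t ≠ 0) →
      (∏ t, x t ^ v i t) ^ b = ∏ j, (∏ t, x t ^ v j t) ^ c j) :
    q - 1 ≤ b ∧
    (b = q - 1 → ∃ j : Fin s, j ≠ i ∧ c = Pi.single j (q - 1)) := by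
  classical
  obtain ⟨g, hg⟩ := IsCyclic.exists_generator (α := Kˣ)
  have hord : orderOf g = q - 1 := by
    rw [orderOf_eq_card_of_forall_mem_zpowers hg, Nat.card_eq_fintype_card,
      Fintype.card_units, hK]
  have hq : 1 < q := hK ▸ Fintype.one_lt_card
  have hmod : ∀ t, b * v i t ≡ ∑ j, c j * v j t [MOD (q - 1)] := by
    intro t
    have key : ∀ j, ∏ u, (Function.update (fun _ => (1 : K)) t (g : K)) u ^ v j u
        = (g : K) ^ v j t := by
      intro j
      rw [Finset.prod_eq_single t]
      · simp
      · intro u _ hu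
        simp [Function.update_of_ne hu]
      · simp
    have h := hvanish (Function.update (fun _ => (1 : K)) t (g : K)) (by
      intro u
      by_cases hu : u = t
      · subst hu; simp
      · simp [Function.update_of_ne hu])
    simp only [key, ← pow_mul] at h
    rw [Finset.prod_pow_eq_pow_sum] at h
    have h2 : g ^ (v i t * b) = g ^ (∑ j, v j t * c j) := by
      ext
      push_cast
      exact h
    rw [pow_eq_pow_iff_modEq, hord] at h2
    simpa only [mul_comm] using h2
  have hle : ∀ t, ∀ j ∈ Finset.univ, c j * v j t ≤ c j := by
    intro t j _
    have := Nat.mul_le_mul_left (c j) (hv01 j t)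
    simpa using this
  have hS : ∀ t, ∑ j, c j * v j t ≤ b := by
    intro t
    rw [hbc]
    exact Finset.sum_le_sum (hle t)
  have hzero : ∀ t, ∑ j, c j * v j t = 0 → ∀ k, c k ≠ 0 → v k t = 0 := by
    intro t h k hk
    rw [Finset.sum_eq_zero_iff] at h
    have := h k (Finset.mem_univ k)
    rcases Nat.mul_eq_zero.mp this with h | h
    · exact absurd h hk
    · exact h
  have hone : ∀ t, ∑ j, c j * v j t = b → ∀ k, c k ≠ 0 → v k t = 1 := by
    intro t h k hk
    rw [hbc, Finset.sum_eq_sum_iff_of_le (hle t)] at h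
    have := h k (Finset.mem_univ k)
    exact Nat.eq_of_mul_eq_mul_left (Nat.pos_of_ne_zero hk) (by simpa using this)
  obtain ⟨j, hj⟩ : ∃ j, c j ≠ 0 := by
    by_contra! h
    simp [h] at hbc
    omega
  have hji : j ≠ i := by
    rintro rfl
    exact hj hci
  constructor
  · by_contra! hlt
    apply hclutter j i hji
    intro t
    have h01 := hv01 i t
    rcases Nat.le_one_iff_eq_zero_or_eq_one.mp h01 with h | h
    · have h1 := hmod t
      rw [h, mul_zero] at h1
      have h2 := Nat.ModEq.eq_of_lt_of_lt h1 (by omega) (lt_of_le_of_lt (hS t) hlt)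
      rw [hzero t h2.symm j hj]
      exact Nat.zero_le _
    · rw [h]; exact hv01 j t
  · intro hbq
    have heq : ∀ k, c k ≠ 0 → k = j := by
      intro k hk
      apply hinj
      funext t
      have h1 := hmod t
      have hd : (q - 1) ∣ ∑ j, c j * v j t := by
        have h3 : b * v i t ≡ 0 [MOD (q - 1)] := by
          rw [hbq]
          exact (Nat.modEq_zero_iff_dvd).mpr (Dvd.intro _ rfl)
        exact (Nat.modEq_zero_iff_dvd).mp (h1.symm.trans h3)
      rcases Nat.eq_zero_or_pos (∑ j, c j * v j t) with h | h
      · rw [hzero t h k hk, hzero t h j hj]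
      · have h4 : ∑ j, c j * v j t = b :=
          le_antisymm (hS t) (hbq ▸ Nat.le_of_dvd h hd)
        rw [hone t h4 k hk, hone t h4 j hj]
    have hz : ∀ k, k ≠ j → c k = 0 := fun k hk => by
      by_contra h
      exact hk (heq k h)
    refine ⟨j, hji, ?_⟩
    have hcj : c j = q - 1 := by
      rw [← hbq, hbc, Finset.sum_eq_single j (fun k _ hk => hz k hk) (by simp)]
    funext k
    by_cases hk : k = j
    · subst hk; simp [hcj]
    · simp [hz k hk, hk]
end

section
/- Let K be a finite field with q elements, let v_1,…,v_s ∈ {0,1}^n be the characteristic vectors of the edges of a clutter, let X be the algebraic toric set parameterized by y^{v_1},…,y^{v_s}, and let I(X) ⊆ S = K[t_1,…,t_s] be its vanishing ideal. If I(X) is a complete intersection, i.e., I(X) can be generated by s−1 homogeneous polynomials, then I(X) = (t_1^{q−1} − t_s^{q−1}, t_2^{q−1} − t_s^{q−1}, …, t_{s−1}^{q−1} − t_s^{q−1}). -/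
open MvPolynomial

lemma aux_coeff (K : Type) [Field K] [Fintype K] (q n s : ℕ)
    (hK : Fintype.card K = q)
    (v : Fin s → Fin n → ℕ) (hv01 : ∀ i t, v i t ≤ 1)
    (hclutter : ∀ i j : Fin s, i ≠ j → ¬ ∀ t, v i t ≤ v j t)
    (f : MvPolynomial (Fin s) K) (d : ℕ) (hf : f.IsHomogeneous d) (hd : d < q - 1)
    (hvan : ∀ x : Fin n → K, (∀ t, x t ≠ 0) →
          eval (fun j : Fin s => ∏ t, x t ^ v j t) f = 0) (j : Fin s) :
    coeff (Finsupp.single j d) f = 0 := by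
  classical
  let w : (Fin s →₀ ℕ) → (Fin n →₀ ℕ) := fun m =>
    Finsupp.equivFunOnFinite.symm (fun t => ∑ i, m i * v i t)
  have hw : ∀ m t, w m t = ∑ i, m i * v i t := fun m t => rfl
  have hdeg : ∀ m ∈ f.support, ∑ i, m i = d := by
    intro m hm
    have := hf (mem_support_iff.mp hm)
    rw [← this, Finsupp.weight_apply, Finsupp.sum_fintype] <;> simp
  let F : MvPolynomial (Fin n) K := ∑ m ∈ f.support, monomial (w m) (coeff m f)
  have hF : F = 0 := by
    apply eq_zero_of_eval_zero_at_prod_finset F (fun _ => Finset.univ.erase (0 : K))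
    · intro t
      have h1 : F.degreeOf t ≤ d := by
        rw [degreeOf_le_iff]
        intro m hm
        have h2 := support_sum hm
        rw [Finset.mem_biUnion] at h2
        obtain ⟨m', hm', h3⟩ := h2
        have h4 := support_monomial_subset h3
        rw [Finset.mem_singleton] at h4
        rw [h4, hw, ← hdeg m' hm']
        apply Finset.sum_le_sum
        intro i _
        exact (Nat.mul_le_mul_left _ (hv01 i t)).trans (by simp)
      rw [Finset.card_erase_of_mem (Finset.mem_univ _), Finset.card_univ, hK]
      omega
    · intro x hx
      have hx' : ∀ t, x t ≠ 0 := fun t => by simpa using hx t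
      have h := hvan x hx'
      rw [eval_eq'] at h
      rw [← h]
      simp only [F, map_sum]
      apply Finset.sum_congr rfl
      intro m _
      rw [eval_monomial, Finsupp.prod_fintype _ _ (by simp)]
      congr 1
      simp only [hw, ← Finset.prod_pow_eq_pow_sum, ← Finset.prod_pow, ← pow_mul]
      rw [Finset.prod_comm]
      simp only [mul_comm]
  by_contra hne
  have hmem : Finsupp.single j d ∈ f.support := mem_support_iff.mpr hne
  apply hne
  have h0 : coeff (w (Finsupp.single j d)) F = 0 := by rw [hF, coeff_zero]
  rw [← h0]
  simp only [F, coeff_sum, coeff_monomial]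
  rw [Finset.sum_eq_single (Finsupp.single j d)]
  · simp
  · intro m hm hmne
    rw [if_neg]
    intro heq
    apply hmne
    have hz : ∀ k, k ≠ j → m k = 0 := by
      intro k hk
      by_contra hmk
      apply hclutter k j hk
      intro t
      by_contra hlt
      have h1 := hv01 k t
      have e1 : v k t = 1 := by omega
      have e0 : v j t = 0 := by omega
      have h2 := DFunLike.congr_fun heq t
      rw [hw, hw] at h2
      have h3 : ∑ i, (Finsupp.single j d) i * v i t = 0 := by
        apply Finset.sum_eq_zero
        intro i _
        by_cases hij : i = j
        · subst hij; simp [e0]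
        · simp [Finsupp.single_eq_of_ne hij]
      rw [h3, Finset.sum_eq_zero_iff] at h2
      have h4 := h2 k (Finset.mem_univ _)
      rw [e1] at h4
      omega
    have h5 := hdeg m hm
    rw [Finset.sum_eq_single j (fun k _ hk => hz k hk) (by simp)] at h5
    ext k
    by_cases hk : k = j
    · subst hk; simp [h5]
    · rw [hz k hk, Finsupp.single_eq_of_ne hk]
  · intro h; exact absurd hmem h

lemma aux_coeff_mul (K : Type) [Field K] (s N : ℕ) (j : Fin s)
    (h g : MvPolynomial (Fin s) K) (hg : ∀ b < N, coeff (Finsupp.single j b) g = 0) :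
    coeff (Finsupp.single j N) (h * g) = coeff 0 h * coeff (Finsupp.single j N) g := by
  classical
  rw [coeff_mul, Finset.sum_eq_single (0, Finsupp.single j N)]
  · rintro ⟨a, b⟩ hab hne
    rw [Finset.HasAntidiagonal.mem_antidiagonal] at hab
    simp only at hab ⊢
    have hb : b = Finsupp.single j (b j) := by
      ext k
      by_cases hk : k = j
      · subst hk; simp
      · have := DFunLike.congr_fun hab k
        rw [Finsupp.add_apply, Finsupp.single_eq_of_ne hk] at this
        rw [Finsupp.single_eq_of_ne hk]; omega
    have hle := DFunLike.congr_fun hab j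
    rw [Finsupp.add_apply, Finsupp.single_eq_same] at hle
    rcases lt_or_eq_of_le (show b j ≤ N by omega) with h1 | h1
    · rw [hb, hg _ h1, mul_zero]
    · exfalso
      apply hne
      rw [h1] at hb
      rw [hb] at hab
      rw [hb]
      simpa using hab
  · intro h; simp at h

theorem stmt_14 (K : Type) [Field K] [Fintype K] (q n s : ℕ)
    (hK : Fintype.card K = q) (hs : 1 ≤ s)
    (v : Fin s → Fin n → ℕ) (hv01 : ∀ i t, v i t ≤ 1)
    (hinj : Function.Injective v)
    (hclutter : ∀ i j : Fin s, i ≠ j → ¬ ∀ t, v i t ≤ v j t) :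
    let IX : Ideal (MvPolynomial (Fin s) K) := Ideal.span
      {f | (∃ e, f.IsHomogeneous e) ∧
        ∀ x : Fin n → K, (∀ t, x t ≠ 0) →
          eval (fun j : Fin s => ∏ t, x t ^ v j t) f = 0}
    (∃ g : Fin (s - 1) → MvPolynomial (Fin s) K,
        (∀ i, ∃ e, (g i).IsHomogeneous e) ∧ IX = Ideal.span (Set.range g)) →
    IX = Ideal.span {h : MvPolynomial (Fin s) K |
      ∃ i : Fin s, (i : ℕ) < s - 1 ∧
        h = X i ^ (q - 1) - X (⟨s - 1, by omega⟩ : Fin s) ^ (q - 1)} := by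
  classical
  intro IX
  rintro ⟨g, hg, hIX⟩
  have hq : 2 ≤ q := by rw [← hK]; exact Fintype.one_lt_card
  let ι : Fin (s - 1) → Fin s := fun k => ⟨k, by omega⟩
  let l : Fin s := ⟨s - 1, by omega⟩
  let f : Fin (s - 1) → MvPolynomial (Fin s) K := fun k => X (ι k) ^ (q - 1) - X l ^ (q - 1)
  have hset : {h : MvPolynomial (Fin s) K |
      ∃ i : Fin s, (i : ℕ) < s - 1 ∧
        h = X i ^ (q - 1) - X (⟨s - 1, by omega⟩ : Fin s) ^ (q - 1)} = Set.range f := by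
    ext h
    constructor
    · rintro ⟨i, hi, rfl⟩
      exact ⟨⟨i, hi⟩, rfl⟩
    · rintro ⟨k, rfl⟩
      exact ⟨ι k, k.2, rfl⟩
  rw [hset]
  have hfhom : ∀ k, (f k).IsHomogeneous (q - 1) := fun k =>
    (isHomogeneous_X_pow _ _).sub (isHomogeneous_X_pow _ _)
  have hfI : ∀ k, f k ∈ IX := by
    intro k
    apply Ideal.subset_span
    refine ⟨⟨_, hfhom k⟩, fun x hx => ?_⟩
    have hne : ∀ j : Fin s, (∏ t, x t ^ v j t) ≠ 0 := fun j =>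
      Finset.prod_ne_zero_iff.mpr fun t _ => pow_ne_zero _ (hx t)
    simp only [f, map_sub, map_pow, eval_X, ← hK]
    rw [FiniteField.pow_card_sub_one_eq_one _ (hne _),
      FiniteField.pow_card_sub_one_eq_one _ (hne _), sub_self]
  have hvan : ∀ p ∈ IX, ∀ x : Fin n → K, (∀ t, x t ≠ 0) →
      eval (fun j : Fin s => ∏ t, x t ^ v j t) p = 0 := by
    intro p hp x hx
    have : IX ≤ RingHom.ker (eval (fun j : Fin s => ∏ t, x t ^ v j t)) := by
      apply Ideal.span_le.mpr
      intro p hp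
      exact hp.2 x hx
    exact this hp
  have hgI : ∀ i, g i ∈ IX := fun i => by
    rw [hIX]; exact Ideal.subset_span ⟨i, rfl⟩
  have hgc : ∀ i j, ∀ b < q - 1, coeff (Finsupp.single j b) (g i) = 0 := by
    intro i j b hb
    obtain ⟨e, he⟩ := hg i
    by_cases hbe : b = e
    · subst hbe
      exact aux_coeff K q n s hK v hv01 hclutter _ _ he hb (hvan _ (hgI i)) j
    · apply he.coeff_eq_zero
      simpa using hbe
  let π : MvPolynomial (Fin s) K →ₗ[K] (Fin (s - 1) → K) :=
    LinearMap.pi fun k => lcoeff K (Finsupp.single (ι k) (q - 1))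
  have hπ : ∀ p k, π p k = coeff (Finsupp.single (ι k) (q - 1)) p := fun p k => rfl
  have hπf : ∀ k, π (f k) = Pi.single k 1 := by
    intro k
    ext k'
    rw [hπ]
    have h1 : l ≠ ι k' := by
      intro h
      have h2 := congrArg Fin.val h
      have := k'.2
      simp only [l, ι] at h2
      omega
    simp only [f, coeff_sub, X_pow_eq_monomial, coeff_monomial]
    rw [if_neg (c := Finsupp.single l (q-1) = _)]
    · have : (Finsupp.single (ι k) (q-1) = Finsupp.single (ι k') (q-1)) ↔ k' = k := by
        rw [Finsupp.single_left_inj (by omega)]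
        simp only [ι, Fin.mk.injEq, Fin.ext_iff]
        exact eq_comm
      simp only [this, Pi.single_apply, sub_zero]
    · rw [Finsupp.single_left_inj (by omega)]; exact h1
  have hex : ∀ k, ∃ c : Fin (s - 1) → MvPolynomial (Fin s) K, ∑ i, c i * g i = f k := by
    intro k
    have := hfI k
    rw [hIX] at this
    exact Ideal.mem_span_range_iff_exists_fun.mp this
  choose c hc using hex
  have hπc : ∀ k, π (f k) = ∑ i, coeff 0 (c k i) • π (g i) := by
    intro k
    rw [← hc k, map_sum]
    apply Finset.sum_congr rfl
    intro i _
    ext k'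
    rw [hπ, aux_coeff_mul K s (q - 1) (ι k') _ _ (hgc i _)]
    rfl
  have hLI : LinearIndependent K (fun i => π (g i)) := by
    apply linearIndependent_of_top_le_span_of_card_eq_finrank
    · rw [← (Pi.basisFun K (Fin (s - 1))).span_eq]
      apply Submodule.span_le.mpr
      rintro _ ⟨k, rfl⟩
      rw [Pi.basisFun_apply, ← hπf, hπc]
      exact Submodule.sum_mem _ fun i _ => Submodule.smul_mem _ _ (Submodule.subset_span ⟨i, rfl⟩)
    · simp
  have hghom : ∀ i, (g i).IsHomogeneous (q - 1) := by
    intro i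
    obtain ⟨e, he⟩ := hg i
    by_cases hqe : q - 1 = e
    · rw [hqe]; exact he
    · exfalso
      apply hLI.ne_zero i
      ext k
      rw [hπ]
      apply he.coeff_eq_zero
      rw [Finsupp.degree_single]; exact hqe
  have hfg : ∀ k, f k ∈ Submodule.span K (Set.range g) := by
    intro k
    have : f k = ∑ i, coeff 0 (c k i) • g i := by
      ext m
      rw [← hc k, coeff_sum, coeff_sum]
      by_cases hm : m.degree = q - 1
      · apply Finset.sum_congr rfl
        intro i _
        rw [coeff_mul, Finset.sum_eq_single (0, m)]
        · simp
        · rintro ⟨a, b⟩ hab hne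
          rw [Finset.HasAntidiagonal.mem_antidiagonal] at hab
          simp only at hab ⊢
          rw [(hghom i).coeff_eq_zero, mul_zero]
          intro hb
          apply hne
          have h1 : a.degree + b.degree = q - 1 := by
            rw [← hm, ← hab, map_add]
          have ha : a = 0 := by
            rw [← Finsupp.degree_eq_zero_iff]; omega
          subst ha
          simpa using hab
        · intro h; simp at h
      · rw [← coeff_sum, hc k, (hfhom k).coeff_eq_zero hm]
        symm
        apply Finset.sum_eq_zero
        intro i _
        rw [coeff_smul, (hghom i).coeff_eq_zero hm, smul_zero]
    rw [this]
    exact Submodule.sum_mem _ fun i _ => Submodule.smul_mem _ _ (Submodule.subset_span ⟨i, rfl⟩)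
  have hfLI : LinearIndependent K f := by
    apply LinearIndependent.of_comp π
    have : (π ∘ f) = Pi.basisFun K (Fin (s - 1)) := by
      ext1 k
      rw [Pi.basisFun_apply]; exact hπf k
    rw [this]
    exact (Pi.basisFun K (Fin (s - 1))).linearIndependent
  have hspan : Submodule.span K (Set.range f) = Submodule.span K (Set.range g) := by
    have : FiniteDimensional K (Submodule.span K (Set.range g)) :=
      FiniteDimensional.span_of_finite K (Set.finite_range g)
    apply Submodule.eq_of_le_of_finrank_le
    · apply Submodule.span_le.mpr
      rintro _ ⟨k, rfl⟩
      exact hfg k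
    · rw [finrank_span_eq_card hfLI]
      exact finrank_range_le_card g
  apply le_antisymm
  · rw [hIX]
    apply Ideal.span_le.mpr
    rintro _ ⟨i, rfl⟩
    have h1 : g i ∈ Submodule.span K (Set.range f) := by
      rw [hspan]; exact Submodule.subset_span ⟨i, rfl⟩
    exact Submodule.span_le_restrictScalars K (MvPolynomial (Fin s) K) _ h1
  · apply Ideal.span_le.mpr
    rintro _ ⟨k, rfl⟩
    exact hfI k
end
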